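/- arXiv:1311.0577 — 3 statements merged into one kernel-verified Lean document; each statement's English description precedes it below -/
import Mathlib

section
/- Let S = x^32 - 3x^31 - 124x^30 + 651x^29 + 5797x^28 - 44020x^27 - 46593x^26 + 1523309x^25 - 4960682x^24 - 28562129x^23 + 205283395x^22 + 345367838x^21 - 3865963779x^20 - 5281917640x^19 + 35629245810x^18 + 95827452774x^17 + 227525150938x^16 - 1735983387875x^15 - 9952753525850x^14 + 15867354189588x^13 + 146446287180279x^12 - 99789981007214x^11 - 1135328992145553x^10 - 171825071648506x^9 + 7446294546204081x^8 + 294530833190147x^7 - 24397472702475140x^6 - 9976638213111902x^5 + 61714590456038129x^4 + 16902762581347117x^3 - 13833080015551423x^2 - 202960986205176103x + 187532019539254309 ∈ ℚ[x]. The Galois group of S over ℚ (i.e., the Galois group of its splitting field over ℚ) is isomorphic to PGL₂(F₃₁). -/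
open Polynomial Matrix

noncomputable def S : Polynomial ℚ :=
  X^32 - 3*X^31 - 124*X^30 + 651*X^29 + 5797*X^28 - 44020*X^27 - 46593*X^26 + 1523309*X^25 - 4960682*X^24 - 28562129*X^23 + 205283395*X^22 + 345367838*X^21 - 3865963779*X^20 - 5281917640*X^19 + 35629245810*X^18 + 95827452774*X^17 + 227525150938*X^16 - 1735983387875*X^15 - 9952753525850*X^14 + 15867354189588*X^13 + 146446287180279*X^12 - 99789981007214*X^11 - 1135328992145553*X^10 - 171825071648506*X^9 + 7446294546204081*X^8 + 294530833190147*X^7 - 24397472702475140*X^6 - 9976638213111902*X^5 + 61714590456038129*X^4 + 16902762581347117*X^3 - 13833080015551423*X^2 - 202960986205176103*X + 187532019539254309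

set_option autoImplicit false

def cP : ℕ := 348553 ^ 43
def cRho : ℕ := 18142606539195941536564007124419889915267490212851040835802811699446945464267083669181469563752684120430295894019400328383075964189885864080512724145197238401680908775508227393234417644905021716632126959902889185846190307997357385871703677
def cA : List ℕ :=
 [8320821355739628367332770629200936704864692376144350124028297594745142316908650857956000328895977647759970565534446090667954028050014550621447437371977405955699363453310677284110307589845668014228742334245016850411188718031644480720802858,
 14030477768920352408989113522600345047867411001752864729374423848303142271073784211733448069983049544811181676568071243253798744042095101041379047455457612290901873526739481446257314019774412742677239423207313840884081263515901913018361730,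
 1713745914027038072421550095729130224853802986570961518346047354061818951044366898748065646216906533317815767033293382674291406014657227428730807651773691592602833925101920527570060864807791379565951837007509391373892785583574235270279624,
 19647038955528435393755046144514983700778227050770573257295404268917672942274094289369720834787064256482939480830996917587300490417456641709694751240666994077034355335388776091946791946482203300345326811062593619328123654373533744332702207,
 5746737906463215112655538632665705192378931225479171574689936053418833841153605214912345006583728934619000094441339430197222817937675871237590777966800248456904469128091284638440518942560035660313097988262750664075962098910022377292245852,
 19996442258663756469498183228111325937038001660460428706800151458791233875350260785715645978727133810770547721616008619107599253601925148528573001457544232129279895788968963094823453324462470741599183420813544805659190135935276991692777123,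
 1871751236790876662432368456912070984379775878747513902146402312801159214716410672380696444953564300874570616055546954721306977363441191825349068231005724348418646035437494915912198992528582467126168408289153322661932311990534175547632148,
 15622801617530299531971637102333580528687580358072583604463482316627240698027813285930253619688772350472735684921171964708534809830230733306587624921482113783733755004364100644881052443812595614073195125111030562638320929027808454998960801,
 8086043088288407064818495913482891620447094158428101328926360697020364853530328793800309099011130454223085677557810209422145704489151380254489141510783740485536628948202449570565316557627213654051007425220349195609065723231470092845861351,
 11960656895726441589988881449896068273964502131402607656562539444604102702044662935813819656740046097136043804944287477617861141304590770889148701004396571584352291961730632733518099311906082258090645593165852881895219190711260065138378186,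
 12857459719684610906284545505404843200981647257297872639717546983936470523967672571668889269452592967679533257944014328989588598258106619936707225133490268146955627366403229318552946088998863273072934543821643627618049927026202959317401168,
 20343237033659001022251524208015653497653373100073976768040428595406372860968950136415336624773038461529231865701203247759997315454318629543378108547829171400635067030987556954317435166901486649757232409756104117533751993508368919489921197,
 16781245172472111205059283494199814349697590138242422138966756843970380486211350397473419910944354903998522134793211015133113321835653216261774215368911053588563334986257510421425934790618288706803423273306874992820570240581990967867737913,
 16865045297096658918094387448841883749631947579896694991831385759817959285590491275293589912376489321128637904477144932650625917327741216869639000305604235091813784963248658170806065731849845733903164348346517403937064711059103804985070261,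
 3638762524275936009698044076626234304807633606648257189045146168828689578510738459189587765282730317361371486928036669235391438520577175802828101910631138755019136393373147350768919648611175884528314843498639905888153907644960778160424130,
 4460693611450534807022099729982558372494666653447020008043006294425963762629234993350198537707218079973808334337151664459723355297964673532186848523466864256268595327169110126600201621061940810585950993511449712610385393426320344784371917,
 19318215467489698222125242227306621244851142029145478980633538349241816883563292371124596967080707202228406196391205519474987651559760813603705102681570853254790128003399656330218818742088672853828484150089030999218439681330794670785953300,
 11823191673686353439513326916584330696180295402300428085656524929189506992586703781591479259667234658959788780963635307042587631620460062131189206345239863031665698709262212705498889837587884263501139823461970700850887526394639748527481666,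
 10509170445559777286693364986812044039841525366349080309977410699845698146421847672150343851032666400722337294539682595128979069390810642674031589984739004654201289482094105018226108356765612512208601005730519215583279023622722168760074942,
 1399679629389594354842653442048485915650082869341962531829515845863704067543520966227913068544705083271802232782840802449877902244980309354240592784053933449036261239792092018106183060340835079752460196961623509205564994985120016652748297,
 10298406192955677287658882022624444056004604132867568372752488817967116930738600252732371663720624759980429518961078035370652754838952970408109423763523029551409115160161660985135115534603728258485090910746474790042761103981761133621606317,
 7250050514960657444690781992793242546029903217361672661353119038770959076068226657435980661011261313393193951141255807429315350667115427977728311009696047455510718777552988319595627879270908511386304308059316998573302819060841360860032377,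
 1347881398730139536106411210304269272736891097930847112519187783853140597611646987539824263913066571632098561725390626951602380275556893602010079225354952478396200306889918065674281286832249919962552386702317338317718813014492649018307694,
 8777666544582484777553223040152686496532849330337267370259517479996281150753719441543243254414040675260078172585456138151005965321924070236754949225615128419214503714965413208156748899439160457431466175824046380330495785931474031011200872,
 1009155908400600710770692343561371620042005511678364428597048138008884688645930523123209116821003103511655532133433191820470642938553746837903297904265516362540679192381367939122654106387568723665883105792164455732179249725572943424784452,
 17857063266783111826278224327317555857318853743372383633199517574546198582169356444777689357636636606010823319515426992960464972880830902927067613337708139345842524858886481927598490895777522530681340807386635426801050614132617532667063319,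
 10763713848195189098223369649802432280581275066604533000667111718476739119851993426500127789819472267165414475926614300015709985100071470005862475003162753782753850314409481963339008068354290017646036579954667016103465614020924267379396369,
 12972370329494231550371619658697362596578756087020199410749296189533198433832298371661492533426117239644761820263891016653238786347806440664931190793047268921723447808997540234069590174105608248851700421145515743761570423918925596611029452,
 12895458551822777159593554071046514410531345677510682268277618020679481775464802144997677201321394899353808261928618290326192137186812455190459531913590027393627871523469656965373741309292733261074884465685656789514531246744327812456693958,
 4744651946514639398213517606465476397727167737425524659891357186643616099809198829153943618005097846509616730507221636908455788943476746439359588746161688516421840602681014740560987224103204993613881654909144140034756846215355560678075671,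
 9437554722664210800533424015228093203445397920977128832354510189110487306332197529417400052197749039748669733906608386017359618875632679820946793685603359964596114239845751920036050280253793988827184274720561031338522321273038827186225198,
 10066927235577882178282184612446804366009397151001354158844784313668862590159267041722804592235078407588136445510090763164124549486001609377739429856223340211272001418902722696674578611543411418898909509052233762478205787330937561630701285]
def cDi : List ℕ :=
 [6896661307738989652052357466771495164792515558143250196107996441012465332380300851118872235249500858473045576821639578925130042835615450244716376739066253696585351413439465518321900674788606239816540063206976765370872501608240443097995249,
 5508665852169347870185457373486512647700152136508634667808689082036250961848014018526095368907918652852112852727726804747717593975819934778554210951482571229370050504736500904984545077696551775250067083904930925411243951088097391668498625,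
 2240366911693408722563464167923715183681259279118074799205758910130487717049654848381283482524455712064696456450913217500592704022749187380328459439943733136998621194072067981186771174139357971533840896049169387086897552717241808201551675,
 15418419955421038007009115632132207779321730375331700787563689021529455274453512876646459464774478437508334891659089463673634715542590354668546239433054173849993360881738033093525569894708316288529805354300983255216792534713632923630839469,
 20400965740863052139494925035481071630670160681743453060813481727759991872897310876305300398654950745667846040796322282602092527417782297993761014240441190634476561712262097502787534101532660946295253835980315129295548981030364695557375506,
 5573039496669011067290151678998310080913446648772139324564132429618408322189459864325921031541144470255136115922298290669991907033354192966695556067374321804993367178327747501774454296840271644102432324599993289969652689130970386950733392,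
 4477061406978518647669511708528757738940554112607212687175116986744180155024459425303051620623484705129690860666477509265131823054835583050924675352405840004740143547631423116680961636700628886292541280406939860103138383521224034639612734,
 8485332432054779960959210592704357451817882183758066691991192911163635653528155055469874059308394807564374698644041697065668307607678354061635129596565176080544806832534036550184307580659493438003835296328128741546563075696882292845896691,
 12238003798212070527066670563858713469214187695962008149794208663129867147538481383913724818843928228027801466281672522232970743038471395855932376273817761493328486005361916162592989849519152379038785685435826599086651727830342809587762092,
 4964991320378030800456101220739127101613340030068930825471993896103520885458492387408797580828364109309343826412772826259439851287010323204130367664216260640729506643665639867992685588263188347491121856422482838839974653341301786816237563,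
 3260128739736518499204748190322941820067779985651625049489059421938879478436149135828433205210159727216451817998395165164652148736001084286738295598159007160559011473899578498252371476506249035774456201714328200305985985535100936148451494,
 12706351967314645152698348682388808854333771892832026388989219329372920973981641787601798575641478731612910320151980158412729333604304141255207913266979074267803955215310881024097004906838939801327190980659365872793606692940365468542791183,
 2231872186109457879071304370409033171597516517912022120836419477868250347909369061486143606696517046805767841558593840754558907367925436215485160860847116573304387355185437861799799634069475690419346152158319916877469582204070876856915553,
 8799210330300525781797839568767341956041412767928889031875486601307156024466899423666093766041249115062849505295219280493535289198715420718236344291321809736785661987736428689993717320189560113654818718623337328101389939120454395017831074,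
 15626911568822616621524565205666335370929786735795781649803296473297278840302201673293966446490298682390349265676399385552322265766690198782039304888356645185675249702908179010625334058875314103647329567640132575806607245111037297063847991,
 6151379612772821207048398731848502267467128884111628939447701827750360936872117737001930704903505536065430933547855965462490931694073403398161319117946025848765510945453202940506686621684150337117780944949745521960626137062022548828940815,
 6257209786415335570528482272341954953362143527732461032221790734601043877861993834016851110730565002118241876524533187539019582750839222890894819680033072939950163822106955258190648073747011627293454911108791496668335438469654498737078539,
 4157011809345782203273972895390537770888069925781548852539062792626997532606525546876422730822638124360883960967668946617638966373882557251771595529228124653868585821449188823354386048177297789403645405285672612086966543784753378761187880,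
 19629587295457115000435343568685697906877748410464716806556012359008953485806295155606987418221988519412743326640533066594142361674484290554462466826049478306709278517556605259470841170789102368878582283863481274626696437817759729768728105,
 10018097664345387130774982459632129687241176751624795695786428996384560817418697961482841089596150473707072596381406505059302259629752971019809456853119936584409814799998968828802602677356473962364412251194133335589952403157429257309402654,
 2133253504112349180941457972132499376531067709956695537554085180489921704219336239568501694301828517499108176311234610156591181820128368279338970847364641674196322402598949006518436382581817707652148810133397633188174705553207983356331168,
 13956502464777684175934975992075340622683388133492136856866986608289814124258678022576320584936209965243686277980009963409702778249774171164911248619531249698277069916838873820904596809488137553588482254358580821005599713781763226724207340,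
 7790382420050325096420104883461909984604584420218112851414335809665300852612748834353080513509670171896514177925266724977848694702765496300053023165217752514584746972813421934661805979451485419091270058754730070464496238359916360174379202,
 1715012984400493351757748535103577615939043644681862771711141026128763897365275766421264520847184847653033517777203829312951053359194433757970089141391587767650717123101051749533316829384436245782211192699986665030586067024732457977541333,
 17670300182513299965362763633796880737068828156827861088074745677013769690033332112922133369076807820293217867258053289677152264431323857840246021115798566605175291037065556862686484141490087136547876825020736876512689403980933229639467354,
 9575697481013648592661231594311567149841859928446339758738450402243611422278797209267277245973146841564404934306518498263090118539389096525647147117765120216522514926935729541358220978758914111566158130733027325113652677255062838715420333,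
 114163799560241466942005808926629996163500822078663346068825734740427615000505234434070172894404461444074954025814759567787688563910090096245939779282566420290751731444955060576538629965569328023595955277050161449772946548414104067181925,
 3702781473258524862488989816642639165508436229497548236217705011769170624013926713682410638911388621004661456978835642340139270482692177353485419296096770805177110254146451228760437959026610403930177070215042997454932082088315722018414410,
 7791309930651640947560186648588998003002133697993573342357574928359640823637254041780489089643644828220077589512634058597866988570365168251245357301115417844407145214222838590558014807664400190047817477392232383139980392991484504811658428,
 18796558159363238339380211632034648498598096040671646917268778380357602310095820729042141474084968788479873262342874833719788058770395702366308308820793977318492696393093617897540416377939147679760980991439568568191109233136280453428923191,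
 17495685882482686883410824057065800568380852073140489215947441768419911187000846576989975007375405826206085278662333314303201553063610282720339748915037163639635626390491505732676699891577249451434656207510990865883597852577703423223987714,
 15079435814001202233042997081277996878471268357723494781099070876325610641314386558471482935183489924870193240451591394376163530830179321052527798713901587810629798544281370215997974244611703715559695168123795999548160462532568899223324996]
def sZ : List ℤ :=
 [187532019539254309, -202960986205176103, -13833080015551423, 16902762581347117, 61714590456038129, -9976638213111902, -24397472702475140, 294530833190147, 7446294546204081, -171825071648506, -1135328992145553, -99789981007214, 146446287180279, 15867354189588, -9952753525850, -1735983387875, 227525150938, 95827452774, 35629245810, -5281917640, -3865963779, 345367838, 205283395, -28562129, -4960682, 1523309, -46593, -44020, 5797, 651, -124, -3, 1]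

noncomputable section
def forceN {α : Type} (x : ℕ) (k : ℕ → α) : α := Nat.rec (k 0) (fun n _ => k (Nat.succ n)) x
theorem forceN_eq {α : Type} (x : ℕ) (k : ℕ → α) : forceN x k = k x := by cases x <;> rfl
def forceL {α : Type} (l : List ℕ) : (List ℕ → α) → α :=
  List.rec (fun k => k []) (fun x _ ih k => forceN x fun x' => ih fun l' => k (x' :: l')) l
theorem forceL_eq {α : Type} (l : List ℕ) (k : List ℕ → α) : forceL l k = k l := by
  induction l generalizing k with
  | nil => rfl
  | cons x l ih =>
    change forceN x (fun x' => forceL l fun l' => k (x' :: l')) = _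
    rw [forceN_eq, ih]
def forceLL {α : Type} (l : List (List ℕ)) : (List (List ℕ) → α) → α :=
  List.rec (fun k => k []) (fun x _ ih k => forceL x fun x' => ih fun l' => k (x' :: l')) l
theorem forceLL_eq {α : Type} (l : List (List ℕ)) (k : List (List ℕ) → α) :
    forceLL l k = k l := by
  induction l generalizing k with
  | nil => rfl
  | cons x l ih =>
    change forceL x (fun x' => forceLL l fun l' => k (x' :: l')) = _
    rw [forceL_eq, ih]

/-- values at `a` (mod `P`) of all the suffixes of a coefficient list -/
def vals (P a : ℕ) : List ℕ → List ℕ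
  | [] => []
  | s :: l => ((s + a * (vals P a l).headD 0) % P) :: vals P a l
def valsK {α : Type} (P a : ℕ) (l : List ℕ) : (List ℕ → α) → α :=
  List.rec (fun k => k [])
    (fun s _ ih k => ih fun r => forceN (Nat.mod (Nat.add s (Nat.mul a (r.headD 0))) P) fun v => k (v :: r)) l
theorem valsK_eq {α : Type} (P a : ℕ) (l : List ℕ) (k : List ℕ → α) :
    valsK P a l k = k (vals P a l) := by
  induction l generalizing k with
  | nil => rfl
  | cons x l ih =>
    change valsK P a l (fun r => forceN ((x + a * (r.headD 0)) % P) fun v => k (v :: r)) = _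
    rw [ih, forceN_eq]; rfl

def sN (P : ℕ) : List ℕ := sZ.map fun s => (s % (P : ℤ)).toNat

/-- synthetic quotients -/
def Lsf (P : ℕ) (s A : List ℕ) : List (List ℕ) := A.map fun a => (vals P a s).tail
def LsfK {α : Type} (P : ℕ) (s A : List ℕ) : (List (List ℕ) → α) → α :=
  List.rec (fun k => k []) (fun a _ ih k => valsK P a s fun r => ih fun M => k (r.tail :: M)) A
theorem LsfK_eq {α : Type} (P : ℕ) (s A : List ℕ) (k : List (List ℕ) → α) :
    LsfK P s A k = k (Lsf P s A) := by
  induction A generalizing k with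
  | nil => rfl
  | cons x l ih =>
    change valsK P x s (fun r => LsfK P s l fun M => k (r.tail :: M)) = _
    rw [valsK_eq, ih]; rfl

def dot (u : List ℕ) : List ℕ → ℕ :=
  List.rec (fun _ => 0)
    (fun x _ ih v => List.rec 0 (fun y v' _ => Nat.add (Nat.mul x y) (ih v')) v) u

def packL (b : ℕ) (l : List ℕ) : ℕ := List.rec 0 (fun x _ ih => Nat.add x (Nat.mul b ih)) l

def transp (M : List (List ℕ)) : List (List ℕ) :=
  (List.range 32).map fun j => M.map fun r => r.getD j 0

/-- determinants of representatives of points of the projective line, 31 is infinity -/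
def dt (a b : ℕ) : ℕ :=
  bif Nat.beq a 31 then (bif Nat.beq b 31 then 0 else 1)
  else (bif Nat.beq b 31 then 30 else Nat.mod (Nat.sub (Nat.add a 31) b) 31)
/-- squares mod 31 -/
def qrm : ℕ := 303908790
/-- `1` on triples with a nonzero square invariant, `2` on nonsquares, `0` on degenerate ones -/
def tt (a b c : ℕ) : ℕ :=
  forceN (Nat.mod (Nat.mul (Nat.mul (dt a b) (dt b c)) (dt c a)) 31) fun m =>
  bif Nat.beq m 0 then 0 else bif Nat.beq (Nat.mod (Nat.shiftRight qrm m) 2) 1 then 1 else 2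

/-- signed sum of the rows: `R` for sign `+`, `R'` for sign `-` -/
def ssum (a b : ℕ) (R : List ℕ) : ℕ → List ℕ → ℕ :=
  List.rec (fun _ _ => 0)
    (fun x _ ih c R' => List.rec 0 (fun y R'' _ =>
      forceN c fun c => forceN (tt a b c) fun t =>
      bif Nat.beq t 0 then ih (Nat.succ c) R''
      else Nat.add (bif Nat.beq t 1 then x else y) (ih (Nat.succ c) R'')) R') R

def digOK (P r b n : ℕ) : ℕ → ℕ → Bool :=
  Nat.rec (fun _ _ => true)
    (fun _ ih B y =>
      forceN (Nat.mod (Nat.mul (Nat.mod y b) r) P) fun d =>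
        bif (bif Nat.ble d B then true else Nat.ble (Nat.sub P d) B) then
          forceN (Nat.div y b) fun y' => forceN (Nat.div B 16) fun B' => ih B' y'
        else false) n

/-- all entries pass a test whose bound is divided by 16 at each step -/
def allB (f : List ℕ → ℕ → Bool) (l : List (List ℕ)) : ℕ → Bool :=
  List.rec (fun _ => true)
    (fun l _ ih B => bif f l B then forceN (Nat.div B 16) fun B' => ih B' else false) l

def Vf (R R' : List ℕ) : List (List ℕ) :=
  (List.range 32).map fun a => (List.range 32).map fun b' => ssum a b' R 0 R'

def check3 (P r B b : ℕ) (Ls : List (List ℕ)) : Bool :=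
  forceLL (transp Ls) fun Lt =>
  forceL (Ls.map (packL b)) fun R =>
  forceL (Ls.map fun l => packL b (l.map fun x => Nat.sub P x)) fun R' =>
  forceLL (Vf R R') fun V =>
  allB (fun lj Bj => forceL (V.map (dot lj)) fun xc =>
    allB (fun li Bi => forceN (dot li xc) fun y => digOK P r b 32 Bi y) Lt Bj) Lt B


/-- linear combinations of coefficient lists mod `P` -/
def axpyK {α : Type} (P c : ℕ) (f : List ℕ) : List ℕ → (List ℕ → α) → α :=
  List.rec (fun _ k => k []) (fun x _ ih g k => ih g.tail fun r =>
    forceN (Nat.mod (Nat.add (Nat.mul c x) (g.headD 0)) P) fun v => k (v :: r)) f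
def axpy (P c : ℕ) : List ℕ → List ℕ → List ℕ
  | [], _ => []
  | x :: f, g => ((c * x + g.headD 0) % P) :: axpy P c f g.tail
theorem axpyK_eq {α : Type} (P c : ℕ) (f g : List ℕ) (k : List ℕ → α) :
    axpyK P c f g k = k (axpy P c f g) := by
  induction f generalizing k g with
  | nil => rfl
  | cons x l ih =>
    change axpyK P c l g.tail (fun r => forceN ((c * x + g.headD 0) % P) fun v => k (v :: r)) = _
    rw [ih, forceN_eq]; rfl

def lc (P : ℕ) : List ℕ → List (List ℕ) → List ℕ
  | [], _ => []
  | x :: c, M => axpy P x (M.headD []) (lc P c M.tail)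
def lcK {α : Type} (P : ℕ) (c : List ℕ) : List (List ℕ) → (List ℕ → α) → α :=
  List.rec (fun _ k => k [])
    (fun x _ ih M k => ih M.tail fun r => axpyK P x (M.headD []) r k) c
theorem lcK_eq {α : Type} (P : ℕ) (c : List ℕ) (M : List (List ℕ)) (k : List ℕ → α) :
    lcK P c M k = k (lc P c M) := by
  induction c generalizing k M with
  | nil => rfl
  | cons x l ih =>
    change lcK P l M.tail (fun r => axpyK P x (M.headD []) r k) = _
    rw [ih, axpyK_eq]; rfl

/-- the values at `x` of the lists in `Ls`, times `c`, are `1` at position `l`, else `0` -/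
def chkA (P x c l : ℕ) (Ls : List (List ℕ)) : ℕ → Bool :=
  List.rec (fun _ => true) (fun f _ ih j => forceN j fun j =>
    valsK P x f fun v =>
    bif Nat.beq (Nat.mod (Nat.mul (v.headD 0) c) P) (bif Nat.beq j l then 1 else 0)
      then ih (Nat.succ j) else false) Ls
def chkB (P : ℕ) (Ls : List (List ℕ)) (A : List ℕ) : List ℕ → ℕ → Bool :=
  List.rec (fun _ _ => true) (fun x _ ih D l => forceN l fun l =>
    bif chkA P x (D.headD 0) l Ls 0 then ih D.tail (Nat.succ l) else false) A
def chkS (P : ℕ) (s : List ℕ) (A : List ℕ) : Bool :=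
  List.rec true (fun x _ ih => valsK P x s fun v =>
    bif Nat.beq (v.headD 0) 0 then ih else false) A

theorem chk2 : (forceN cP fun P => forceL (sN P) fun s => LsfK P s cA fun Ls =>
    chkB P Ls cA cDi 0) = true := by decide +kernel
theorem chk1 : (forceN cP fun P => forceL (sN P) fun s => chkS P s cA) = true := by decide +kernel
theorem chk4 : (forceN cP fun P => forceL (sN P) fun s => LsfK P s cA fun Ls =>
    lcK P cDi Ls fun r => decide (r = 1 :: List.replicate 31 0)) = true := by decide +kernel
theorem chk5 : (cRho * cRho + 31) % cP = 0 := by decide +kernel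

theorem chk3 : (forceN cP (fun P => forceN cRho fun r => forceN (2^371) fun B => forceN (2^2400) fun b => forceL (sN P) fun s => LsfK P s cA fun Ls => check3 P r B b Ls)) = true := by decide +kernel

theorem dot_eq (u : List ℕ) (v : List ℕ) (n : ℕ) (h : u.length ≤ n) :
    dot u v = ∑ i ∈ Finset.range n, u.getD i 0 * v.getD i 0 := by
  induction u generalizing v n with
  | nil => simp [dot]
  | cons x u ih =>
    obtain ⟨m, rfl⟩ : ∃ m, n = m + 1 := ⟨n - 1, by simp at h; omega⟩
    cases v with
    | nil => simp [dot]
    | cons y v =>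
      change x * y + dot u v = _
      rw [Finset.sum_range_succ', ih v m (by simpa using h)]
      simp [add_comm]

theorem packL_eq (b : ℕ) (l : List ℕ) (n : ℕ) (h : l.length ≤ n) :
    packL b l = ∑ i ∈ Finset.range n, l.getD i 0 * b ^ i := by
  induction l generalizing n with
  | nil => simp [packL]
  | cons x u ih =>
    obtain ⟨m, rfl⟩ : ∃ m, n = m + 1 := ⟨n - 1, by simp at h; omega⟩
    change x + b * packL b u = _
    rw [Finset.sum_range_succ', ih m (by simpa using h), Finset.mul_sum, add_comm]
    simp [pow_succ]
    exact Finset.sum_congr rfl fun i _ => by ring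

theorem ssum_eq (a b : ℕ) (R R' : List ℕ) (c : ℕ) (h : R.length = R'.length) :
    ssum a b R c R' = ∑ i ∈ Finset.range R.length,
      if tt a b (c + i) = 0 then 0 else if tt a b (c + i) = 1 then R.getD i 0 else R'.getD i 0 := by
  induction R generalizing R' c with
  | nil => simp [ssum]
  | cons x R ih =>
    cases R' with
    | nil => simp at h
    | cons y R' =>
      have h1 : ssum a b (x :: R) c (y :: R') = forceN c fun c => forceN (tt a b c) fun t =>
        bif Nat.beq t 0 then ssum a b R (Nat.succ c) R'
        else Nat.add (bif Nat.beq t 1 then x else y) (ssum a b R (Nat.succ c) R') := rfl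
      rw [h1, forceN_eq, forceN_eq, List.length_cons, Finset.sum_range_succ',
        ih R' _ (by simpa using h)]
      have e : ∀ i, c.succ + i = c + (i + 1) := fun i => by omega
      simp only [e, List.getD_cons_succ, add_zero, List.getD_cons_zero]
      rcases Nat.eq_zero_or_pos (tt a b c) with h0 | h0
      · simp [h0]
      · have : (tt a b c).beq 0 = false := by
          cases h : tt a b c with
          | zero => omega
          | succ n => rfl
        rw [this]
        by_cases h1 : tt a b c = 1
        · simp [h1, add_comm]
        · have : (tt a b c).beq 1 = false := by
            simpa [← Nat.beq_eq] using h1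
          simp [this, h1, h0.ne', add_comm]

theorem digOK_spec (P r b : ℕ) (hb : 0 < b) (n : ℕ) (B : ℕ) (c : ℕ → ℕ) (hc : ∀ k, c k < b)
    (h : digOK P r b n B (∑ k ∈ Finset.range n, c k * b ^ k) = true) (k : ℕ) (hk : k < n) :
    (c k * r) % P ≤ B / 16 ^ k ∨ P - (c k * r) % P ≤ B / 16 ^ k := by
  induction n generalizing B c k with
  | zero => omega
  | succ n ih =>
    have h1 : ∀ y, digOK P r b (n+1) B y = forceN (((y % b) * r) % P) fun d =>
        bif (bif Nat.ble d B then true else Nat.ble (Nat.sub P d) B) then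
          forceN (Nat.div y b) fun y' => forceN (Nat.div B 16) fun B' => digOK P r b n B' y'
        else false := fun y => rfl
    have hs : (∑ k ∈ Finset.range (n+1), c k * b ^ k) =
        c 0 + b * ∑ k ∈ Finset.range n, c (k+1) * b ^ k := by
      rw [Finset.sum_range_succ', Finset.mul_sum, add_comm]
      simp [pow_succ]
      exact Finset.sum_congr rfl fun i _ => by ring
    rw [h1, hs, forceN_eq] at h
    simp only [forceN_eq] at h
    have m1 : (c 0 + b * ∑ k ∈ Finset.range n, c (k+1) * b ^ k) % b = c 0 := by
      rw [Nat.add_mul_mod_self_left, Nat.mod_eq_of_lt (hc 0)]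
    have m2 : (c 0 + b * ∑ k ∈ Finset.range n, c (k+1) * b ^ k).div b =
        ∑ k ∈ Finset.range n, c (k+1) * b ^ k := by
      change _ / b = _
      rw [Nat.add_mul_div_left _ _ hb, Nat.div_eq_of_lt (hc 0), zero_add]
    rw [m1, m2] at h
    cases hd : (bif Nat.ble (c 0 * r % P) B then true else Nat.ble (Nat.sub P (c 0 * r % P)) B) with
    | false => rw [hd] at h; simp at h
    | true =>
      rw [hd] at h
      cases k with
      | zero =>
        simp only [pow_zero, Nat.div_one]
        cases hq : Nat.ble (c 0 * r % P) B with
        | true => exact Or.inl (Nat.le_of_ble_eq_true hq)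
        | false =>
          rw [hq] at hd
          exact Or.inr (Nat.le_of_ble_eq_true hd)
      | succ k =>
        have := ih (B / 16) (fun k => c (k+1)) (fun k => hc _) h k (by omega)
        rwa [Nat.div_div_eq_div_mul, ← pow_succ'] at this

theorem allB_spec (f : List ℕ → ℕ → Bool) (l : List (List ℕ)) (B : ℕ) (h : allB f l B = true)
    (i : ℕ) (hi : i < l.length) : f (l.getD i []) (B / 16 ^ i) = true := by
  induction l generalizing B i with
  | nil => simp at hi
  | cons x l ih =>
    have h1 : allB f (x :: l) B = bif f x B then forceN (Nat.div B 16) fun B' => allB f l B'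
      else false := rfl
    rw [h1, forceN_eq] at h
    cases hd : f x B with
    | false => rw [hd] at h; simp at h
    | true =>
      rw [hd] at h
      cases i with
      | zero => simpa using hd
      | succ i =>
        have := ih (B / 16) h i (by simpa using hi)
        rwa [Nat.div_div_eq_div_mul, ← pow_succ'] at this

theorem getD_map_lt {α β : Type} (f : α → β) (l : List α) (i : ℕ) (d : α) (d' : β)
    (h : i < l.length) : (l.map f).getD i d' = f (l.getD i d) := by
  simp [List.getD_eq_getElem?_getD, h]

theorem getD_range_map {β : Type} (f : ℕ → β) (n i : ℕ) (d' : β)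
    (h : i < n) : ((List.range n).map f).getD i d' = f i := by
  simp [List.getD_eq_getElem?_getD, h]

/-- the coefficient extracted by `check3` -/
def Wf (P : ℕ) (L : ℕ → ℕ → ℕ) (a b c k : ℕ) : ℕ :=
  if tt a b c = 0 then 0 else if tt a b c = 1 then L c k else P - L c k

def Cf (P : ℕ) (L : ℕ → ℕ → ℕ) (i j k : ℕ) : ℕ :=
  ∑ a ∈ Finset.range 32, ∑ b ∈ Finset.range 32, ∑ c ∈ Finset.range 32,
    L a i * L b j * Wf P L a b c k

theorem check3_spec (P r B b : ℕ) (Ls : List (List ℕ)) (hL : Ls.length = 32)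
    (hL2 : ∀ l ∈ Ls, l.length = 32) (hP : ∀ i k, (Ls.getD i []).getD k 0 ≤ P)
    (hb : 32 ^ 3 * P ^ 3 < b)
    (h : check3 P r B b Ls = true) (i j k : ℕ) (hi : i < 32) (hj : j < 32) (hk : k < 32) :
    (Cf P (fun a i => (Ls.getD a []).getD i 0) i j k * r) % P ≤ B / 16 ^ (i + j + k) ∨
    P - (Cf P (fun a i => (Ls.getD a []).getD i 0) i j k * r) % P ≤ B / 16 ^ (i + j + k) := by
  set L : ℕ → ℕ → ℕ := fun a i => (Ls.getD a []).getD i 0 with hLd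
  have hl2 : ∀ a, a < 32 → (Ls.getD a []).length = 32 := fun a ha => by
    apply hL2
    rw [List.getD_eq_getElem _ _ (by omega)]
    exact List.getElem_mem _
  unfold check3 at h
  simp only [forceLL_eq, forceL_eq] at h
  set R := Ls.map (packL b) with hR
  set R' := Ls.map (fun l => packL b (l.map fun x => Nat.sub P x)) with hR'
  have hlt : (transp Ls).length = 32 := by simp [transp]
  have h1 := allB_spec _ _ _ h j (by omega)
  have h2 := allB_spec _ _ _ h1 i (by omega)
  rw [forceN_eq] at h2
  have ht : ∀ i < 32, (transp Ls).getD i [] = Ls.map fun r => r.getD i 0 := fun i hi => by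
    rw [transp, getD_range_map _ _ _ _ hi]
  have ht2 : ∀ i < 32, ∀ a < 32, ((transp Ls).getD i []).getD a 0 = L a i := fun i hi a ha => by
    rw [ht i hi, getD_map_lt _ _ _ [] _ (by omega)]
  have hRa : ∀ c < 32, R.getD c 0 = ∑ k ∈ Finset.range 32, L c k * b ^ k := fun c hc => by
    rw [hR, getD_map_lt _ _ _ [] _ (by omega), packL_eq _ _ 32 (by rw [hl2 c hc])]
  have hRb : ∀ c < 32, R'.getD c 0 = ∑ k ∈ Finset.range 32, (P - L c k) * b ^ k := fun c hc => by
    rw [hR', getD_map_lt _ _ _ [] _ (by omega), packL_eq _ _ 32 (by rw [List.length_map, hl2 c hc])]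
    refine Finset.sum_congr rfl fun k hk => ?_
    rw [getD_map_lt _ _ _ 0 _ (by rw [hl2 c hc]; simpa using hk)]
    rfl
  have hV : ∀ a < 32, ∀ b' < 32, ((Vf R R').getD a []).getD b' 0 =
      ∑ k ∈ Finset.range 32, (∑ c ∈ Finset.range 32, Wf P L a b' c k) * b ^ k := by
    intro a ha b' hb'
    rw [Vf, getD_range_map _ _ _ _ ha, getD_range_map _ _ _ _ hb',
      ssum_eq _ _ _ _ _ (by simp [hR, hR'])]
    have : R.length = 32 := by simp [hR, hL]
    rw [this]
    simp only [Finset.sum_mul]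
    rw [Finset.sum_comm]
    refine Finset.sum_congr rfl fun c hc => ?_
    have hc' : c < 32 := by simpa using hc
    rw [hRa c hc', hRb c hc', zero_add]
    unfold Wf
    split_ifs <;> simp
  have hy : dot ((transp Ls).getD i []) ((Vf R R').map (dot ((transp Ls).getD j []))) =
      ∑ k ∈ Finset.range 32, Cf P L i j k * b ^ k := by
    rw [dot_eq _ _ 32 (by rw [ht i hi]; simp [hL])]
    have : ∀ a ∈ Finset.range 32, ((transp Ls).getD i []).getD a 0 *
        ((Vf R R').map (dot ((transp Ls).getD j []))).getD a 0 =
        ∑ k ∈ Finset.range 32, (∑ b' ∈ Finset.range 32, ∑ c ∈ Finset.range 32,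
          L a i * L b' j * Wf P L a b' c k) * b ^ k := by
      intro a ha
      have ha' : a < 32 := by simpa using ha
      rw [ht2 i hi a ha', getD_map_lt _ _ _ [] _ (by simpa [Vf] using ha'),
        dot_eq _ _ 32 (by rw [ht j hj]; simp [hL])]
      rw [Finset.mul_sum]
      simp only [Finset.sum_mul]
      rw [Finset.sum_comm]
      refine Finset.sum_congr rfl fun b' hb' => ?_
      have hb2 : b' < 32 := by simpa using hb'
      rw [ht2 j hj b' hb2, hV a ha' b' hb2]
      simp only [Finset.mul_sum, Finset.sum_mul]
      refine Finset.sum_congr rfl fun k _ => Finset.sum_congr rfl fun c _ => by ring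
    rw [Finset.sum_congr rfl this, Finset.sum_comm]
    refine Finset.sum_congr rfl fun k _ => ?_
    rw [← Finset.sum_mul]; rfl
  rw [hy] at h2
  have hP' : ∀ i k, L i k ≤ P := hP
  have hW : ∀ a b' c k, Wf P L a b' c k ≤ P := fun a b' c k => by
    unfold Wf
    split_ifs
    · omega
    · exact hP' _ _
    · omega
  have hC : ∀ k, Cf P L i j k < b := fun k => by
    refine lt_of_le_of_lt ?_ hb
    have : ∀ a ∈ Finset.range 32, (∑ b ∈ Finset.range 32, ∑ c ∈ Finset.range 32,
        L a i * L b j * Wf P L a b c k) ≤ 32 ^ 2 * P ^ 3 := by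
      intro a _
      have : ∀ b ∈ Finset.range 32, (∑ c ∈ Finset.range 32,
        L a i * L b j * Wf P L a b c k) ≤ 32 * P ^ 3 := by
        intro b _
        have : ∀ c ∈ Finset.range 32, L a i * L b j * Wf P L a b c k ≤ P ^ 3 := by
          intro c _
          calc _ ≤ P * P * P := Nat.mul_le_mul (Nat.mul_le_mul (hP' _ _) (hP' _ _)) (hW _ _ _ _)
            _ = _ := by ring
        simpa using Finset.sum_le_card_nsmul _ _ _ this
      refine (Finset.sum_le_card_nsmul _ _ _ this).trans ?_
      simp; exact le_of_eq (by ring)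
    refine (Finset.sum_le_card_nsmul _ _ _ this).trans ?_
    simp; exact le_of_eq (by ring)
  have := digOK_spec P r b (by omega) 32 _ _ hC h2 k hk
  rwa [Nat.div_div_eq_div_mul, Nat.div_div_eq_div_mul, ← pow_add, ← pow_add,
    show j + (i + k) = i + j + k by ring] at this


def evA {R : Type} [CommRing R] (l : List ℕ) (x : R) : R :=
  l.foldr (fun c r => (c : R) + x * r) 0

theorem evA_cons {R : Type} [CommRing R] (c : ℕ) (l : List ℕ) (x : R) :
    evA (c :: l) x = c + x * evA l x := rfl
theorem evA_nil {R : Type} [CommRing R] (x : R) : evA [] x = 0 := rfl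

theorem evA_sum {R : Type} [CommRing R] (l : List ℕ) (x : R) (n : ℕ) (h : l.length ≤ n) :
    evA l x = ∑ i ∈ Finset.range n, (l.getD i 0 : R) * x ^ i := by
  induction l generalizing n with
  | nil => simp [evA]
  | cons c u ih =>
    obtain ⟨m, rfl⟩ : ∃ m, n = m + 1 := ⟨n - 1, by simp at h; omega⟩
    rw [evA_cons, Finset.sum_range_succ', ih m (by simpa using h), Finset.mul_sum, add_comm]
    simp [pow_succ]
    exact Finset.sum_congr rfl fun i _ => by ring

theorem map_evA {R T : Type} [CommRing R] [CommRing T] (f : R →+* T) (l : List ℕ) (x : R) :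
    f (evA l x) = evA l (f x) := by
  induction l with
  | nil => simp [evA_nil]
  | cons c l ih => simp [evA_cons, ih]

theorem cast_mod {R : Type} [CommRing R] {P : ℕ} (hP : (P : R) = 0) (n : ℕ) :
    ((n % P : ℕ) : R) = n := by
  conv_rhs => rw [← Nat.mod_add_div n P]
  simp [hP]

theorem cast_modZ {R : Type} [CommRing R] {P : ℕ} (hP : (P : R) = 0) (hP0 : 0 < P) (n : ℤ) :
    (((n % (P : ℤ)).toNat : ℕ) : R) = n := by
  have h : (((n % (P : ℤ)).toNat : ℕ) : ℤ) = n % P :=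
    Int.toNat_of_nonneg (Int.emod_nonneg _ (by omega))
  have h2 : (((n % (P : ℤ)).toNat : ℕ) : R) = ((n % (P:ℤ) : ℤ) : R) := by
    have := congrArg (Int.cast : ℤ → R) h
    rwa [Int.cast_natCast] at this
  rw [h2]
  conv_rhs => rw [← Int.emod_add_mul_ediv n P]
  simp [hP]

theorem evA_vals {R : Type} [CommRing R] {P : ℕ} (hP : (P : R) = 0) (a : ℕ) (l : List ℕ) (x : R) :
    evA l x = (x - a) * evA (vals P a l).tail x + ((vals P a l).headD 0 : ℕ) := by
  induction l with
  | nil => simp [vals, evA_nil]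
  | cons c l ih =>
    have h2 : evA (vals P a l) x = ((vals P a l).headD 0 : ℕ) + x * evA (vals P a l).tail x := by
      cases vals P a l <;> simp [evA_nil, evA_cons]
    have : vals P a (c :: l) = ((c + a * (vals P a l).headD 0) % P) :: vals P a l := rfl
    rw [this, evA_cons, ih, List.tail_cons, h2, List.headD_cons, cast_mod hP]
    push_cast; ring

theorem evA_head {R : Type} [CommRing R] {P : ℕ} (hP : (P : R) = 0) (a : ℕ) (l : List ℕ) :
    evA l (a : R) = ((vals P a l).headD 0 : ℕ) := by
  rw [evA_vals hP a l]; simp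

theorem evA_axpy {R : Type} [CommRing R] {P : ℕ} (hP : (P : R) = 0) (c : ℕ) (f g : List ℕ)
    (h : g.length ≤ f.length) (x : R) : evA (axpy P c f g) x = c * evA f x + evA g x := by
  induction f generalizing g with
  | nil =>
    have : g = [] := by simpa using h
    simp [axpy, evA_nil, this]
  | cons d f ih =>
    have : axpy P c (d :: f) g = ((c * d + g.headD 0) % P) :: axpy P c f g.tail := rfl
    rw [this, evA_cons, cast_mod hP, evA_cons, ih g.tail (by simp at h ⊢; omega)]
    cases g <;> simp [evA_nil, evA_cons] <;> ring

theorem axpy_length (P c : ℕ) (f g : List ℕ) : (axpy P c f g).length = f.length := by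
  induction f generalizing g with
  | nil => rfl
  | cons d f ih => simp [axpy, ih]

theorem evA_lc {R : Type} [CommRing R] {P : ℕ} (hP : (P : R) = 0) (c : List ℕ)
    (M : List (List ℕ)) (n : ℕ) (hM : ∀ l ∈ M, l.length = n) (hl : M.length = c.length) (x : R) :
    evA (lc P c M) x = ∑ i ∈ Finset.range c.length, (c.getD i 0 : R) * evA (M.getD i []) x ∧
      (lc P c M).length ≤ n := by
  induction c generalizing M with
  | nil => simp [lc, evA_nil]
  | cons d c ih =>
    cases M with
    | nil => simp at hl
    | cons f M =>
      obtain ⟨h1, h2⟩ := ih M (fun l hl => hM l (by simp [hl])) (by simpa using hl)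
      have h3 := hM f (by simp)
      have : lc P (d :: c) (f :: M) = axpy P d f (lc P c M) := rfl
      rw [this, evA_axpy hP _ _ _ (by omega), h1, List.length_cons, Finset.sum_range_succ',
        axpy_length]
      exact ⟨by simp [add_comm], h3.le⟩

theorem chkA_spec (P x c l : ℕ) (Ls : List (List ℕ)) (j : ℕ) (h : chkA P x c l Ls j = true)
    (i : ℕ) (hi : i < Ls.length) :
    ((vals P x (Ls.getD i [])).headD 0 * c) % P = if j + i = l then 1 else 0 := by
  induction Ls generalizing j i with
  | nil => simp at hi
  | cons f Ls ih =>
    have h1 : chkA P x c l (f :: Ls) j = forceN j fun j => valsK P x f fun v =>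
      bif Nat.beq (Nat.mod (Nat.mul (v.headD 0) c) P) (bif Nat.beq j l then 1 else 0)
      then chkA P x c l Ls (Nat.succ j) else false := rfl
    rw [h1, forceN_eq, valsK_eq] at h
    cases hd : Nat.beq (Nat.mod (Nat.mul ((vals P x f).headD 0) c) P)
      (bif Nat.beq j l then 1 else 0) with
    | false => rw [hd] at h; simp at h
    | true =>
      rw [hd] at h
      cases i with
      | zero =>
        have := Nat.eq_of_beq_eq_true hd
        rw [List.getD_cons_zero, add_zero]
        refine this.trans ?_
        by_cases hjl : j = l
        · subst hjl; simp
        · have : j.beq l = false := by simpa [← Nat.beq_eq] using hjl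
          simp [this, hjl]
      | succ i =>
        have := ih _ h i (by simpa using hi)
        rw [List.getD_cons_succ, this]
        simp only [show j.succ + i = j + (i + 1) by omega]

theorem chkB_spec (P : ℕ) (Ls : List (List ℕ)) (A D : List ℕ) (j : ℕ)
    (h : chkB P Ls A D j = true) (l : ℕ) (hl : l < A.length) :
    chkA P (A.getD l 0) (D.getD l 0) (j + l) Ls 0 = true := by
  induction A generalizing D j l with
  | nil => simp at hl
  | cons x A ih =>
    have h1 : chkB P Ls (x :: A) D j = forceN j fun l =>
      bif chkA P x (D.headD 0) l Ls 0 then chkB P Ls A D.tail (Nat.succ l) else false := rfl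
    rw [h1, forceN_eq] at h
    cases hd : chkA P x (D.headD 0) j Ls 0 with
    | false => rw [hd] at h; simp at h
    | true =>
      rw [hd] at h
      cases l with
      | zero => cases D <;> simpa using hd
      | succ l =>
        have := ih _ _ h l (by simpa using hl)
        rw [show j.succ + l = j + (l+1) by omega] at this
        cases D <;> simpa using this

theorem chkS_spec (P : ℕ) (s A : List ℕ) (h : chkS P s A = true) (l : ℕ) (hl : l < A.length) :
    (vals P (A.getD l 0) s).headD 0 = 0 := by
  induction A generalizing l with
  | nil => simp at hl
  | cons x A ih =>
    have h1 : chkS P s (x :: A) = valsK P x s fun v =>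
      bif Nat.beq (v.headD 0) 0 then chkS P s A else false := rfl
    rw [h1, valsK_eq] at h
    cases hd : Nat.beq ((vals P x s).headD 0) 0 with
    | false => rw [hd] at h; simp at h
    | true =>
      rw [hd] at h
      cases l with
      | zero => simpa using Nat.eq_of_beq_eq_true hd
      | succ l => simpa using ih h l (by simpa using hl)

/-- the polynomial with integer coefficients -/
def SZ : ℤ[X] := sZ.foldr (fun c r => C c + X * r) 0

theorem aeval_SZ {R : Type} [CommRing R] {P : ℕ} (hP : (P : R) = 0) (hP0 : 0 < P) (x : R) :
    SZ.eval₂ (Int.castRingHom R) x = evA (sN P) x := by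
  unfold SZ sN
  induction sZ with
  | nil => simp [evA_nil]
  | cons c l ih =>
    rw [List.foldr_cons, List.map_cons, evA_cons, eval₂_add, eval₂_mul, ih, cast_modZ hP hP0, eval₂_C, eval₂_X]
    rfl

def aa (l : ℕ) : ℕ := cA.getD l 0
def dd (l : ℕ) : ℕ := cDi.getD l 0
def Lc (l : ℕ) : List ℕ := (vals cP (aa l) (sN cP)).tail

theorem cP_pos : 0 < cP := by unfold cP; positivity
theorem cA_length : cA.length = 32 := rfl
theorem cDi_length : cDi.length = 32 := rfl
theorem Lsf_length : (Lsf cP (sN cP) cA).length = 32 := by simp [Lsf, cA_length]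
theorem Lsf_getD (l : ℕ) (hl : l < 32) : (Lsf cP (sN cP) cA).getD l [] = Lc l := by
  rw [Lsf, getD_map_lt _ _ _ 0 _ (by rwa [cA_length])]; rfl
theorem vals_length (P a : ℕ) (l : List ℕ) : (vals P a l).length = l.length := by
  induction l with
  | nil => rfl
  | cons c l ih => simp [vals, ih]
theorem sN_length (P : ℕ) : (sN P).length = 33 := by simp [sN, sZ]
theorem Lc_length (l : ℕ) : (Lc l).length = 32 := by simp [Lc, vals_length, sN_length]
theorem Lsf_mem (l : List ℕ) (h : l ∈ Lsf cP (sN cP) cA) : l.length = 32 := by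
  simp only [Lsf, List.mem_map] at h
  obtain ⟨a, -, rfl⟩ := h
  simp [vals_length, sN_length]
theorem vals_lt (P a : ℕ) (hP : 0 < P) (l : List ℕ) : ∀ v ∈ vals P a l, v < P := by
  induction l with
  | nil => simp [vals]
  | cons c l ih =>
    intro v hv
    simp only [vals, List.mem_cons] at hv
    rcases hv with rfl | hv
    · exact Nat.mod_lt _ hP
    · exact ih v hv
theorem Lsf_le (i k : ℕ) : ((Lsf cP (sN cP) cA).getD i []).getD k 0 ≤ cP := by
  by_cases hi : i < 32
  · rw [Lsf_getD i hi]
    by_cases hk : k < 32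
    · rw [List.getD_eq_getElem _ _ (by rw [Lc_length]; exact hk)]
      exact (vals_lt cP (aa i) cP_pos (sN cP) _ (List.mem_of_mem_tail (List.getElem_mem _))).le
    · rw [List.getD_eq_default _ _ (by rw [Lc_length]; omega)]; omega
  · rw [List.getD_eq_default _ _ (by
      rw [List.getD_eq_default _ _ (by rw [Lsf_length]; omega)]; simp)]
    omega

attribute [local irreducible] cP cRho cA cDi

section
variable {R : Type} [CommRing R] (hP : (cP : R) = 0)
include hP

theorem T1 (l : ℕ) (hl : l < 32) (x : R) : SZ.eval₂ (Int.castRingHom R) x = (x - aa l) * evA (Lc l) x := by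
  have h := chk1
  rw [forceN_eq, forceL_eq] at h
  have := chkS_spec _ _ _ h l (by rw [cA_length]; exact hl)
  rw [aeval_SZ hP cP_pos, evA_vals hP (aa l)]
  have h0 : (vals cP (aa l) (sN cP)).headD 0 = 0 := this
  rw [h0]; simp [Lc]

theorem T2 (i l : ℕ) (hi : i < 32) (hl : l < 32) :
    evA (Lc i) (aa l : R) * dd l = if i = l then 1 else 0 := by
  have h := chk2
  rw [forceN_eq, forceL_eq, LsfK_eq] at h
  have h2 := chkA_spec _ _ _ _ _ _ (chkB_spec _ _ _ _ _ h l (by rw [cA_length]; exact hl)) i (by rw [Lsf_length]; exact hi)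
  rw [Lsf_getD i hi] at h2
  rw [evA_head hP]
  have h3 : (((vals cP (aa l) (Lc i)).headD 0 * dd l % cP : ℕ) : R) =
      ((if 0 + i = 0 + l then 1 else 0 : ℕ) : R) := congrArg _ h2
  rw [cast_mod hP] at h3
  rw [Nat.cast_mul, zero_add, zero_add] at h3
  rw [h3]
  split_ifs
  · exact Nat.cast_one
  · exact Nat.cast_zero

theorem T2d (l : ℕ) (hl : l < 32) : (derivative SZ).eval₂ (Int.castRingHom R) (aa l : R) = evA (Lc l) (aa l : R) := by
  have hPX : (cP : R[X]) = 0 := by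
    rw [← map_natCast C, hP, map_zero]
  have h := T1 hPX l hl (X : R[X])
  have h1 : SZ.eval₂ (Int.castRingHom R[X]) (X : R[X]) = SZ.map (Int.castRingHom R) := by
    rw [eval₂_eq_eval_map]
    have : (SZ.map (Int.castRingHom R[X])) = (SZ.map (Int.castRingHom R)).map C := by
      rw [Polynomial.map_map]; congr 1
    rw [this, eval_map, eval₂_C_X]
  rw [h1] at h
  have h2 := congrArg (fun q => (derivative q).eval (aa l : R)) h
  simp only [derivative_map, derivative_mul, eval_add, eval_mul] at h2
  rw [eval_map] at h2
  rw [h2]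
  have := map_evA (evalRingHom (aa l : R)) (Lc l) (X : R[X])
  simp at this
  simp [this]

theorem T4 (x : R) : ∑ l ∈ Finset.range 32, (dd l : R) * evA (Lc l) x = 1 := by
  have h := chk4
  rw [forceN_eq, forceL_eq, LsfK_eq, lcK_eq] at h
  have h := of_decide_eq_true h
  have h2 := (evA_lc hP cDi (Lsf cP (sN cP) cA) 32 Lsf_mem (by rw [Lsf_length, cDi_length]) x).1
  rw [h, cDi_length] at h2
  have h3 : evA (1 :: List.replicate 31 0) x = 1 := by
    simp [evA, List.replicate]
  rw [← h3, h2]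
  refine Finset.sum_congr rfl fun i hi => ?_
  rw [Lsf_getD i (by simpa using hi)]; rfl

theorem T5 : (cRho : R) * cRho = -31 := by
  have h := congrArg (fun n : ℕ => (n : R)) chk5
  simp only [cast_mod hP] at h
  push_cast at h
  linear_combination h
end

def tau (a b c : ℕ) : ℤ := if tt a b c = 0 then 0 else if tt a b c = 1 then 1 else -1

theorem aux_mod (m p q c : ℤ) (h : m + p * q = c) : m - c = p * -q := by
  linear_combination h

theorem T6 : ∃ n : ℕ → ℕ → ℕ → ℤ,
    (∀ i < 32, ∀ j < 32, ∀ k < 32, |n i j k| * 16 ^ (i + j + k) ≤ 2 ^ 371) ∧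
    ∀ (R : Type) [CommRing R] (_ : (cP : R) = 0) (x y z : R),
      ∑ i ∈ Finset.range 32, ∑ j ∈ Finset.range 32, ∑ k ∈ Finset.range 32,
        (n i j k : R) * (x ^ i * y ^ j * z ^ k) =
      cRho * ∑ a ∈ Finset.range 32, ∑ b ∈ Finset.range 32, ∑ c ∈ Finset.range 32,
        (tau a b c : R) * (evA (Lc a) x * evA (Lc b) y * evA (Lc c) z) := by
  have h := chk3
  rw [forceN_eq, forceN_eq, forceN_eq, forceN_eq, forceL_eq, LsfK_eq] at h
  have h2 := check3_spec _ _ _ _ _ Lsf_length Lsf_mem Lsf_le (by decide +kernel) h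
  set L : ℕ → ℕ → ℕ := fun a i => ((Lsf cP (sN cP) cA).getD a []).getD i 0 with hL
  have key : ∀ i j k, ∃ m : ℤ, (i < 32 → j < 32 → k < 32 → |m| * 16 ^ (i + j + k) ≤ 2 ^ 371) ∧
      ((cP : ℤ) ∣ m - (Cf cP L i j k * cRho : ℕ)) := by
    intro i j k
    have hmod : (cP : ℤ) ∣ ((Cf cP L i j k * cRho % cP : ℕ) : ℤ) - (Cf cP L i j k * cRho : ℕ) := by
      have := Int.emod_add_mul_ediv ((Cf cP L i j k * cRho : ℕ) : ℤ) cP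
      refine ⟨-(((Cf cP L i j k * cRho : ℕ) : ℤ) / cP), ?_⟩
      rw [Int.natCast_mod]
      exact aux_mod _ _ _ _ this
    by_cases hh : i < 32 ∧ j < 32 ∧ k < 32
    · obtain ⟨hi, hj, hk⟩ := hh
      have hlt : Cf cP L i j k * cRho % cP < cP := Nat.mod_lt _ cP_pos
      rcases h2 i j k hi hj hk with h3 | h3
      · refine ⟨(Cf cP L i j k * cRho % cP : ℕ), fun _ _ _ => ?_, hmod⟩
        rw [abs_of_nonneg (by positivity)]
        have := (Nat.le_div_iff_mul_le (by positivity)).1 h3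
        exact_mod_cast this
      · refine ⟨(Cf cP L i j k * cRho % cP : ℕ) - cP, fun _ _ _ => ?_, ?_⟩
        · rw [abs_of_nonpos (by omega)]
          have := (Nat.le_div_iff_mul_le (by positivity)).1 h3
          zify [hlt.le] at this
          rw [neg_sub]
          exact this
        · have := dvd_sub hmod (dvd_refl (cP : ℤ))
          rwa [sub_right_comm] at this
    · exact ⟨_, fun a b c => absurd ⟨a, b, c⟩ hh, hmod⟩
  choose n hn1 hn2 using key
  refine ⟨n, fun i hi j hj k hk => hn1 i j k hi hj hk, ?_⟩
  intro R _ hP x y z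
  have hLe : ∀ a < 32, ∀ i, L a i = (Lc a).getD i 0 := fun a ha i => by rw [hL, ← Lsf_getD a ha]
  have hc : ∀ i j k, (n i j k : R) = cRho * ∑ a ∈ Finset.range 32, ∑ b ∈ Finset.range 32,
      ∑ c ∈ Finset.range 32, (tau a b c : R) * ((L a i : R) * L b j * L c k) := by
    intro i j k
    obtain ⟨e, he⟩ := hn2 i j k
    have := congrArg (fun z : ℤ => (z : R)) he
    push_cast at this
    rw [hP, zero_mul, sub_eq_zero] at this
    rw [this, mul_comm]
    refine congrArg (fun t : R => (cRho : R) * t) ?_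
    unfold Cf
    rw [Nat.cast_sum]
    simp only [Nat.cast_sum, Nat.cast_mul]
    refine Finset.sum_congr rfl fun a _ => Finset.sum_congr rfl fun b _ =>
      Finset.sum_congr rfl fun c _ => ?_
    have : ((Wf cP L a b c k : ℕ) : R) = tau a b c * L c k := by
      unfold Wf tau
      split_ifs
      · simp
      · simp
      · rw [Nat.cast_sub (Lsf_le c k), hP]; simp [hL]
    rw [this]; ring
  have hev : ∀ a < 32, ∀ x : R, evA (Lc a) x = ∑ i ∈ Finset.range 32, (L a i : R) * x ^ i := by
    intro a ha x
    rw [evA_sum _ _ 32 (Lc_length a).le]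
    exact Finset.sum_congr rfl fun i _ => by rw [hLe a ha]
  have hrhs : ∀ a ∈ Finset.range 32, ∀ b ∈ Finset.range 32, ∀ c ∈ Finset.range 32,
      (tau a b c : R) * (evA (Lc a) x * evA (Lc b) y * evA (Lc c) z) =
      ∑ i ∈ Finset.range 32, ∑ j ∈ Finset.range 32, ∑ k ∈ Finset.range 32,
        (tau a b c : R) * ((L a i : R) * L b j * L c k) * (x ^ i * y ^ j * z ^ k) := by
    intro a ha b hb c hc
    rw [hev a (by simpa using ha), hev b (by simpa using hb), hev c (by simpa using hc)]
    rw [Finset.sum_mul_sum, Finset.sum_mul, Finset.mul_sum]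
    refine Finset.sum_congr rfl fun i _ => ?_
    rw [Finset.sum_mul, Finset.mul_sum]
    refine Finset.sum_congr rfl fun j _ => ?_
    rw [Finset.mul_sum, Finset.mul_sum]
    refine Finset.sum_congr rfl fun k _ => ?_
    ring
  rw [Finset.sum_congr rfl fun a ha => Finset.sum_congr rfl fun b hb =>
    Finset.sum_congr rfl fun c hc => hrhs a ha b hb c hc]
  simp only [hc]
  simp only [Finset.mul_sum, Finset.sum_mul]
  -- reorder the six sums
  have comm3 : ∀ F : ℕ → ℕ → ℕ → ℕ → ℕ → ℕ → R,
      ∑ i ∈ Finset.range 32, ∑ j ∈ Finset.range 32, ∑ k ∈ Finset.range 32,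
      ∑ a ∈ Finset.range 32, ∑ b ∈ Finset.range 32, ∑ c ∈ Finset.range 32, F i j k a b c =
      ∑ a ∈ Finset.range 32, ∑ b ∈ Finset.range 32, ∑ c ∈ Finset.range 32,
      ∑ i ∈ Finset.range 32, ∑ j ∈ Finset.range 32, ∑ k ∈ Finset.range 32, F i j k a b c := by
    intro F
    have e1 : ∀ G : ℕ → ℕ → ℕ → R, ∑ i ∈ Finset.range 32, ∑ j ∈ Finset.range 32,
        ∑ k ∈ Finset.range 32, G i j k =
        ∑ t ∈ Finset.range 32 ×ˢ (Finset.range 32 ×ˢ Finset.range 32), G t.1 t.2.1 t.2.2 := by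
      intro G; rw [Finset.sum_product]; simp only [Finset.sum_product]
    simp only [e1]
    rw [Finset.sum_comm]
  rw [comm3]
  refine Finset.sum_congr rfl fun a _ => Finset.sum_congr rfl fun b _ =>
    Finset.sum_congr rfl fun c _ => Finset.sum_congr rfl fun i _ =>
    Finset.sum_congr rfl fun j _ => Finset.sum_congr rfl fun k _ => by ring


theorem S_eq : S = SZ.map (Int.castRingHom ℚ) := by
  simp only [S, SZ, sZ, List.foldr, Polynomial.map_add, Polynomial.map_mul, map_C, map_X, eq_intCast,
    Polynomial.map_zero, map_intCast, Polynomial.map_intCast]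
  push_cast
  ring

def sc (i : ℕ) : ℤ := sZ.getD i 0

theorem SZ_sum : SZ = ∑ i ∈ Finset.range 33, C (sc i) * X ^ i := by
  have : ∀ (l : List ℤ) (n : ℕ), l.length ≤ n → l.foldr (fun c r => C c + X * r) 0 =
      ∑ i ∈ Finset.range n, C (l.getD i 0) * X ^ i := by
    intro l
    induction l with
    | nil => simp
    | cons c u ih =>
      intro n h
      obtain ⟨m, rfl⟩ : ∃ m, n = m + 1 := ⟨n - 1, by simp at h; omega⟩
      rw [List.foldr_cons, Finset.sum_range_succ', ih m (by simpa using h), Finset.mul_sum,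
        add_comm]
      refine congrArg₂ _ (Finset.sum_congr rfl fun i _ => ?_) (by simp)
      rw [List.getD_cons_succ]; ring
  exact this sZ 33 (by simp [sZ])

theorem sc32 : sc 32 = 1 := by decide +kernel

theorem SZ_split : SZ = X ^ 32 + ∑ i ∈ Finset.range 32, C (sc i) * X ^ i := by
  rw [SZ_sum, Finset.sum_range_succ, sc32, add_comm]; simp

theorem SZ_low : (∑ i ∈ Finset.range 32, C (sc i) * X ^ i : ℤ[X]).degree < 32 := by
  refine (Polynomial.degree_sum_le _ _).trans_lt ?_
  rw [Finset.sup_lt_iff (by exact WithBot.bot_lt_coe 32)]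
  intro i hi
  refine (degree_C_mul_X_pow_le _ _).trans_lt ?_
  exact_mod_cast Finset.mem_range.1 hi

theorem SZ_monic : SZ.Monic := by
  rw [SZ_split]
  exact monic_X_pow_add SZ_low

theorem SZ_natDegree : SZ.natDegree = 32 := by
  have : SZ.degree = 32 := by
    rw [SZ_split, degree_add_eq_left_of_degree_lt]
    · simp
    · rw [degree_X_pow]; exact SZ_low
  exact natDegree_eq_of_degree_eq_some this

/-- evaluation of integral polynomials -/
abbrev ev {R : Type} [CommRing R] (f : ℤ[X]) (x : R) : R := f.eval₂ (Int.castRingHom R) x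

theorem map_ev {R T : Type} [CommRing R] [CommRing T] (f : R →+* T) (p : ℤ[X]) (x : R) :
    f (ev p x) = ev p (f x) := by
  rw [ev, hom_eval₂, RingHom.ext_int (f.comp (Int.castRingHom R)) (Int.castRingHom T)]

theorem ev_sum {R : Type} [CommRing R] (x : R) :
    ev SZ x = x ^ 32 + ∑ i ∈ Finset.range 32, (sc i : R) * x ^ i := by
  rw [ev, SZ_split]
  simp only [eval₂_add, eval₂_finsetSum, eval₂_mul, eval₂_pow, eval₂_C, eval₂_X]
  simp only [eq_intCast]

theorem ev_dsum {R : Type} [CommRing R] (x : R) :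
    ev (derivative SZ) x = ∑ i ∈ Finset.range 33, (sc i : R) * (i * x ^ (i - 1)) := by
  rw [ev, SZ_sum]
  simp only [derivative_sum, derivative_C_mul, derivative_X_pow, eval₂_finsetSum, eval₂_mul, eval₂_pow, eval₂_C, eval₂_X, eval₂_natCast, map_natCast]
  simp only [eq_intCast]

theorem quot_zero {R : Type} [CommRing R] (hP : (cP : R) = 0) (α : R) (hα : ev SZ α = 0) (w : R)
    (h : ∀ l < 32, Ideal.Quotient.mk (Ideal.span {α - (aa l : R)}) w = 0) : w = 0 := by
  rw [← one_mul w, ← T4 hP α, Finset.sum_mul]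
  refine Finset.sum_eq_zero fun l hl => ?_
  have hl' : l < 32 := by simpa using hl
  have h1 := h l hl'
  rw [Ideal.Quotient.eq_zero_iff_mem, Ideal.mem_span_singleton] at h1
  obtain ⟨y, rfl⟩ := h1
  have h2 := T1 hP l hl' α
  rw [show eval₂ (Int.castRingHom R) α SZ = 0 from hα] at h2
  linear_combination -(dd l : R) * y * h2

theorem quot_eq {R : Type} [CommRing R] (α b : R) :
    Ideal.Quotient.mk (Ideal.span {α - b}) α = Ideal.Quotient.mk (Ideal.span {α - b}) b := by
  rw [Ideal.Quotient.eq]; exact Ideal.subset_span rfl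

theorem deriv_unit {R : Type} [CommRing R] (hP : (cP : R) = 0) (α : R) (hα : ev SZ α = 0) :
    ∃ u, ev (derivative SZ) α * u = 1 := by
  refine ⟨∑ l ∈ Finset.range 32, (dd l : R) * dd l * evA (Lc l) α, ?_⟩
  rw [← sub_eq_zero]
  refine quot_zero hP α hα _ fun l hl => ?_
  set f := Ideal.Quotient.mk (Ideal.span {α - (aa l : R)})
  have hP' : (cP : R ⧸ Ideal.span {α - (aa l : R)}) = 0 := by
    have := congrArg f hP; simpa using this
  have hα' : f α = aa l := by rw [quot_eq]; simp
  rw [map_sub, map_mul, map_sum, map_ev, hα', map_one]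
  have : ∀ i ∈ Finset.range 32, f (dd i * dd i * evA (Lc i) α) =
      if i = l then (dd l : R ⧸ Ideal.span {α - (aa l : R)}) else 0 := by
    intro i hi
    have hi' : i < 32 := by simpa using hi
    rw [map_mul, map_evA, hα', map_mul, map_natCast]
    have h2 := T2 hP' i l hi' hl
    have h3 := T2 hP' l l hl hl
    rw [if_pos rfl] at h3
    split_ifs with hil
    · subst hil; linear_combination (dd i : R ⧸ Ideal.span {α - (aa i : R)}) * h3
    · rw [if_neg hil] at h2
      have h4 : evA (Lc i) (aa l : R ⧸ Ideal.span {α - (aa l : R)}) = 0 := by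
        linear_combination (-evA (Lc i) (aa l : R ⧸ Ideal.span {α - (aa l : R)})) * h3 +
          evA (Lc l) (aa l : R ⧸ Ideal.span {α - (aa l : R)}) * h2
      rw [h4, mul_zero]
  rw [Finset.sum_congr rfl this, Finset.sum_ite_eq' (Finset.range 32) l,
    if_pos (Finset.mem_range.2 hl)]
  have h3 := T2 hP' l l hl hl
  rw [if_pos rfl] at h3
  have h5 := T2d hP' l hl
  rw [ev, h5, h3, sub_self]

theorem tt_cases (a b c : ℕ) (ha : a < 32) (hb : b < 32) (hc : c < 32)
    (h1 : a ≠ b) (h2 : b ≠ c) (h3 : a ≠ c) : tt a b c ≠ 0 := by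
  have : ∀ a b c : Fin 32, a.1 = b.1 ∨ b.1 = c.1 ∨ a.1 = c.1 ∨ ¬ tt a.1 b.1 c.1 = 0 := by
    decide +kernel
  have := this ⟨a, ha⟩ ⟨b, hb⟩ ⟨c, hc⟩
  simp only [h1, h2, h3, false_or] at this
  exact this

theorem tau_cases (a b c : ℕ) (ha : a < 32) (hb : b < 32) (hc : c < 32)
    (h1 : a ≠ b) (h2 : b ≠ c) (h3 : a ≠ c) : tau a b c = 1 ∨ tau a b c = -1 := by
  have := tt_cases a b c ha hb hc h1 h2 h3
  unfold tau
  rw [if_neg this]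
  split_ifs <;> simp

def nn : ℕ → ℕ → ℕ → ℤ := T6.choose

/-- the trivariate form -/
def NN {R : Type} [CommRing R] (x y z : R) : R :=
  ∑ i ∈ Finset.range 32, ∑ j ∈ Finset.range 32, ∑ k ∈ Finset.range 32,
        (nn i j k : R) * (x ^ i * y ^ j * z ^ k)
def DD {R : Type} [CommRing R] (x y z : R) : R :=
  ev (derivative SZ) x * ev (derivative SZ) y * ev (derivative SZ) z

theorem map_NN {R T : Type} [CommRing R] [CommRing T] (f : R →+* T) (x y z : R) :
    f (NN x y z) = NN (f x) (f y) (f z) := by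
  simp [NN]
theorem map_DD {R T : Type} [CommRing R] [CommRing T] (f : R →+* T) (x y z : R) :
    f (DD x y z) = DD (f x) (f y) (f z) := by
  simp only [DD, map_mul, map_ev]

theorem NN_aa {R : Type} [CommRing R] (hP : (cP : R) = 0) (a b c : ℕ)
    (ha : a < 32) (hb : b < 32) (hc : c < 32) :
    NN (aa a : R) (aa b) (aa c) = cRho * tau a b c * DD (aa a : R) (aa b) (aa c) := by
  have h := T6.choose_spec.2 R hP (aa a : R) (aa b) (aa c)
  rw [NN, DD]
  have hz : ∀ i ∈ Finset.range 32, ∀ l < 32, i ≠ l → evA (Lc i) (aa l : R) = 0 := by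
    intro i hi l hl hil
    have h2 := T2 hP i l (by simpa using hi) hl
    have h3 := T2 hP l l hl hl
    rw [if_pos rfl] at h3
    rw [if_neg hil] at h2
    linear_combination (-evA (Lc i) (aa l : R)) * h3 + evA (Lc l) (aa l : R) * h2
  unfold nn
  rw [h, Finset.sum_eq_single a, Finset.sum_eq_single b, Finset.sum_eq_single c]
  · simp only [ev]
    rw [T2d hP a ha, T2d hP b hb, T2d hP c hc]; ring
  · intro i hi hne; rw [hz i hi c hc hne]; ring
  · intro h; exact absurd (Finset.mem_range.2 hc) h
  · intro i hi hne; refine Finset.sum_eq_zero fun _ _ => ?_; rw [hz i hi b hb hne]; ring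
  · intro h; exact absurd (Finset.mem_range.2 hb) h
  · intro i hi hne
    refine Finset.sum_eq_zero fun _ _ => Finset.sum_eq_zero fun _ _ => ?_
    rw [hz i hi a ha hne]; ring
  · intro h; exact absurd (Finset.mem_range.2 ha) h

theorem w_base {R : Type} [CommRing R] (hP : (cP : R) = 0) (a b c : ℕ)
    (ha : a < 32) (hb : b < 32) (hc : c < 32) (h1 : IsUnit ((aa a : R) - aa b))
    (h2 : IsUnit ((aa b : R) - aa c)) (h3 : IsUnit ((aa a : R) - aa c)) :
    NN (aa a : R) (aa b) (aa c) ^ 2 + 31 * DD (aa a : R) (aa b) (aa c) ^ 2 = 0 := by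
  rcases subsingleton_or_nontrivial R with hR | hR
  · exact Subsingleton.elim _ _
  have e1 : a ≠ b := fun h => by subst h; simp at h1
  have e2 : b ≠ c := fun h => by subst h; simp at h2
  have e3 : a ≠ c := fun h => by subst h; simp at h3
  rw [NN_aa hP a b c ha hb hc]
  have h5 := T5 hP
  have : (tau a b c : R) ^ 2 = 1 := by
    rcases tau_cases a b c ha hb hc e1 e2 e3 with h | h <;> simp [h]
  linear_combination (cRho : R) * cRho * DD (aa a : R) (aa b) (aa c) ^ 2 * this +
    DD (aa a : R) (aa b) (aa c) ^ 2 * h5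

theorem w_zero {R : Type} [CommRing R] (hP : (cP : R) = 0) (α β γ : R) (hα : ev SZ α = 0)
    (hβ : ev SZ β = 0) (hγ : ev SZ γ = 0) (h1 : IsUnit (α - β))
    (h2 : IsUnit (β - γ)) (h3 : IsUnit (α - γ)) :
    NN α β γ ^ 2 + 31 * DD α β γ ^ 2 = 0 := by
  have key : ∀ (T : Type) [CommRing T] (f : R →+* T), f (NN α β γ ^ 2 + 31 * DD α β γ ^ 2) =
      NN (f α) (f β) (f γ) ^ 2 + 31 * DD (f α) (f β) (f γ) ^ 2 := by
    intro T _ f; rw [map_add, map_mul, map_pow, map_pow, map_NN, map_DD, map_ofNat]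
  have step : ∀ (T : Type) [CommRing T] (f : R →+* T) (x : R), ev SZ x = 0 →
      (∀ l < 32, ∀ (T' : Type) [CommRing T'] (g : T →+* T'), g (f x) = aa l →
        g (f (NN α β γ ^ 2 + 31 * DD α β γ ^ 2)) = 0) →
      f (NN α β γ ^ 2 + 31 * DD α β γ ^ 2) = 0 := by
    intro T _ f x hx h
    refine quot_zero (by simpa using congrArg f hP) (f x) (by rw [← map_ev, hx, map_zero]) _ ?_
    intro l hl
    exact h l hl _ _ (by rw [quot_eq]; simp)
  refine step R (RingHom.id R) α hα fun a ha T1 _ g1 hg1 => ?_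
  refine step T1 (g1.comp (RingHom.id R)) β hβ fun b hb T2 _ g2 hg2 => ?_
  refine step T2 (g2.comp (g1.comp (RingHom.id R))) γ hγ fun c hc T3 _ g3 hg3 => ?_
  simp only [RingHom.comp_apply, RingHom.id_apply] at hg1 hg2 hg3 ⊢
  have := key T3 (g3.comp (g2.comp g1))
  simp only [RingHom.comp_apply, hg1, hg2, hg3, map_natCast] at this
  rw [this]
  have q1 := h1.map (g3.comp (g2.comp g1))
  have q2 := h2.map (g3.comp (g2.comp g1))
  have q3 := h3.map (g3.comp (g2.comp g1))
  simp only [map_sub, RingHom.comp_apply, hg1, hg2, hg3, map_natCast] at q1 q2 q3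
  exact w_base (by simpa using congrArg (g3.comp (g2.comp g1)) hP) a b c ha hb hc q1 q2 q3

theorem sub_dvd_deriv {R : Type} [CommRing R] [IsDomain R] (α β : R) (hα : ev SZ α = 0)
    (hβ : ev SZ β = 0) (h : α ≠ β) : (α - β) ∣ ev (derivative SZ) α := by
  have h1 : (SZ.map (Int.castRingHom R)).IsRoot β := by rw [IsRoot, eval_map]; exact hβ
  obtain ⟨q, hq⟩ := dvd_iff_isRoot.2 h1
  have h2 : ev SZ α = (α - β) * q.eval α := by
    rw [ev, ← eval_map, hq]; simp
  rw [hα] at h2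
  have h3 : q.eval α = 0 := by
    rcases mul_eq_zero.1 h2.symm with h4 | h4
    · exact absurd (sub_eq_zero.1 h4) h
    · exact h4
  refine ⟨(derivative q).eval α, ?_⟩
  rw [ev, ← eval_map, ← derivative_map, hq]
  simp [h3]


theorem bnd1 : ∑ i ∈ Finset.range 32, (sc i).natAbs * 16 ^ i < 16 ^ 32 := by decide +kernel
theorem bnd2 : ∑ i ∈ Finset.range 33, (sc i).natAbs * (i * 16 ^ (i - 1)) ≤ 2 ^ 130 := by
  decide +kernel
theorem bnd3 : (32 ^ 3 * 2 ^ 371) ^ 2 + 31 * ((2 ^ 130) ^ 3) ^ 2 < cP := by decide +kernel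

theorem root_norm (z : ℂ) (h : ev SZ z = 0) : ‖z‖ ≤ 16 := by
  by_contra hc
  push Not at hc
  rw [ev_sum] at h
  set t := ‖z‖ / 16 with ht
  have ht1 : 1 ≤ t := by rw [ht, le_div_iff₀ (by norm_num)]; linarith
  have hz : ‖z‖ = 16 * t := by rw [ht]; ring
  have h1 : ‖z‖ ^ 32 ≤ ∑ i ∈ Finset.range 32, ((sc i).natAbs : ℝ) * ‖z‖ ^ i := by
    have : z ^ 32 = -∑ i ∈ Finset.range 32, (sc i : ℂ) * z ^ i := by linear_combination h
    rw [← norm_pow, this, norm_neg]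
    refine (norm_sum_le _ _).trans (Finset.sum_le_sum fun i _ => ?_)
    rw [norm_mul, norm_pow, Complex.norm_intCast, Nat.cast_natAbs, Int.cast_abs]
  have h2 : ∑ i ∈ Finset.range 32, ((sc i).natAbs : ℝ) * ‖z‖ ^ i ≤
      (∑ i ∈ Finset.range 32, ((sc i).natAbs : ℝ) * 16 ^ i) * t ^ 32 := by
    rw [Finset.sum_mul]
    refine Finset.sum_le_sum fun i hi => ?_
    rw [hz, mul_pow, mul_assoc]
    have := pow_le_pow_right₀ ht1 (Finset.mem_range.1 hi).le
    gcongr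
  have h3 : (∑ i ∈ Finset.range 32, ((sc i).natAbs : ℝ) * 16 ^ i) < 16 ^ 32 := by
    exact_mod_cast bnd1
  have h4 : (∑ i ∈ Finset.range 32, ((sc i).natAbs : ℝ) * 16 ^ i) * t ^ 32 < 16 ^ 32 * t ^ 32 :=
    mul_lt_mul_of_pos_right h3 (by positivity)
  rw [hz, mul_pow] at h1
  rw [hz] at h2
  linarith

theorem deriv_norm (z : ℂ) (h : ev SZ z = 0) : ‖ev (derivative SZ) z‖ ≤ 2 ^ 130 := by
  have hz := root_norm z h
  rw [ev_dsum]
  refine (norm_sum_le _ _).trans ?_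
  have h3 : (∑ i ∈ Finset.range 33, ((sc i).natAbs : ℝ) * (i * 16 ^ (i - 1))) ≤ 2 ^ 130 := by
    exact_mod_cast bnd2
  refine (Finset.sum_le_sum fun i _ => ?_).trans h3
  rw [norm_mul, norm_mul, norm_pow, Complex.norm_intCast, Nat.cast_natAbs, Int.cast_abs,
    Complex.norm_natCast]
  gcongr

theorem NN_norm (x y z : ℂ) (hx : ‖x‖ ≤ 16) (hy : ‖y‖ ≤ 16) (hz : ‖z‖ ≤ 16) :
    ‖NN x y z‖ ≤ 32 ^ 3 * 2 ^ 371 := by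
  have key : ∀ (f : ℕ → ℂ) (B : ℝ), (∀ i < 32, ‖f i‖ ≤ B) → ‖∑ i ∈ Finset.range 32, f i‖ ≤ 32 * B := by
    intro f B h
    refine (norm_sum_le_of_le _ (fun i hi => h i (Finset.mem_range.1 hi))).trans ?_
    simp
  rw [NN, show (32 ^ 3 * 2 ^ 371 : ℝ) = 32 * (32 * (32 * 2 ^ 371)) by ring]
  refine key _ _ fun i hi => key _ _ fun j hj => key _ _ fun k hk => ?_
  have h1 := T6.choose_spec.1 i hi j hj k hk
  have h2 : |(nn i j k : ℝ)| * 16 ^ (i + j + k) ≤ 2 ^ 371 := by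
    have := (Int.cast_le (R := ℝ)).2 h1
    push_cast at this
    exact this
  rw [norm_mul, norm_mul, norm_mul, norm_pow, norm_pow, norm_pow, Complex.norm_intCast]
  refine le_trans ?_ h2
  rw [pow_add, pow_add]
  gcongr

theorem w_small (x y z : ℂ) (hx : ev SZ x = 0) (hy : ev SZ y = 0) (hz : ev SZ z = 0) :
    ‖NN x y z ^ 2 + 31 * DD x y z ^ 2‖ < cP := by
  have h1 := NN_norm x y z (root_norm x hx) (root_norm y hy) (root_norm z hz)
  have h2 : ‖DD x y z‖ ≤ (2 ^ 130) ^ 3 := by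
    rw [DD, norm_mul, norm_mul, pow_succ, pow_two]
    have := deriv_norm x hx
    have := deriv_norm y hy
    have := deriv_norm z hz
    gcongr
  have h3 : ((32 ^ 3 * 2 ^ 371) ^ 2 + 31 * ((2 ^ 130) ^ 3) ^ 2 : ℝ) < cP := by
    exact_mod_cast bnd3
  refine lt_of_le_of_lt ((norm_add_le _ _).trans ?_) h3
  rw [norm_mul, norm_pow, norm_pow, Complex.norm_ofNat]
  gcongr

open NumberField

theorem w_van {K : Type} [Field K] [NumberField K] (x y z : 𝓞 K) (hx : ev SZ x = 0)
    (hy : ev SZ y = 0) (hz : ev SZ z = 0) (h1 : x ≠ y) (h2 : y ≠ z) (h3 : x ≠ z) :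
    NN x y z ^ 2 + 31 * DD x y z ^ 2 = 0 := by
  set w := NN x y z ^ 2 + 31 * DD x y z ^ 2 with hw
  let I : Ideal (𝓞 K) := Ideal.span {(cP : 𝓞 K)}
  let f := Ideal.Quotient.mk I
  have map_w : ∀ (T : Type) [CommRing T] (f : 𝓞 K →+* T), f w =
      NN (f x) (f y) (f z) ^ 2 + 31 * DD (f x) (f y) (f z) ^ 2 := by
    intro T _ f; rw [hw, map_add, map_mul, map_pow, map_pow, map_NN, map_DD, map_ofNat]
  have hP : (cP : 𝓞 K ⧸ I) = 0 := by
    have : f (cP : 𝓞 K) = 0 := by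
      rw [Ideal.Quotient.eq_zero_iff_mem]; exact Ideal.subset_span rfl
    simpa using this
  have hr : ∀ a, ev SZ a = 0 → ev SZ (f a) = 0 := by
    intro a ha; rw [← map_ev, ha, map_zero]
  have hun : ∀ a b : 𝓞 K, ev SZ a = 0 → ev SZ b = 0 → a ≠ b → IsUnit (f a - f b) := by
    intro a b ha hb hab
    obtain ⟨u, hu⟩ := deriv_unit hP (f a) (hr a ha)
    obtain ⟨v, hv⟩ := sub_dvd_deriv a b ha hb hab
    refine IsUnit.of_mul_eq_one (f v * u) ?_
    rw [← hu, ← map_ev, hv, map_mul, map_sub, mul_assoc]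
  have h0 : f w = 0 := by
    rw [map_w]
    exact w_zero hP _ _ _ (hr x hx) (hr y hy) (hr z hz) (hun x y hx hy h1) (hun y z hy hz h2)
      (hun x z hx hz h3)
  rw [Ideal.Quotient.eq_zero_iff_mem, Ideal.mem_span_singleton] at h0
  obtain ⟨v, hv⟩ := h0
  suffices v = 0 by rw [hv, this, mul_zero]
  by_contra hne
  obtain ⟨σ, hσ⟩ := exists_conjugate_one_le_norm hne
  let s : 𝓞 K →+* ℂ := σ.comp (algebraMap (𝓞 K) K)
  have hs : ∀ a, ev SZ a = 0 → ev SZ (s a) = 0 := by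
    intro a ha; rw [← map_ev, ha, map_zero]
  have h5 := w_small (s x) (s y) (s z) (hs x hx) (hs y hy) (hs z hz)
  rw [← map_w ℂ s, hv, map_mul, norm_mul, map_natCast, Complex.norm_natCast] at h5
  have h6 : (1 : ℝ) ≤ ‖s v‖ := hσ
  have : (0 : ℝ) ≤ cP := by positivity
  nlinarith

theorem exists_over (K : Type) [Field K] [NumberField K] (q : ℕ) (hq : q.Prime) :
    ∃ Q : Ideal (𝓞 K), Q.IsMaximal ∧ Q.LiesOver (Ideal.span {(q : ℤ)}) ∧ (q : 𝓞 K ⧸ Q) = 0 := by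
  have hp : (Ideal.span {(q : ℤ)}).IsMaximal :=
    PrincipalIdealRing.isMaximal_of_irreducible (Nat.prime_iff_prime_int.1 hq).irreducible
  obtain ⟨Q, h1, h2⟩ := Ideal.exists_maximal_ideal_liesOver_of_isIntegral
    (Ideal.span {(q : ℤ)}) (S := 𝓞 K)
  refine ⟨Q, h1, h2, ?_⟩
  have : (q : ℤ) ∈ Q.under ℤ := by
    rw [← h2.over]; exact Ideal.subset_span rfl
  have h3 : ((q : ℤ) : 𝓞 K) ∈ Q := by simpa using this
  have := Ideal.Quotient.eq_zero_iff_mem.2 h3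
  simpa using this


open NumberField

theorem lift_ms {A B : Type} (f : A → B) (s : Multiset B) (h : ∀ x ∈ s, ∃ y, f y = x) :
    ∃ t : Multiset A, t.map f = s := by
  induction s using Multiset.induction with
  | empty => exact ⟨0, rfl⟩
  | cons a s ih =>
    obtain ⟨t, ht⟩ := ih fun x hx => h x (by simp [hx])
    obtain ⟨y, hy⟩ := h a (by simp)
    exact ⟨y ::ₘ t, by simp [ht, hy]⟩

theorem SZ_prod (K : Type) [Field K] [NumberField K]
    (hs : (SZ.map (Int.castRingHom K)).Splits) :
    ∃ t : Multiset (𝓞 K), (∀ x ∈ t, ev SZ x = 0) ∧ ∀ (T : Type) [CommRing T] (f : 𝓞 K →+* T) (y : T),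
      ev SZ y = (t.map fun x => y - f x).prod := by
  have hm : (SZ.map (Int.castRingHom K)).Monic := SZ_monic.map _
  obtain ⟨t, ht⟩ := lift_ms (algebraMap (𝓞 K) K) (SZ.map (Int.castRingHom K)).roots (by
    intro x hx
    have hx' : SZ.eval₂ (Int.castRingHom K) x = 0 := by
      rw [← eval_map]; exact isRoot_of_mem_roots hx
    have : IsIntegral ℤ x := ⟨SZ, SZ_monic, hx'⟩
    exact ⟨⟨x, this⟩, rfl⟩)
  have h1 := hs.eq_prod_roots_of_monic hm
  have h2 : SZ.map (Int.castRingHom (𝓞 K)) = (t.map fun a => X - C a).prod := by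
    apply Polynomial.map_injective (algebraMap (𝓞 K) K) RingOfIntegers.coe_injective
    rw [Polynomial.map_map, RingHom.ext_int ((algebraMap (𝓞 K) K).comp (Int.castRingHom (𝓞 K)))
      (Int.castRingHom K), h1, ← ht, Polynomial.map_multiset_prod, Multiset.map_map,
      Multiset.map_map]
    simp
  refine ⟨t, ?_, ?_⟩
  · intro x hx
    rw [ev, ← eval_map, h2, eval_multiset_prod, Multiset.map_map]
    apply Multiset.prod_eq_zero
    rw [Multiset.mem_map]
    exact ⟨x, hx, by simp⟩
  · intro T _ f y
    rw [ev, ← RingHom.ext_int (f.comp (Int.castRingHom (𝓞 K))) (Int.castRingHom T), ← eval_map,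
      ← Polynomial.map_map, h2, Polynomial.map_multiset_prod, eval_multiset_prod, Multiset.map_map,
      Multiset.map_map]
    simp

theorem cP_eq : cP = 348553 ^ 43 := by unfold cP; rfl

theorem aa_ne {k : Type} [Field k] (hP : (cP : k) = 0) (i l : ℕ) (hi : i < 32) (hl : l < 32)
    (h : (aa i : k) = aa l) : i = l := by
  by_contra hne
  have h2 := T2 hP i l hi hl
  have h3 := T2 hP i i hi hi
  rw [if_neg hne] at h2
  rw [if_pos rfl] at h3
  rw [h] at h3
  have h4 := T2 hP l l hl hl
  rw [if_pos rfl] at h4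
  have h5 : (dd l : k) ≠ 0 := fun h => by simp [h] at h4
  have h6 : evA (Lc i) (aa l : k) = 0 := by
    rcases mul_eq_zero.1 h2 with h | h
    · exact h
    · exact absurd h h5
  simp [h6] at h3

theorem exists_r (K : Type) [Field K] [NumberField K]
    (hs : (SZ.map (Int.castRingHom K)).Splits) (k : Type) [Field k] (φ : 𝓞 K →+* k)
    (hP : (cP : k) = 0) :
    ∃ r : Fin 32 → 𝓞 K, Function.Injective r ∧ (∀ i, ev SZ (r i) = 0) ∧
      (∀ x, ev SZ x = 0 → ∃ i, r i = x) ∧ ∀ i, φ (r i) = aa i := by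
  obtain ⟨t, ht, hf⟩ := SZ_prod K hs
  have key : ∀ i : Fin 32, ∃ x, ev SZ x = 0 ∧ φ x = aa i := by
    intro i
    have h := hf k φ (aa i)
    rw [ev, T1 hP i i.2, sub_self, zero_mul, eq_comm, Multiset.prod_eq_zero_iff,
      Multiset.mem_map] at h
    obtain ⟨x, hx, h0⟩ := h
    exact ⟨x, ht x hx, (sub_eq_zero.1 h0).symm⟩
  choose r h1 h2 using key
  have hinj : Function.Injective r := by
    intro i j hij
    apply Fin.ext
    apply aa_ne hP i j i.2 j.2
    rw [← h2, ← h2, hij]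
  refine ⟨r, hinj, h1, ?_, h2⟩
  intro x hx
  classical
  by_contra hne
  push Not at hne
  have hm : (SZ.map (Int.castRingHom (𝓞 K))).Monic := SZ_monic.map _
  have hsub : insert x (Finset.univ.image r) ⊆ (SZ.map (Int.castRingHom (𝓞 K))).roots.toFinset := by
    intro y hy
    rw [Multiset.mem_toFinset, mem_roots hm.ne_zero, IsRoot, eval_map]
    rw [Finset.mem_insert, Finset.mem_image] at hy
    rcases hy with rfl | ⟨i, -, rfl⟩
    · exact hx
    · exact h1 i
  have h3 := Finset.card_le_card hsub
  rw [Finset.card_insert_of_notMem (by simpa using hne), Finset.card_image_of_injective _ hinj] at h3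
  have h4 := Multiset.toFinset_card_le (SZ.map (Int.castRingHom (𝓞 K))).roots
  have h5 := card_roots' (SZ.map (Int.castRingHom (𝓞 K)))
  rw [SZ_monic.natDegree_map, SZ_natDegree] at h5
  simp at h3
  omega

theorem deriv_ne {k : Type} [Field k] (hP : (cP : k) = 0) (l : ℕ) (hl : l < 32) :
    ev (derivative SZ) (aa l : k) ≠ 0 := by
  rw [ev, T2d hP l hl]
  have h4 := T2 hP l l hl hl
  rw [if_pos rfl] at h4
  intro h
  simp [h] at h4

theorem char_ne {k : Type} [Field k] (hP : (cP : k) = 0) (n : ℕ) (hn : Nat.Coprime n cP) : (n : k) ≠ 0 := by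
  intro h
  have h1 := Nat.isCoprime_iff_coprime.2 hn
  obtain ⟨a, b, hab⟩ := h1
  have := congrArg (fun z : ℤ => (z : k)) hab
  simp [h, hP] at this

section
variable {K : Type} [Field K] [NumberField K] {k : Type} [Field k] (φ : 𝓞 K →+* k)
    (hP : (cP : k) = 0) (r : Fin 32 → 𝓞 K) (hr : Function.Injective r) (h0 : ∀ i, ev SZ (r i) = 0)
    (hφ : ∀ i, φ (r i) = aa i)
include hP hφ

theorem DD_ne (a b c : Fin 32) : φ (DD (r a) (r b) (r c)) ≠ 0 := by
  rw [map_DD, hφ, hφ, hφ, DD]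
  exact mul_ne_zero (mul_ne_zero (deriv_ne hP a a.2) (deriv_ne hP b b.2)) (deriv_ne hP c c.2)

theorem NN_φ (a b c : Fin 32) : φ (NN (r a) (r b) (r c)) =
    cRho * tau a b c * φ (DD (r a) (r b) (r c)) := by
  rw [map_NN, map_DD, hφ, hφ, hφ, NN_aa hP a b c a.2 b.2 c.2]

theorem rho_ne : (cRho : k) ≠ 0 := by
  intro h
  have := T5 hP
  rw [h, mul_zero] at this
  have h31 := char_ne hP 31 (by rw [cP_eq]; norm_num)
  apply h31
  push_cast
  linear_combination this

include hr h0
theorem sign_rel (a b c a' b' c' : Fin 32) (h1 : a ≠ b) (h2 : b ≠ c) (h3 : a ≠ c)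
    (h1' : a' ≠ b') (h2' : b' ≠ c') (h3' : a' ≠ c') :
    NN (r a) (r b) (r c) * DD (r a') (r b') (r c') =
      ((tau a b c * tau a' b' c' : ℤ) : 𝓞 K) * (NN (r a') (r b') (r c') * DD (r a) (r b) (r c)) := by
  have w1 := w_van (r a) (r b) (r c) (h0 a) (h0 b) (h0 c) (hr.ne h1) (hr.ne h2) (hr.ne h3)
  have w2 := w_van (r a') (r b') (r c') (h0 a') (h0 b') (h0 c') (hr.ne h1') (hr.ne h2') (hr.ne h3')
  have t1 := tau_cases a b c a.2 b.2 c.2 (Fin.val_ne_of_ne h1) (Fin.val_ne_of_ne h2) (Fin.val_ne_of_ne h3)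
  have t2 := tau_cases a' b' c' a'.2 b'.2 c'.2 (Fin.val_ne_of_ne h1') (Fin.val_ne_of_ne h2') (Fin.val_ne_of_ne h3')
  have e1 := NN_φ φ hP r hφ a b c
  have e2 := NN_φ φ hP r hφ a' b' c'
  have d1 := DD_ne φ hP r hφ a b c
  have d2 := DD_ne φ hP r hφ a' b' c'
  have hρ := rho_ne φ hP r hφ
  set N := NN (r a) (r b) (r c)
  set N' := NN (r a') (r b') (r c')
  set D := DD (r a) (r b) (r c)
  set D' := DD (r a') (r b') (r c')
  have h2 : (2 : k) ≠ 0 := by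
    have := char_ne hP 2 (by rw [cP_eq]; norm_num)
    exact_mod_cast this
  have hsq : (N * D' - N' * D) * (N * D' + N' * D) = 0 := by
    linear_combination D' ^ 2 * w1 - D ^ 2 * w2
  have hbig : 2 * ((cRho : k) * φ D * φ D') ≠ 0 := by
    exact mul_ne_zero h2 (mul_ne_zero (mul_ne_zero hρ d1) d2)
  have hT : tau a b c * tau a' b' c' = 1 ∨ tau a b c * tau a' b' c' = -1 := by
    rcases t1 with t1 | t1 <;> rcases t2 with t2 | t2 <;> simp [t1, t2]
  have hT2 : (tau a b c : k) = (tau a b c * tau a' b' c' : ℤ) * tau a' b' c' := by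
    rcases t2 with t2 | t2 <;> simp [t2]
  have hT3 : (tau a' b' c' : k) ≠ 0 := by
    rcases t2 with t2 | t2 <;> simp [t2]
  rcases mul_eq_zero.1 hsq with h | h
  · rcases hT with hT | hT
    · rw [hT]; push_cast; linear_combination h
    · exfalso
      have h := congrArg φ h
      rw [map_sub, map_mul, map_mul, e1, e2, map_zero, hT2, hT] at h
      apply mul_ne_zero hbig hT3
      push_cast at h
      linear_combination -h
  · rcases hT with hT | hT
    · exfalso
      have h := congrArg φ h
      rw [map_add, map_mul, map_mul, e1, e2, map_zero, hT2, hT] at h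
      apply mul_ne_zero hbig hT3
      push_cast at h
      linear_combination h
    · rw [hT]; push_cast; linear_combination h

theorem tau_rel (g : 𝓞 K →+* 𝓞 K) (ρ : Fin 32 → Fin 32) (hρ : ∀ i, g (r i) = r (ρ i))
    (hi : Function.Injective ρ) (a b c a' b' c' : Fin 32) (h1 : a ≠ b) (h2 : b ≠ c) (h3 : a ≠ c)
    (h1' : a' ≠ b') (h2' : b' ≠ c') (h3' : a' ≠ c') :
    tau (ρ a) (ρ b) (ρ c) * tau (ρ a') (ρ b') (ρ c') = tau a b c * tau a' b' c' := by
  have s1 := congrArg g (sign_rel φ hP r hr h0 hφ a b c a' b' c' h1 h2 h3 h1' h2' h3')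
  have s2 := sign_rel φ hP r hr h0 hφ (ρ a) (ρ b) (ρ c) (ρ a') (ρ b') (ρ c') (hi.ne h1) (hi.ne h2)
    (hi.ne h3) (hi.ne h1') (hi.ne h2') (hi.ne h3')
  rw [map_mul, map_mul, map_mul, map_NN, map_NN, map_DD, map_DD, map_intCast] at s1
  simp only [hρ] at s1
  rw [s2] at s1
  have hne : NN (r (ρ a')) (r (ρ b')) (r (ρ c')) * DD (r (ρ a)) (r (ρ b)) (r (ρ c)) ≠ 0 := by
    intro h
    have h := congrArg φ h
    rw [map_mul, map_zero, NN_φ φ hP r hφ] at h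
    have t2 := tau_cases (ρ a') (ρ b') (ρ c') (ρ a').2 (ρ b').2 (ρ c').2 (Fin.val_ne_of_ne (hi.ne h1'))
      (Fin.val_ne_of_ne (hi.ne h2')) (Fin.val_ne_of_ne (hi.ne h3'))
    have hT3 : (tau (ρ a') (ρ b') (ρ c') : k) ≠ 0 := by
      rcases t2 with t2 | t2 <;> simp [t2]
    exact mul_ne_zero (mul_ne_zero (mul_ne_zero (rho_ne φ hP r hφ) hT3) (DD_ne φ hP r hφ _ _ _))
      (DD_ne φ hP r hφ _ _ _) h
  have := mul_right_cancel₀ hne s1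
  exact_mod_cast this
end


def cU109 : List ℕ := [82, 19, 95, 21, 37, 103, 13, 78, 92, 25, 96, 25, 24, 56, 61, 87, 75, 43, 67, 101, 43, 103, 91, 86, 7, 11, 96, 51, 17, 104, 44, 50]
def cU17 : List ℕ := [0, 10, 15, 15, 12, 6, 8, 8, 3, 8, 4, 7, 14, 10, 13, 2, 10, 2, 8, 6, 11, 9, 11, 1, 2, 4, 15, 4, 10, 11, 8, 8]

def smL (q : ℕ) : List ℕ := (List.range 32).map fun i => ((-(sc i)) % (q : ℤ)).toNat
def dsL (q : ℕ) : List ℕ := (List.range 32).map fun i => ((sc (i + 1) * (i + 1 : ℕ)) % (q : ℤ)).toNat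

/-- multiplication by `x` -/
def mulX (q : ℕ) (sm l : List ℕ) : List ℕ := axpy q (l.getD 31 0) sm (0 :: l)
def itK {α : Type} (q : ℕ) (sm : List ℕ) (n : ℕ) : List ℕ → (List ℕ → α) → α :=
  Nat.rec (fun l k => k l) (fun _ ih l k => forceN (l.getD 31 0) fun t =>
    axpyK q t sm (0 :: l) fun l' => ih l' k) n
theorem itK_eq {α : Type} (q : ℕ) (sm : List ℕ) (n : ℕ) (l : List ℕ) (k : List ℕ → α) :
    itK q sm n l k = k ((mulX q sm)^[n] l) := by
  induction n generalizing l with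
  | zero => rfl
  | succ n ih =>
    change forceN (l.getD 31 0) (fun t => axpyK q t sm (0 :: l) (fun l' => itK q sm n l' k)) = _
    rw [forceN_eq, axpyK_eq, ih]; rfl

/-- iterates of a map -/
def mlist (f : List ℕ → List ℕ) : ℕ → List ℕ → List (List ℕ)
  | 0, _ => []
  | n + 1, l => l :: mlist f n (f l)
def mlistK {α : Type} (f : List ℕ → (List ℕ → α) → α) (n : ℕ) :
    List ℕ → (List (List ℕ) → α) → α :=
  Nat.rec (fun _ k => k []) (fun _ ih l k => f l fun l' => ih l' fun r => k (l :: r)) n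
theorem mlistK_eq {α : Type} (fK : List ℕ → (List ℕ → α) → α) (f : List ℕ → List ℕ)
    (hf : ∀ l k, fK l k = k (f l)) (n : ℕ) (l : List ℕ)
    (k : List (List ℕ) → α) : mlistK fK n l k = k (mlist f n l) := by
  induction n generalizing l k with
  | zero => rfl
  | succ n ih =>
    change fK l (fun l' => mlistK fK n l' fun r => k (l :: r)) = _
    rw [hf, ih]; rfl

def frK {α : Type} (q : ℕ) (M : List (List ℕ)) (n : ℕ) : List ℕ → (List ℕ → α) → α :=
  Nat.rec (fun l k => k l) (fun _ ih l k => lcK q l M fun l' => ih l' k) n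
theorem frK_eq {α : Type} (q : ℕ) (M : List (List ℕ)) (n : ℕ) (l : List ℕ) (k : List ℕ → α) :
    frK q M n l k = k ((fun l => lc q l M)^[n] l) := by
  induction n generalizing l with
  | zero => rfl
  | succ n ih =>
    change lcK q l M (fun l' => frK q M n l' k) = _
    rw [lcK_eq, ih]; rfl

def oneL : List ℕ := 1 :: List.replicate 31 0
def xL : List ℕ := 0 :: 1 :: List.replicate 30 0

def TL (q : ℕ) : List (List ℕ) := mlist (mulX q (smL q)) 32 ((mulX q (smL q))^[q] oneL)
def ML (q : ℕ) : List (List ℕ) := mlist (fun l => lc q l (TL q)) 32 oneL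
def FL (q m : ℕ) : List ℕ := (fun l => lc q l (ML q))^[m] xL

def runK {α : Type} (q : ℕ) (k : List (List ℕ) → α) : α :=
  forceL (smL q) fun sm => itK q sm q oneL fun l => mlistK (itK q sm 1) 32 l fun T =>
    mlistK (fun l => lcK q l T) 32 oneL k
theorem runK_eq {α : Type} (q : ℕ) (k : List (List ℕ) → α) : runK q k = k (ML q) := by
  unfold runK
  rw [forceL_eq, itK_eq, mlistK_eq _ (mulX q (smL q)) (fun l k => itK_eq q _ 1 l k)]
  exact mlistK_eq _ (fun l => lc q l (TL q)) (fun l k => lcK_eq q l _ k) 32 oneL k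

theorem F109 : (runK 109 fun M => frK 109 M 1 xL fun r =>
    bif Nat.beq (Nat.mod (r.getD 31 0) 109) 0 then false
    else frK 109 M 30 r fun r => decide (r = xL)) = true := by
  decide +kernel
theorem F17 : (runK 17 fun M => frK 17 M 6 xL fun r =>
    bif Nat.beq (Nat.mod (r.getD 30 0) 17) 0 then false
    else frK 17 M 4 r fun r => bif Nat.beq (Nat.mod (r.getD 30 0) 17) 0 then false
    else frK 17 M 5 r fun r => Bool.not (Nat.beq (Nat.mod (r.getD 30 0) 17) 0)) = true := by
  decide +kernel

def sepK (q : ℕ) (U : List ℕ) : Bool :=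
  forceL (smL q) fun sm => forceL (dsL q) fun d => mlistK (itK q sm 1) 32 d fun M =>
    lcK q U M fun r => decide (r = oneL)
theorem sep109 : sepK 109 cU109 = true := by decide +kernel
theorem sep17 : sepK 17 cU17 = true := by decide +kernel


theorem oneL_length : oneL.length = 32 := rfl
theorem xL_length : xL.length = 32 := rfl
theorem smL_length (q : ℕ) : (smL q).length = 32 := by simp [smL]
theorem dsL_length (q : ℕ) : (dsL q).length = 32 := by simp [dsL]

theorem axpy_top {R : Type} [CommRing R] {P : ℕ} (hP : (P : R) = 0) (c : ℕ) (f g : List ℕ)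
    (h : g.length = f.length + 1) (x : R) :
    evA (axpy P c f g) x + g.getD f.length 0 * x ^ f.length = c * evA f x + evA g x := by
  induction f generalizing g with
  | nil =>
    match g, h with
    | [a], _ => simp [axpy, evA_nil, evA_cons]
  | cons d f ih =>
    match g, h with
    | b :: g, h =>
      have h1 := ih g (by simpa using h)
      have : axpy P c (d :: f) (b :: g) = ((c * d + b) % P) :: axpy P c f g := rfl
      rw [this, evA_cons, cast_mod hP, evA_cons, evA_cons, List.length_cons, List.getD_cons_succ]
      push_cast
      linear_combination x * h1

theorem mulX_length (q : ℕ) (l : List ℕ) : (mulX q (smL q) l).length = 32 := by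
  rw [mulX, axpy_length, smL_length]

section
variable {k : Type} [CommRing k] {q : ℕ} (hq : (q : k) = 0) (hq0 : 0 < q) (y : k) (hy : ev SZ y = 0)
include hq hq0

theorem evA_dsL : evA (dsL q) y = ev (derivative SZ) y := by
  rw [evA_sum _ _ 32 (dsL_length q).le, ev_dsum, Finset.sum_range_succ' _ 32]
  simp only [Nat.cast_zero, zero_mul, mul_zero, add_zero]
  refine Finset.sum_congr rfl fun i hi => ?_
  rw [dsL, getD_range_map _ _ _ _ (Finset.mem_range.1 hi), cast_modZ hq hq0]
  push_cast
  simp [mul_assoc]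

include hy
theorem evA_smL : evA (smL q) y = y ^ 32 := by
  rw [ev_sum] at hy
  have : y ^ 32 = -∑ i ∈ Finset.range 32, (sc i : k) * y ^ i := by linear_combination hy
  rw [this, evA_sum _ _ 32 (smL_length q).le, ← Finset.sum_neg_distrib]
  refine Finset.sum_congr rfl fun i hi => ?_
  rw [smL, getD_range_map _ _ _ _ (Finset.mem_range.1 hi), cast_modZ hq hq0]
  simp

theorem evA_mulX (l : List ℕ) (hl : l.length = 32) : evA (mulX q (smL q) l) y = y * evA l y := by
  have h := axpy_top hq (l.getD 31 0) (smL q) (0 :: l) (by rw [smL_length]; simp [hl]) y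
  rw [smL_length, evA_smL hq hq0 y hy, evA_cons] at h
  have h2 : (0 :: l).getD 32 0 = l.getD 31 0 := rfl
  rw [h2] at h
  rw [mulX]
  push_cast at h
  linear_combination h

theorem evA_it (n : ℕ) (l : List ℕ) (hl : l.length = 32) :
    ((mulX q (smL q))^[n] l).length = 32 ∧ evA ((mulX q (smL q))^[n] l) y = y ^ n * evA l y := by
  induction n generalizing l with
  | zero => simp [hl]
  | succ n ih =>
    obtain ⟨h1, h2⟩ := ih (mulX q (smL q) l) (mulX_length q l)
    rw [Function.iterate_succ_apply]
    refine ⟨h1, ?_⟩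
    rw [h2, evA_mulX hq hq0 y hy l hl]; ring
end

theorem mlist_spec {k : Type} [CommRing k] (y c : k) (f : List ℕ → List ℕ)
    (hf : ∀ l, l.length = 32 → (f l).length = 32 ∧ evA (f l) y = c * evA l y) (n : ℕ) (l : List ℕ)
    (hl : l.length = 32) : (mlist f n l).length = n ∧ (∀ u ∈ mlist f n l, u.length = 32) ∧
    ∀ i < n, evA ((mlist f n l).getD i []) y = c ^ i * evA l y := by
  induction n generalizing l with
  | zero => simp [mlist]
  | succ n ih =>
    obtain ⟨h1, h2⟩ := hf l hl
    obtain ⟨h3, h4, h5⟩ := ih (f l) h1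
    refine ⟨by simp [mlist, h3], ?_, ?_⟩
    · intro u hu
      simp only [mlist, List.mem_cons] at hu
      rcases hu with rfl | hu
      · exact hl
      · exact h4 u hu
    · intro i hi
      cases i with
      | zero => simp [mlist]
      | succ i =>
        simp only [mlist, List.getD_cons_succ]
        rw [h5 i (by omega), h2]; ring

theorem lc_length (P : ℕ) (c : List ℕ) (M : List (List ℕ)) (hc : c.length = 32) (hM : M.length = 32)
    (h : ∀ u ∈ M, u.length = 32) : (lc P c M).length = 32 := by
  match c, M, hc, hM, h with
  | x :: c, u :: M, _, _, h =>
    have : lc P (x :: c) (u :: M) = axpy P x u (lc P c M) := rfl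
    rw [this, axpy_length]; exact h u (by simp)

section
variable {k : Type} [CommRing k] {q : ℕ} (hq : (q : k) = 0) (hq0 : 0 < q) (y : k) (hy : ev SZ y = 0)
include hq
theorem lc_spec (c : k) (y' : k) (M : List (List ℕ)) (hM : M.length = 32) (h : ∀ u ∈ M, u.length = 32)
    (h2 : ∀ i < 32, evA (M.getD i []) y = y' ^ i * c) (l : List ℕ) (hl : l.length = 32) :
    (lc q l M).length = 32 ∧ evA (lc q l M) y = c * evA l y' := by
  refine ⟨lc_length q l M hl hM h, ?_⟩
  rw [(evA_lc hq l M 32 h (by rw [hl, hM]) y).1, evA_sum l _ 32 hl.le, Finset.mul_sum, hl]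
  refine Finset.sum_congr rfl fun i hi => ?_
  rw [h2 i (Finset.mem_range.1 hi)]; ring

include hq0 hy
theorem TL_spec : (TL q).length = 32 ∧ (∀ u ∈ TL q, u.length = 32) ∧
    ∀ i < 32, evA ((TL q).getD i []) y = y ^ i * y ^ q := by
  obtain ⟨a1, a2⟩ := evA_it hq hq0 y hy q oneL rfl
  have := mlist_spec y y (mulX q (smL q))
    (fun l hl => ⟨mulX_length q l, evA_mulX hq hq0 y hy l hl⟩) 32 _ a1
  rw [a2] at this
  have h1 : evA oneL y = 1 := by simp [evA, oneL, List.replicate]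
  rw [h1, mul_one] at this
  exact this

theorem ML_spec : (ML q).length = 32 ∧ (∀ u ∈ ML q, u.length = 32) ∧
    ∀ i < 32, evA ((ML q).getD i []) y = (y ^ q) ^ i * 1 := by
  obtain ⟨a1, a2, a3⟩ := TL_spec hq hq0 y hy
  have := mlist_spec y (y ^ q) (fun l => lc q l (TL q))
    (fun l hl => lc_spec hq y (y ^ q) y _ a1 a2 a3 l hl) 32 oneL rfl
  have h1 : evA oneL y = 1 := by simp [evA, oneL, List.replicate]
  rw [h1] at this
  exact this

theorem sep_spec (U : List ℕ) (hU : U.length = 32) (h : sepK q U = true) :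
    ev (derivative SZ) y * evA U y = 1 := by
  unfold sepK at h
  rw [forceL_eq, forceL_eq, mlistK_eq _ (mulX q (smL q)) (fun l k => itK_eq q _ 1 l k), lcK_eq] at h
  have h := of_decide_eq_true h
  obtain ⟨a1, a2, a3⟩ := mlist_spec y y (mulX q (smL q))
    (fun l hl => ⟨mulX_length q l, evA_mulX hq hq0 y hy l hl⟩) 32 (dsL q) (dsL_length q)
  have h2 := (lc_spec hq y _ y _ a1 a2 a3 U hU).2
  rw [h, evA_dsL hq hq0] at h2
  rw [← h2]
  simp [evA, oneL, List.replicate]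
end

theorem frob_root {k : Type} [Field k] {q : ℕ} [Fact q.Prime] [CharP k q] (y : k)
    (hy : ev SZ y = 0) : ev SZ (y ^ q) = 0 := by
  have := map_ev (frobenius k q) SZ y
  rw [hy, map_zero] at this
  exact this.symm

theorem FL_spec {k : Type} [Field k] {q : ℕ} [Fact q.Prime] [CharP k q] (m : ℕ) :
    (FL q m).length = 32 ∧ ∀ y : k, ev SZ y = 0 → y ^ (q ^ m) = evA (FL q m) y := by
  have hq : (q : k) = 0 := CharP.cast_eq_zero k q
  have hq0 : 0 < q := (Fact.out : q.Prime).pos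
  induction m with
  | zero => exact ⟨rfl, fun y _ => by simp [FL, evA, xL, List.replicate]⟩
  | succ m ih =>
    obtain ⟨h1, h2⟩ := ih
    have e : FL q (m + 1) = lc q (FL q m) (ML q) := by
      rw [FL, Function.iterate_succ_apply']; rfl
    rw [e]
    refine ⟨?_, ?_⟩
    · have hML : (ML q).length = 32 ∧ ∀ u ∈ ML q, u.length = 32 := by
        have hT : (TL q).length = 32 ∧ ∀ u ∈ TL q, u.length = 32 := by
          have hl : ((mulX q (smL q))^[q] oneL).length = 32 := by
            obtain ⟨n, hn⟩ : ∃ n, q = n + 1 := ⟨q - 1, by omega⟩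
            conv_lhs => rw [show (mulX q (smL q))^[q] oneL = (mulX q (smL q))^[n+1] oneL by rw [← hn]]
            rw [Function.iterate_succ_apply', mulX_length]
          have := mlist_spec (0 : ZMod 1) 0 (mulX q (smL q))
            (fun l hl => ⟨mulX_length q l, Subsingleton.elim _ _⟩) 32 _ hl
          exact ⟨this.1, this.2.1⟩
        have := mlist_spec (0 : ZMod 1) 0 (fun l => lc q l (TL q))
          (fun l hl => ⟨lc_length q l _ hl hT.1 hT.2, Subsingleton.elim _ _⟩) 32 oneL rfl
        exact ⟨this.1, this.2.1⟩
      exact lc_length q _ _ h1 hML.1 hML.2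
    · intro y hy
      obtain ⟨a1, a2, a3⟩ := ML_spec hq hq0 y hy
      rw [(lc_spec hq y 1 (y ^ q) _ a1 a2 a3 _ h1).2, ← h2 _ (frob_root y hy), one_mul, ← pow_mul,
        pow_succ' q m]


open NumberField

theorem inv_int (K : Type) [Field K] [NumberField K] [IsGalois ℚ K] (b : 𝓞 K)
    (hb : ∀ g : K ≃ₐ[ℚ] K, g • b = b) : ∃ n : ℤ, (n : 𝓞 K) = b := by
  have h1 : (b : K) ∈ (⊥ : IntermediateField ℚ K) := by
    rw [IsGalois.mem_bot_iff_fixed]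
    intro g
    have h := congrArg (algebraMap (𝓞 K) K) (hb g)
    exact h
  obtain ⟨x, hx⟩ := IntermediateField.mem_bot.1 h1
  have h2 : IsIntegral ℤ x := by
    have h3 : IsIntegral ℤ (algebraMap ℚ K x) := by
      rw [hx]; exact b.2
    exact (isIntegral_algebraMap_iff (algebraMap ℚ K).injective).1 h3
  obtain ⟨n, hn⟩ := IsIntegrallyClosed.isIntegral_iff.1 h2
  refine ⟨n, ?_⟩
  apply RingOfIntegers.coe_injective
  have hx' : algebraMap ℚ K x = algebraMap (𝓞 K) K b := hx
  rw [← hx', ← hn]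
  simp

theorem exists_frob (K : Type) [Field K] [NumberField K] [IsGalois ℚ K] (q : ℕ) (hq : q.Prime)
    (Q : Ideal (𝓞 K)) (hQ : Q.IsMaximal) (hQ2 : Q.LiesOver (Ideal.span {(q : ℤ)})) :
    ∃ g : K ≃ₐ[ℚ] K, ∀ x : 𝓞 K, Ideal.Quotient.mk Q (g • x) = Ideal.Quotient.mk Q x ^ q := by
  have hI : Algebra.IsInvariant ℤ (𝓞 K) (K ≃ₐ[ℚ] K) := by
    refine ⟨fun b hb => ?_⟩
    obtain ⟨n, hn⟩ := inv_int K b hb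
    exact ⟨n, by rw [← hn]; simp⟩
  have hne : Q ≠ ⊥ := by
    rintro rfl
    have h := hQ2.over
    have h2 : (q : ℤ) ∈ (⊥ : Ideal (𝓞 K)).under ℤ := by
      rw [← h]; exact Ideal.subset_span rfl
    have h3 : ((q : ℤ) : 𝓞 K) = 0 := by simpa using h2
    have : (q : 𝓞 K) = 0 := by simpa using h3
    exact hq.ne_zero (by exact_mod_cast this)
  have : Finite (𝓞 K ⧸ Q) := Ideal.finiteQuotientOfFreeOfNeBot Q hne
  obtain ⟨g, hg⟩ := IsArithFrobAt.exists_of_isInvariant ℤ (K ≃ₐ[ℚ] K) Q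
  refine ⟨g, fun x => ?_⟩
  have h := AlgHom.IsArithFrobAt.mk_apply hg x
  rw [← hQ2.over, Nat.card_congr (Int.quotientSpanNatEquivZMod q).toEquiv, Nat.card_zmod] at h
  exact h

theorem ev2 (y : ZMod 2) : ev SZ y ≠ 0 := by
  have h2 : ((2 : ℕ) : ZMod 2) = 0 := by decide
  have key : ∀ a : ℕ, (vals 2 a (sN 2)).headD 0 = 1 → ev SZ (a : ZMod 2) ≠ 0 := by
    intro a ha
    rw [ev, aeval_SZ h2 (by norm_num), evA_head h2, ha]; simp
  have h0 := key 0 (by decide +kernel)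
  have h1 := key 1 (by decide +kernel)
  rw [Nat.cast_zero] at h0
  rw [Nat.cast_one] at h1
  have hy : y = 0 ∨ y = 1 := by revert y; decide
  rcases hy with rfl | rfl
  · exact h0
  · exact h1

theorem poly_ne {k : Type} [Field k] {q : ℕ} [CharP k q] (z : Fin 32 → k)
    (hz : Function.Injective z) (l : List ℕ) (hl : l.length = 32)
    (h : ∀ i, evA l (z i) = z i) (j : ℕ) (hj : j < 32) (hj2 : 1 < j) : l.getD j 0 % q = 0 := by
  let p : k[X] := (∑ i ∈ Finset.range 32, C (l.getD i 0 : k) * X ^ i) - X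
  have hdeg : p.natDegree < Fintype.card (Fin 32) := by
    rw [Fintype.card_fin]
    refine lt_of_le_of_lt (natDegree_sub_le _ _) ?_
    rw [max_lt_iff]
    refine ⟨?_, by simp⟩
    refine lt_of_le_of_lt (natDegree_sum_le_of_forall_le (n := 31) _ _ ?_) (by norm_num)
    intro i hi
    refine (natDegree_C_mul_X_pow_le _ _).trans ?_
    have := Finset.mem_range.1 hi
    omega
  have hp : p = 0 := by
    refine eq_zero_of_natDegree_lt_card_of_eval_eq_zero p hz ?_ hdeg
    intro i
    have := h i
    rw [evA_sum l _ 32 hl.le] at this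
    simp only [p, eval_sub, eval_finsetSum, eval_mul, eval_C, eval_pow, eval_X]
    rw [this, sub_self]
  have hc := congrArg (fun p => coeff p j) hp
  simp only [p, coeff_sub, finsetSum_coeff, coeff_C_mul, coeff_X_pow, coeff_zero, coeff_X] at hc
  rw [Finset.sum_eq_single j] at hc
  · rw [if_pos rfl, if_neg (by omega), mul_one, sub_zero] at hc
    exact Nat.mod_eq_zero_of_dvd ((CharP.cast_eq_zero_iff k q _).1 hc)
  · intro b _ hb; rw [if_neg (Ne.symm hb), mul_zero]
  · intro h; exact absurd (Finset.mem_range.2 hj) h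

/-- the Frobenius elements -/
theorem frob_main (K : Type) [Field K] [NumberField K] [IsGalois ℚ K]
    (hs : (SZ.map (Int.castRingHom K)).Splits)
    (r : Fin 32 → 𝓞 K) (hr : Function.Injective r) (h0 : ∀ i, ev SZ (r i) = 0)
    (hall : ∀ x, ev SZ x = 0 → ∃ i, r i = x)
    (q : ℕ) (hq : q.Prime) (U : List ℕ) (hU : U.length = 32) (hsep : sepK q U = true) :
    ∃ g : K ≃ₐ[ℚ] K, (∀ m, FL q m = xL → ∀ i, g ^ m • r i = r i) ∧
      (∀ m j, j < 32 → 1 < j → (FL q m).getD j 0 % q ≠ 0 → ∃ i, g ^ m • r i ≠ r i) ∧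
      ∀ a b : ℕ, (vals q a (sN q)).headD 0 = 0 → (vals q b (sN q)).headD 0 = 0 → a % q ≠ b % q →
        ∃ i j, i ≠ j ∧ g • r i = r i ∧ g • r j = r j := by
  haveI : Fact q.Prime := ⟨hq⟩
  obtain ⟨Q, hQ, hQ2, hQ3⟩ := exists_over K q hq
  obtain ⟨g, hg⟩ := exists_frob K q hq Q hQ hQ2
  letI : Field (𝓞 K ⧸ Q) := Ideal.Quotient.field Q
  haveI : CharP (𝓞 K ⧸ Q) q := (CharP.charP_iff_prime_eq_zero hq).2 hQ3
  set φ := Ideal.Quotient.mk Q with hφ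
  have hroot : ∀ x : 𝓞 K, ev SZ x = 0 → ev SZ (φ x) = 0 := by
    intro x hx; rw [← map_ev, hx, map_zero]
  have hinj : ∀ x y : 𝓞 K, ev SZ x = 0 → ev SZ y = 0 → φ x = φ y → x = y := by
    intro x y hx hy hxy
    by_contra hne
    obtain ⟨v, hv⟩ := sub_dvd_deriv x y hx hy hne
    have h1 := sep_spec hQ3 hq.pos (φ x) (hroot x hx) U hU hsep
    rw [← map_ev, hv, map_mul, map_sub, hxy] at h1
    simp at h1
  have hgr : ∀ (h : K ≃ₐ[ℚ] K) (x : 𝓞 K), ev SZ x = 0 → ev SZ (h • x) = 0 := by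
    intro h x hx
    have := map_ev (MulSemiringAction.toRingHom (K ≃ₐ[ℚ] K) (𝓞 K) h) SZ x
    rw [hx, map_zero] at this
    exact this.symm
  have hpow : ∀ (m : ℕ) (x : 𝓞 K), φ (g ^ m • x) = φ x ^ (q ^ m) := by
    intro m
    induction m with
    | zero => intro x; simp
    | succ m ih =>
      intro x
      rw [pow_succ', mul_smul, hg, ih, ← pow_mul, pow_succ]
  refine ⟨g, ?_, ?_, ?_⟩
  · intro m hm i
    apply hinj _ _ (hgr _ _ (h0 i)) (h0 i)
    rw [hpow, (FL_spec m).2 (φ (r i)) (hroot _ (h0 i)), hm]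
    simp [evA, xL, List.replicate]
  · intro m j hj hj2 hne
    by_contra hc
    push Not at hc
    apply hne
    refine poly_ne (k := 𝓞 K ⧸ Q) (fun i => φ (r i)) ?_ (FL q m) (FL_spec (k := 𝓞 K ⧸ Q) m).1 ?_ j hj hj2
    · intro i j hij
      exact hr (hinj _ _ (h0 i) (h0 j) hij)
    · intro i
      rw [← (FL_spec m).2 (φ (r i)) (hroot _ (h0 i)), ← hpow, hc i]
  · obtain ⟨t, ht, hf⟩ := SZ_prod K hs
    have key : ∀ a : ℕ, (vals q a (sN q)).headD 0 = 0 → ∃ i, φ (r i) = a ∧ g • r i = r i := by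
      intro a ha
      have h := hf _ φ (a : 𝓞 K ⧸ Q)
      rw [ev, aeval_SZ hQ3 hq.pos, evA_head hQ3, ha, Nat.cast_zero, eq_comm,
        Multiset.prod_eq_zero_iff, Multiset.mem_map] at h
      obtain ⟨x, hx, hx0⟩ := h
      obtain ⟨i, rfl⟩ := hall x (ht x hx)
      have e : φ (r i) = a := (sub_eq_zero.1 hx0).symm
      refine ⟨i, e, ?_⟩
      apply hinj _ _ (hgr _ _ (h0 i)) (h0 i)
      rw [hg, e]
      exact map_natCast (frobenius (𝓞 K ⧸ Q) q) a
    intro a b ha hb hab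
    obtain ⟨i, hi1, hi2⟩ := key a ha
    obtain ⟨j, hj1, hj2⟩ := key b hb
    refine ⟨i, j, ?_, hi2, hj2⟩
    rintro rfl
    rw [hi1] at hj1
    exact hab ((CharP.cast_eq_iff_mod_eq (𝓞 K ⧸ Q) q).1 hj1)


open OnePoint

theorem fact31 : Fact (Nat.Prime 31) := ⟨by norm_num⟩
attribute [local instance] fact31

abbrev F31 := ZMod 31
abbrev PP := OnePoint F31

def chi (x : F31) : ℤ :=
  if x.val = 0 then 0 else if Nat.shiftRight qrm x.val % 2 = 1 then 1 else -1

theorem chi_mul : ∀ x y : F31, chi (x * y) = chi x * chi y := by decide +kernel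
theorem chi_cases : ∀ x : F31, x ≠ 0 → chi x = 1 ∨ chi x = -1 := by decide +kernel
theorem chi_zero : chi 0 = 0 := by decide +kernel
theorem chi_one : chi 1 = 1 := by decide +kernel

def J1t : List ℤ := [4, -91, 3, 7, 11, 11, -1, -5, 11, -5, -5, 7, 3, 3, 3, 7, 3, -1, 3, 3, 3, -1,
  11, 11, -5, 11, 7, -5, -5, -1, 3]
def J2t : List ℤ := [-752446, -1189, 750649, 758535, -750051, 751321, 754983, -750243, 751705,
  750745, 748825, 753927, -759161, -756857, -752643, 756231, -750723, 756519, -750339, 752569,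
  754873, 758823, -755417, -755801, -758297, -751971, 754695, -756377, -750627, 754215, -756473]
theorem J1_eq : ∀ x : F31, ∑ y : F31, (chi y * chi (y - 1) - 3 * chi (y - 1)) * chi (y - x)
    = J1t.getD x.val 0 := by decide +kernel
theorem J2_eq : ∀ x : F31, ∑ y : F31, (J1t.getD y.val 0) ^ 3 * chi (y - x)
    = J2t.getD x.val 0 := by decide +kernel
theorem J2_inj : ∀ x y : F31, J2t.getD x.val 0 = J2t.getD y.val 0 → x = y := by decide +kernel

def v0 (a : PP) : F31 := a.elim 1 id
def v1 (a : PP) : F31 := a.elim 0 (fun _ => 1)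
theorem v0_inf : v0 ∞ = 1 := rfl
theorem v1_inf : v1 ∞ = 0 := rfl
theorem v0_coe (x : F31) : v0 x = x := rfl
theorem v1_coe (x : F31) : v1 x = 1 := rfl

def dP (a b : PP) : F31 := v0 a * v1 b - v1 a * v0 b

theorem dP_eq_zero (a b : PP) : dP a b = 0 ↔ a = b := by
  unfold dP
  induction a using OnePoint.rec <;> induction b using OnePoint.rec <;> simp [v0_inf, v1_inf, v0_coe, v1_coe, sub_eq_zero]

theorem dP_self (a : PP) : dP a a = 0 := (dP_eq_zero a a).2 rfl

theorem smul_v (g : GL (Fin 2) F31) (a : PP) : ∃ l : F31, l ≠ 0 ∧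
    l * v0 (g • a) = g 0 0 * v0 a + g 0 1 * v1 a ∧ l * v1 (g • a) = g 1 0 * v0 a + g 1 1 * v1 a := by
  have hd : g 0 0 * g 1 1 - g 0 1 * g 1 0 ≠ 0 := by
    have := g.det_ne_zero
    rwa [det_fin_two] at this
  induction a using OnePoint.rec with
  | infty =>
    rw [smul_infty_eq_ite]
    simp only [v0_inf, v1_inf, mul_one, mul_zero, add_zero]
    split_ifs with h
    · refine ⟨g 0 0, ?_, by simp [v0_inf], by simp [v1_inf, h]⟩
      intro h0; apply hd; rw [h, h0]; ring
    · refine ⟨g 1 0, h, ?_, by simp [v1_coe]⟩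
      rw [v0_coe]; field_simp
  | coe x =>
    rw [smul_some_eq_ite]
    simp only [v0_coe, v1_coe, mul_one]
    split_ifs with h
    · refine ⟨g 0 0 * x + g 0 1, ?_, by simp [v0_inf], by simp [v1_inf, h]⟩
      intro h0; apply hd
      by_cases hc : g 1 0 = 0
      · have : g 1 1 = 0 := by rw [hc] at h; simpa using h
        rw [hc, this]; ring
      · have : g 1 0 * (g 0 0 * g 1 1 - g 0 1 * g 1 0) = 0 := by
          linear_combination (g 0 0 * g 1 0) * h - g 1 0 ^ 2 * h0
        exact (mul_eq_zero.1 this).resolve_left hc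
    · refine ⟨g 1 0 * x + g 1 1, h, ?_, by simp [v1_coe]⟩
      rw [v0_coe]; field_simp

theorem smul_eq_of (g : GL (Fin 2) F31) (a b : PP)
    (h : (g 0 0 * v0 a + g 0 1 * v1 a) * v1 b - (g 1 0 * v0 a + g 1 1 * v1 a) * v0 b = 0) :
    g • a = b := by
  obtain ⟨l, hl, h1, h2⟩ := smul_v g a
  rw [← dP_eq_zero]
  rw [← h1, ← h2] at h
  have : l * dP (g • a) b = 0 := by rw [← h, dP]; ring
  exact (mul_eq_zero.1 this).resolve_left hl

def TT (a b c : PP) : ℤ := chi (dP a b * dP b c * dP c a)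

theorem chi_sq {x : F31} (h : x ≠ 0) : chi x * chi x = 1 := by
  rcases chi_cases x h with h | h <;> rw [h] <;> rfl

theorem TT_smul (g : GL (Fin 2) F31) (a b c : PP) :
    TT (g • a) (g • b) (g • c) = chi (g 0 0 * g 1 1 - g 0 1 * g 1 0) * TT a b c := by
  have hd : g 0 0 * g 1 1 - g 0 1 * g 1 0 ≠ 0 := by
    have := g.det_ne_zero
    rwa [det_fin_two] at this
  obtain ⟨l, hl, h1, h2⟩ := smul_v g a
  obtain ⟨m, hm, h3, h4⟩ := smul_v g b
  obtain ⟨n, hn, h5, h6⟩ := smul_v g c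
  set D := g 0 0 * g 1 1 - g 0 1 * g 1 0 with hD
  have e1 : l * m * dP (g • a) (g • b) = D * dP a b := by
    calc l * m * dP (g • a) (g • b) = (l * v0 (g • a)) * (m * v1 (g • b))
          - (l * v1 (g • a)) * (m * v0 (g • b)) := by rw [dP]; ring
      _ = _ := by rw [h1, h2, h3, h4, dP]; ring
  have e2 : m * n * dP (g • b) (g • c) = D * dP b c := by
    calc m * n * dP (g • b) (g • c) = (m * v0 (g • b)) * (n * v1 (g • c))
          - (m * v1 (g • b)) * (n * v0 (g • c)) := by rw [dP]; ring
      _ = _ := by rw [h3, h4, h5, h6, dP]; ring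
  have e3 : n * l * dP (g • c) (g • a) = D * dP c a := by
    calc n * l * dP (g • c) (g • a) = (n * v0 (g • c)) * (l * v1 (g • a))
          - (n * v1 (g • c)) * (l * v0 (g • a)) := by rw [dP]; ring
      _ = _ := by rw [h1, h2, h5, h6, dP]; ring
  have e := congrArg₂ (· * ·) (congrArg₂ (· * ·) (congrArg chi e1) (congrArg chi e2)) (congrArg chi e3)
  simp only [chi_mul] at e
  have s1 := chi_sq hl
  have s2 := chi_sq hm
  have s3 := chi_sq hn
  have s4 := chi_sq hd
  simp only [TT, chi_mul]
  generalize chi l = l' at *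
  generalize chi m = m' at *
  generalize chi n = n' at *
  generalize chi D = D' at *
  generalize chi (dP (g • a) (g • b)) = x at *
  generalize chi (dP (g • b) (g • c)) = y at *
  generalize chi (dP (g • c) (g • a)) = z at *
  generalize chi (dP a b) = u at *
  generalize chi (dP b c) = v at *
  generalize chi (dP c a) = w at *
  have e' : (l' * l') * (m' * m') * (n' * n') * (x * y * z) = (D' * D') * D' * (u * v * w) := by
    linear_combination e
  rw [s1, s2, s3, s4] at e'
  linear_combination e'

theorem TT_deg (a b c : PP) (h : a = b ∨ b = c ∨ a = c) : TT a b c = 0 := by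
  unfold TT
  rcases h with rfl | rfl | rfl <;> simp [dP_self, chi_zero]

theorem TT_inf (x y : F31) : TT ∞ x y = chi (y - x) := by
  unfold TT dP
  rw [v0_inf, v1_inf, v0_coe, v1_coe, v0_coe, v1_coe]
  congr 1; ring

theorem sum_PP (f : PP → ℤ) (h : f ∞ = 0) : ∑ y, f y = ∑ y : F31, f y := by
  have : ∑ y, f y = f ∞ + ∑ y : F31, f y := Fintype.sum_option f
  rw [this, h, zero_add]

def TR (σ : Equiv.Perm PP) : Prop := ∀ a b c a' b' c' : PP, a ≠ b → b ≠ c → a ≠ c →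
  a' ≠ b' → b' ≠ c' → a' ≠ c' →
  TT (σ a) (σ b) (σ c) * TT (σ a') (σ b') (σ c') = TT a b c * TT a' b' c'

theorem rigid (σ : Equiv.Perm PP) (h : TR σ) (hi : σ ∞ = ∞) (h0 : σ (0 : F31) = (0 : F31))
    (h1 : σ (1 : F31) = (1 : F31)) : σ = 1 := by
  have t1 : TT ∞ (0 : F31) (1 : F31) = 1 := by rw [TT_inf, sub_zero, chi_one]
  have inv : ∀ a b c, TT (σ a) (σ b) (σ c) = TT a b c := by
    intro a b c
    by_cases hd : a = b ∨ b = c ∨ a = c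
    · rw [TT_deg a b c hd, TT_deg]
      rcases hd with rfl | rfl | rfl <;> simp
    · push Not at hd
      have := h a b c ∞ (0 : F31) (1 : F31) hd.1 hd.2.1 hd.2.2 (by simp)
        (by simp) (by simp)
      rw [hi, h0, h1, t1, mul_one, mul_one] at this
      exact this
  let j1 : PP → ℤ := fun x => ∑ y : PP, (TT ∞ (0 : F31) y * TT ∞ (1 : F31) y
    - 3 * TT ∞ (1 : F31) y) * TT ∞ x y
  let j2 : PP → ℤ := fun x => ∑ y : PP, j1 y ^ 3 * TT ∞ x y
  have i1 : ∀ x, j1 (σ x) = j1 x := by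
    intro x
    simp only [j1]
    rw [← Equiv.sum_comp σ]
    refine Finset.sum_congr rfl fun y _ => ?_
    have a1 := inv ∞ (0 : F31) y
    have a2 := inv ∞ (1 : F31) y
    have a3 := inv ∞ x y
    rw [hi, h0] at a1
    rw [hi, h1] at a2
    rw [hi] at a3
    rw [a1, a2, a3]
  have i2 : ∀ x, j2 (σ x) = j2 x := by
    intro x
    simp only [j2]
    rw [← Equiv.sum_comp σ]
    refine Finset.sum_congr rfl fun y _ => ?_
    have a3 := inv ∞ x y
    rw [hi] at a3
    rw [a3, i1]
  have e1 : ∀ x : F31, j1 x = J1t.getD x.val 0 := by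
    intro x
    simp only [j1]
    rw [sum_PP _ (by rw [TT_deg ∞ (x : PP) ∞ (by simp), mul_zero]), ← J1_eq]
    simp only [TT_inf, sub_zero]
  have e2 : ∀ x : F31, j2 x = J2t.getD x.val 0 := by
    intro x
    simp only [j2]
    rw [sum_PP _ (by rw [TT_deg ∞ (x : PP) ∞ (by simp), mul_zero]), ← J2_eq]
    simp only [TT_inf, e1]
  ext a
  induction a using OnePoint.rec with
  | infty => exact hi
  | coe x =>
    have hne : σ x ≠ ∞ := by
      intro hc; rw [← hi] at hc; exact absurd (σ.injective hc) (by simp)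
    obtain ⟨z, hz⟩ := OnePoint.ne_infty_iff_exists.1 hne
    have := i2 x
    rw [← hz, e2, e2] at this
    rw [← hz, J2_inj _ _ this]; rfl

theorem three_trans (p q r : PP) (h1 : p ≠ q) (h2 : q ≠ r) (h3 : p ≠ r) :
    ∃ g : GL (Fin 2) F31, g • (∞ : PP) = p ∧ g • ((0 : F31) : PP) = q ∧ g • ((1 : F31) : PP) = r := by
  have d1 := mt (dP_eq_zero p q).1 h1
  have d2 := mt (dP_eq_zero q r).1 h2
  have d3 := mt (dP_eq_zero p r).1 h3
  let A : Matrix (Fin 2) (Fin 2) F31 :=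
    !![-dP q r * v0 p, dP p r * v0 q; -dP q r * v1 p, dP p r * v1 q]
  have hA : A.det ≠ 0 := by
    have : A.det = -(dP q r * dP p r * dP p q) := by
      rw [det_fin_two]; simp only [A, of_apply, cons_val', cons_val_zero, cons_val_one]
      simp [dP]; ring
    rw [this]
    exact neg_ne_zero.2 (mul_ne_zero (mul_ne_zero d2 d3) d1)
  refine ⟨GeneralLinearGroup.mkOfDetNeZero A hA, ?_, ?_, ?_⟩ <;> apply smul_eq_of <;>
    simp [GeneralLinearGroup.mkOfDetNeZero, A, v0_inf, v1_inf, v0_coe, v1_coe, dP] <;> ring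

theorem TR_range (σ : Equiv.Perm PP) (h : TR σ) :
    ∃ g : GL (Fin 2) F31, ∀ a, σ a = g • a := by
  obtain ⟨g, g1, g2, g3⟩ := three_trans (σ ∞) (σ (0 : F31)) (σ (1 : F31)) (by simp)
    (by simp) (by simp)
  have hg : ∀ a b c, TT (g⁻¹ • a) (g⁻¹ • b) (g⁻¹ • c) = _ * TT a b c := TT_smul g⁻¹
  have hd : chi (g⁻¹ 0 0 * g⁻¹ 1 1 - g⁻¹ 0 1 * g⁻¹ 1 0) *
      chi (g⁻¹ 0 0 * g⁻¹ 1 1 - g⁻¹ 0 1 * g⁻¹ 1 0) = 1 := by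
    apply chi_sq
    have := (g⁻¹).det_ne_zero
    rwa [det_fin_two] at this
  generalize chi (g⁻¹ 0 0 * g⁻¹ 1 1 - g⁻¹ 0 1 * g⁻¹ 1 0) = e at *
  refine ⟨g, ?_⟩
  have := rigid ((MulAction.toPerm g)⁻¹ * σ) ?_ ?_ ?_ ?_
  · intro a
    have h2 := congrArg (fun s : Equiv.Perm PP => g • s a) this
    simpa using h2
  · intro a b c a' b' c' k1 k2 k3 k4 k5 k6
    change TT (g⁻¹ • σ a) (g⁻¹ • σ b) (g⁻¹ • σ c) * TT (g⁻¹ • σ a') (g⁻¹ • σ b') (g⁻¹ • σ c') = _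
    rw [hg, hg, ← h a b c a' b' c' k1 k2 k3 k4 k5 k6]
    linear_combination (TT (σ a) (σ b) (σ c) * TT (σ a') (σ b') (σ c')) * hd
  · change g⁻¹ • σ ∞ = ∞
    rw [← g1, inv_smul_smul]
  · change g⁻¹ • σ (0 : F31) = (0 : F31)
    rw [← g2, inv_smul_smul]
  · change g⁻¹ • σ (1 : F31) = (1 : F31)
    rw [← g3, inv_smul_smul]


open OnePoint

instance decPP : DecidableEq PP := inferInstanceAs (DecidableEq (Option F31))
instance nonPP : Nontrivial PP := ⟨∞, (0 : F31), by simp⟩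

theorem ker_mu (g : GL (Fin 2) F31) : (∀ a : PP, g • a = a) ↔ g ∈ Subgroup.center (GL (Fin 2) F31) := by
  rw [Matrix.GeneralLinearGroup.mem_center_iff_val_mem_range_scalar]
  constructor
  · intro h
    have h1 := h ∞
    have h2 := h (0 : F31)
    have h3 := h (1 : F31)
    obtain ⟨l, hl, a1, a2⟩ := smul_v g ∞
    obtain ⟨m, hm, b1, b2⟩ := smul_v g (0 : F31)
    obtain ⟨n, hn, c1, c2⟩ := smul_v g (1 : F31)
    rw [h1] at a1 a2
    rw [h2] at b1 b2
    rw [h3] at c1 c2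
    simp only [v0_inf, v1_inf, v0_coe, v1_coe, mul_one, mul_zero, add_zero, zero_add] at *
    refine ⟨g 0 0, ?_⟩
    ext i j
    fin_cases i <;> fin_cases j <;> simp [scalar_apply]
    · exact b1
    · exact a2
    · rw [← b1, ← a2] at *
      rw [add_zero] at c1
      rw [zero_add] at c2
      rw [← c1, ← c2]
  · rintro ⟨c, hc⟩ a
    apply smul_eq_of
    rw [← hc]
    simp [scalar_apply]
    ring

/-- multiplication by c -/
def IsM (σ : Equiv.Perm PP) (c : F31ˣ) : Prop := σ ∞ = ∞ ∧ ∀ x : F31, σ x = ((c * x : F31) : PP)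

theorem IsM.mul {σ τ : Equiv.Perm PP} {c d : F31ˣ} (h : IsM σ c) (h' : IsM τ d) :
    IsM (σ * τ) (c * d) := by
  refine ⟨by rw [Equiv.Perm.mul_apply, h'.1, h.1], fun x => ?_⟩
  rw [Equiv.Perm.mul_apply, h'.2, h.2, Units.val_mul, mul_assoc]

theorem IsM.one : IsM 1 1 := ⟨rfl, fun x => by simp⟩

theorem IsM.pow {σ : Equiv.Perm PP} {c : F31ˣ} (h : IsM σ c) (n : ℕ) : IsM (σ ^ n) (c ^ n) := by
  induction n with
  | zero => simpa using IsM.one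
  | succ n ih => rw [pow_succ, pow_succ]; exact ih.mul h

theorem IsM.ext {σ τ : Equiv.Perm PP} {c : F31ˣ} (h : IsM σ c) (h' : IsM τ c) : σ = τ := by
  ext a
  induction a using OnePoint.rec with
  | infty => rw [h.1, h'.1]
  | coe x => rw [h.2, h'.2]

theorem exists_IsM (g : GL (Fin 2) F31) (σ : Equiv.Perm PP) (hg : ∀ a, σ a = g • a) (h1 : σ ∞ = ∞)
    (h2 : σ (0 : F31) = (0 : F31)) : ∃ c, IsM σ c := by
  have hd : g 0 0 * g 1 1 - g 0 1 * g 1 0 ≠ 0 := by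
    have := g.det_ne_zero
    rwa [det_fin_two] at this
  obtain ⟨l, hl, a1, a2⟩ := smul_v g ∞
  obtain ⟨m, hm, b1, b2⟩ := smul_v g (0 : F31)
  rw [← hg, h1] at a1 a2
  rw [← hg, h2] at b1 b2
  simp only [v0_inf, v1_inf, v0_coe, v1_coe, mul_one, mul_zero, add_zero, zero_add] at *
  rw [← b1, ← a2, mul_zero, sub_zero] at hd
  have h00 := left_ne_zero_of_mul hd
  have h11 := right_ne_zero_of_mul hd
  refine ⟨Units.mk0 (g 0 0 / g 1 1) (div_ne_zero h00 h11), h1, fun x => ?_⟩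
  rw [hg]
  apply smul_eq_of
  rw [← b1, ← a2]
  simp only [v0_coe, v1_coe, Units.val_mk0]
  field_simp
  ring

theorem group_main (G : Subgroup (Equiv.Perm PP)) (hG : ∀ σ ∈ G, ∃ g : GL (Fin 2) F31, ∀ a, σ a = g • a)
    (u : Equiv.Perm PP) (hu : u ∈ G) (hu1 : u ^ 31 = 1) (hu2 : u ≠ 1)
    (hfix : ∀ p, ∃ σ ∈ G, σ p ≠ p)
    (h : Equiv.Perm PP) (hh : h ∈ G) (p q : PP) (hpq : p ≠ q) (hp : h p = p) (hq : h q = q)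
    (h6 : h ^ 6 ≠ 1) (h10 : h ^ 10 ≠ 1) (h15 : h ^ 15 ≠ 1)
    (g : GL (Fin 2) F31) : MulAction.toPerm g ∈ G := by
  have ho : orderOf u = 31 := orderOf_eq_prime hu1 hu2
  have hcard : Fintype.card PP = 32 := by
    have : Fintype.card PP = Fintype.card F31 + 1 := Fintype.card_option
    rw [this, ZMod.card]
  have hc : u.IsCycle := Equiv.Perm.isCycle_of_prime_order (by rw [ho]; norm_num) (by
    rw [ho]
    exact lt_of_le_of_lt (Finset.card_le_univ _) (by rw [hcard]; norm_num))
  have hsup : u.support.card = 31 := by rw [← hc.orderOf, ho]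
  have hcompl : u.supportᶜ.card = 1 := by rw [Finset.card_compl, hcard, hsup]
  obtain ⟨p0, hp0⟩ := Finset.card_eq_one.1 hcompl
  have hmv : ∀ x, x ≠ p0 → u x ≠ x := by
    intro x hx hux
    have : x ∈ u.supportᶜ := by simpa using hux
    rw [hp0] at this
    exact hx (by simpa using this)
  have hp0f : u p0 = p0 := by
    have : p0 ∈ u.supportᶜ := by rw [hp0]; simp
    simpa using this
  have hcyc : ∀ x y, x ≠ p0 → y ≠ p0 → ∃ σ ∈ G, σ x = y ∧ σ p0 = p0 := by
    intro x y hx hy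
    obtain ⟨i, hi⟩ := hc.exists_zpow_eq (hmv x hx) (hmv y hy)
    exact ⟨u ^ i, G.zpow_mem hu i, hi, Equiv.Perm.zpow_apply_eq_self_of_apply_eq_self hp0f i⟩
  have htr : ∀ x, ∃ σ ∈ G, σ x = p0 := by
    intro x
    by_cases hx : x = p0
    · exact ⟨1, G.one_mem, hx⟩
    · obtain ⟨k, hk, hk2⟩ := hfix p0
      obtain ⟨σ, hσ, h1, -⟩ := hcyc x (k p0) hx hk2
      exact ⟨k⁻¹ * σ, G.mul_mem (G.inv_mem hk) hσ, by simp [h1]⟩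
  obtain ⟨c0, hc0⟩ : ∃ c0, c0 ≠ p0 := exists_ne p0
  have htr2 : ∀ x y, x ≠ y → ∃ σ ∈ G, σ x = p0 ∧ σ y = c0 := by
    intro x y hxy
    obtain ⟨σ, hσ, h1⟩ := htr x
    obtain ⟨τ, hτ, h2, h3⟩ := hcyc (σ y) c0 (by rw [← h1]; simpa using hxy.symm) hc0
    exact ⟨τ * σ, G.mul_mem hτ hσ, by simp [h1, h3], by simp [h2]⟩
  have htr3 : ∀ x y z w, x ≠ y → z ≠ w → ∃ σ ∈ G, σ x = z ∧ σ y = w := by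
    intro x y z w hxy hzw
    obtain ⟨σ, hσ, h1, h2⟩ := htr2 x y hxy
    obtain ⟨τ, hτ, h3, h4⟩ := htr2 z w hzw
    exact ⟨τ⁻¹ * σ, G.mul_mem (G.inv_mem hτ) hσ, by simp [h1, ← h3], by simp [h2, ← h4]⟩
  obtain ⟨k, hk, hk1, hk2⟩ := htr3 p q ∞ (0 : F31) hpq (by simp)
  have hk1' : k⁻¹ ∞ = p := by rw [← hk1]; simp
  have hk2' : k⁻¹ (0 : F31) = q := by rw [← hk2]; simp
  have hmem : k * h * k⁻¹ ∈ G := G.mul_mem (G.mul_mem hk hh) (G.inv_mem hk)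
  obtain ⟨m, hm⟩ := hG _ hmem
  obtain ⟨c, hcM⟩ := exists_IsM m (k * h * k⁻¹) hm 
    (by rw [Equiv.Perm.mul_apply, Equiv.Perm.mul_apply, hk1', hp, hk1])
    (by rw [Equiv.Perm.mul_apply, Equiv.Perm.mul_apply, hk2', hq, hk2])
  have hcn : ∀ n, h ^ n ≠ 1 → c ^ n ≠ 1 := by
    intro n hn hcn
    apply hn
    have := hcM.pow n
    rw [hcn, conj_pow] at this
    have := this.ext IsM.one
    simpa using this
  have hoc : orderOf c = 30 := by
    refine orderOf_eq_of_pow_and_pow_div_prime (by norm_num) ?_ ?_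
    · have := ZMod.units_pow_card_sub_one_eq_one 31 c
      exact this
    · intro r hr hrd
      have hr2 : r ∣ 2 * 3 * 5 := hrd
      have : r = 2 ∨ r = 3 ∨ r = 5 := by
        rcases (Nat.Prime.dvd_mul hr).1 hr2 with h | h
        · rcases (Nat.Prime.dvd_mul hr).1 h with h | h
          · exact Or.inl ((Nat.prime_dvd_prime_iff_eq hr Nat.prime_two).1 h)
          · exact Or.inr (Or.inl ((Nat.prime_dvd_prime_iff_eq hr Nat.prime_three).1 h))
        · exact Or.inr (Or.inr ((Nat.prime_dvd_prime_iff_eq hr Nat.prime_five).1 h))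
      rcases this with rfl | rfl | rfl
      · exact hcn 15 h15
      · exact hcn 10 h10
      · exact hcn 6 h6
  have hgen : ∀ d : F31ˣ, ∃ n : ℕ, c ^ n = d := by
    intro d
    have htop : Subgroup.zpowers c = ⊤ := by
      apply Subgroup.eq_top_of_card_eq
      rw [Nat.card_zpowers, hoc, Nat.card_eq_fintype_card, ZMod.card_units]
    have : d ∈ Subgroup.zpowers c := by rw [htop]; trivial
    exact mem_powers_iff_mem_zpowers.2 this
  obtain ⟨σ, hσ, s1, s2⟩ := htr3 (g • (∞ : PP)) (g • ((0 : F31) : PP)) ∞ (0 : F31) (by simp) (by simp)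
  obtain ⟨m', hm'⟩ := hG _ hσ
  obtain ⟨d, hd⟩ := exists_IsM (m' * g) (σ * MulAction.toPerm g) (fun a => by
    rw [mul_smul, ← hm']; rfl) (by simpa using s1) (by simpa using s2)
  obtain ⟨n, hn⟩ := hgen d
  have hpn := hcM.pow n
  rw [hn] at hpn
  have e := hpn.ext hd
  have : MulAction.toPerm g = σ⁻¹ * (k * h * k⁻¹) ^ n := by rw [e]; simp
  rw [this]
  exact G.mul_mem (G.inv_mem hσ) (G.pow_mem hmem n)

def ePP (i : Fin 32) : PP := if i.val = 31 then ∞ else ((i.val : F31) : PP)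

theorem ePP_inj : Function.Injective ePP := by
  have : ∀ i j : Fin 32, ePP i = ePP j → i = j := by decide +kernel
  exact fun i j => this i j

def eqv : Fin 32 ≃ PP := Equiv.ofBijective ePP (by
  rw [Fintype.bijective_iff_injective_and_card]
  refine ⟨ePP_inj, ?_⟩
  have : Fintype.card PP = Fintype.card F31 + 1 := Fintype.card_option
  rw [this, ZMod.card, Fintype.card_fin])

theorem dt_eq : ∀ i j : Fin 32, ((dt i.val j.val : ℕ) : F31) = dP (ePP i) (ePP j) := by decide +kernel

theorem tau_aux (m n : ℕ) : (if (bif Nat.beq m 0 then 0 else bif Nat.beq n 1 then 1 else 2) = 0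
    then (0 : ℤ) else if (bif Nat.beq m 0 then 0 else bif Nat.beq n 1 then 1 else 2) = 1
    then 1 else -1) = if m = 0 then (0 : ℤ) else if n = 1 then 1 else -1 := by
  by_cases h1 : m = 0
  · subst h1; rfl
  · have e1 : Nat.beq m 0 = false := Bool.eq_false_iff.2 fun h => h1 (Nat.eq_of_beq_eq_true h)
    rw [e1, if_neg h1]
    by_cases h2 : n = 1
    · subst h2; rfl
    · have e2 : Nat.beq n 1 = false := Bool.eq_false_iff.2 fun h => h2 (Nat.eq_of_beq_eq_true h)
      rw [e2, if_neg h2]; rfl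

theorem tau_eq (i j k : Fin 32) : tau i j k = TT (eqv i) (eqv j) (eqv k) := by
  change tau i j k = TT (ePP i) (ePP j) (ePP k)
  unfold TT
  rw [← dt_eq, ← dt_eq, ← dt_eq, ← Nat.cast_mul, ← Nat.cast_mul]
  unfold tau tt chi
  rw [forceN_eq, ZMod.val_natCast]
  exact tau_aux ((dt i j * dt j k * dt k i) % 31)
    (Nat.mod (Nat.shiftRight qrm ((dt i j * dt j k * dt k i) % 31)) 2)


open NumberField OnePoint

theorem frK_FL {α : Type} (q n m p : ℕ) (h : n + m = p) (k : List ℕ → α) :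
    frK q (ML q) n (FL q m) k = k (FL q p) := by
  rw [frK_eq, FL, ← Function.iterate_add_apply, h, ← FL]

theorem FL_zero (q : ℕ) : xL = FL q 0 := rfl
attribute [local irreducible] FL

theorem fl_key (l : List ℕ) (i q : ℕ) (b : Bool)
    (hb : (bif Nat.beq (Nat.mod (l.getD i 0) q) 0 then false else b) = true) :
    l.getD i 0 % q ≠ 0 ∧ b = true := by
  change Nat.mod (l.getD i 0) q ≠ 0 ∧ b = true
  generalize Nat.mod (l.getD i 0) q = m at *
  cases m with
  | zero => exact absurd hb Bool.false_ne_true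
  | succ m => exact ⟨Nat.succ_ne_zero m, hb⟩

theorem fl109 : (FL 109 1).getD 31 0 % 109 ≠ 0 ∧ FL 109 31 = xL := by
  have h := F109
  rw [runK_eq, FL_zero 109, frK_FL 109 1 0 1 rfl] at h
  obtain ⟨a1, h⟩ := fl_key _ _ _ _ h
  rw [frK_FL 109 30 1 31 rfl] at h
  refine ⟨?_, ?_⟩
  · exact a1
  · rw [FL_zero 109]; exact of_decide_eq_true h

theorem fl17 : (FL 17 6).getD 30 0 % 17 ≠ 0 ∧ (FL 17 10).getD 30 0 % 17 ≠ 0 ∧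
    (FL 17 15).getD 30 0 % 17 ≠ 0 := by
  have h := F17
  rw [runK_eq, FL_zero 17, frK_FL 17 6 0 6 rfl] at h
  obtain ⟨a1, h⟩ := fl_key _ _ _ _ h
  rw [frK_FL 17 4 6 10 rfl] at h
  obtain ⟨a2, h⟩ := fl_key _ _ _ _ h
  rw [frK_FL 17 5 10 15 rfl] at h
  refine ⟨?_, ?_, fun hc => ?_⟩
  · exact a1
  · exact a2
  rw [show Nat.mod ((FL 17 15).getD 30 0) 17 = 0 from hc] at h
  exact Bool.false_ne_true h

theorem v17a : (vals 17 8 (sN 17)).headD 0 = 0 := by decide +kernel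
theorem v17b : (vals 17 12 (sN 17)).headD 0 = 0 := by decide +kernel

/-- the action on the roots -/
theorem exists_rho (K : Type) [Field K] [NumberField K] (r : Fin 32 → 𝓞 K)
    (hr : Function.Injective r) (h0 : ∀ i, ev SZ (r i) = 0)
    (hall : ∀ x, ev SZ x = 0 → ∃ i, r i = x) :
    ∃ ρ : (K ≃ₐ[ℚ] K) →* Equiv.Perm (Fin 32), ∀ g i, g • r i = r (ρ g i) := by
  have hgr : ∀ (h : K ≃ₐ[ℚ] K) (x : 𝓞 K), ev SZ x = 0 → ev SZ (h • x) = 0 := by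
    intro h x hx
    have := map_ev (MulSemiringAction.toRingHom (K ≃ₐ[ℚ] K) (𝓞 K) h) SZ x
    rw [hx, map_zero] at this
    exact this.symm
  choose f hf using fun (g : K ≃ₐ[ℚ] K) (i : Fin 32) => hall _ (hgr g _ (h0 i))
  letI act : MulAction (K ≃ₐ[ℚ] K) (Fin 32) :=
    { smul := f
      one_smul := fun i => hr (by
        change r (f 1 i) = r i
        rw [hf, one_smul])
      mul_smul := fun g h i => hr (by
        change r (f (g * h) i) = r (f g (f h i))
        rw [hf, hf, hf, mul_smul]) }
  exact ⟨MulAction.toPermHom _ _, fun g i => (hf g i).symm⟩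

theorem main_K (K : Type) [Field K] [NumberField K] [IsGalois ℚ K]
    (hs : (SZ.map (Int.castRingHom K)).Splits)
    (hgen : ∀ g : K ≃ₐ[ℚ] K, (∀ x : K, ev SZ x = 0 → g x = x) → g = 1) :
    Nonempty ((K ≃ₐ[ℚ] K) ≃* GL (Fin 2) (ZMod 31) ⧸ Subgroup.center (GL (Fin 2) (ZMod 31))) := by
  obtain ⟨Q, hQ, hQ2, hQ3⟩ := exists_over K 348553 (by norm_num)
  letI : Field (𝓞 K ⧸ Q) := Ideal.Quotient.field Q
  have hP : (cP : 𝓞 K ⧸ Q) = 0 := by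
    rw [cP_eq, Nat.cast_pow, hQ3, zero_pow (by norm_num)]
  obtain ⟨r, hr, h0, hall, hφ⟩ := exists_r K hs (𝓞 K ⧸ Q) (Ideal.Quotient.mk Q) hP
  obtain ⟨ρ, hρ⟩ := exists_rho K r hr h0 hall
  let ψ : (K ≃ₐ[ℚ] K) →* Equiv.Perm PP := eqv.permCongrHom.toMonoidHom.comp ρ
  have hψ : ∀ g i, ψ g (eqv i) = eqv (ρ g i) := by
    intro g i; simp [ψ, Equiv.permCongr_apply]
  have hTR : ∀ g, TR (ψ g) := by
    intro g
    have key : ∀ a b c a' b' c' : Fin 32, a ≠ b → b ≠ c → a ≠ c → a' ≠ b' → b' ≠ c' → a' ≠ c' →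
        TT (ψ g (eqv a)) (ψ g (eqv b)) (ψ g (eqv c)) * TT (ψ g (eqv a')) (ψ g (eqv b')) (ψ g (eqv c'))
        = TT (eqv a) (eqv b) (eqv c) * TT (eqv a') (eqv b') (eqv c') := by
      intro a b c a' b' c' h1 h2 h3 h4 h5 h6
      simp only [hψ, ← tau_eq]
      exact tau_rel (Ideal.Quotient.mk Q) hP r hr h0 hφ
        (MulSemiringAction.toRingHom (K ≃ₐ[ℚ] K) (𝓞 K) g) (ρ g) (fun i => hρ g i) (ρ g).injective
        a b c a' b' c' h1 h2 h3 h4 h5 h6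
    intro a b c a' b' c' h1 h2 h3 h4 h5 h6
    obtain ⟨a, rfl⟩ := eqv.surjective a
    obtain ⟨b, rfl⟩ := eqv.surjective b
    obtain ⟨c, rfl⟩ := eqv.surjective c
    obtain ⟨a', rfl⟩ := eqv.surjective a'
    obtain ⟨b', rfl⟩ := eqv.surjective b'
    obtain ⟨c', rfl⟩ := eqv.surjective c'
    rw [eqv.injective.ne_iff] at h1 h2 h3 h4 h5 h6
    exact key a b c a' b' c' h1 h2 h3 h4 h5 h6
  have hfixr : ∀ g i, g • r i = r i ↔ ψ g (eqv i) = eqv i := by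
    intro g i
    rw [hψ, hρ, hr.eq_iff, eqv.injective.eq_iff]
  have hone : ∀ g, (∀ i, g • r i = r i) ↔ ψ g = 1 := by
    intro g
    simp only [hfixr]
    constructor
    · intro h
      ext a
      obtain ⟨i, rfl⟩ := eqv.surjective a
      rw [h i]; rfl
    · intro h i; rw [h]; rfl
  have hinj : Function.Injective ψ := by
    rw [injective_iff_map_eq_one]
    intro g hg
    have hg := (hone g).2 hg
    apply hgen
    intro x hx
    have hint : IsIntegral ℤ x := ⟨SZ, SZ_monic, hx⟩
    let y : 𝓞 K := ⟨x, hint⟩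
    have hy : ev SZ y = 0 := by
      apply RingOfIntegers.coe_injective
      rw [map_ev (algebraMap (𝓞 K) K), map_zero]
      exact hx
    obtain ⟨i, hi⟩ := hall y hy
    have := hg i
    rw [hi] at this
    exact congrArg (algebraMap (𝓞 K) K) this
  obtain ⟨g, g1, g2, -⟩ := frob_main K hs r hr h0 hall 109 (by norm_num) cU109 (by decide +kernel) sep109
  obtain ⟨h, -, h2, h3⟩ := frob_main K hs r hr h0 hall 17 (by norm_num) cU17 (by decide +kernel) sep17
  obtain ⟨i, j, hij, hi, hj⟩ := h3 8 12 v17a v17b (by norm_num)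
  have hpw : ∀ m, (FL 17 m).getD 30 0 % 17 ≠ 0 → ψ h ^ m ≠ 1 := by
    intro m hm hc
    rw [← map_pow, ← hone] at hc
    obtain ⟨i, hi⟩ := h2 m 30 (by norm_num) (by norm_num) hm
    exact hi (hc i)
  have hfix : ∀ p, ∃ σ ∈ ψ.range, σ p ≠ p := by
    intro p
    obtain ⟨i, rfl⟩ := eqv.surjective p
    by_contra hc
    push Not at hc
    obtain ⟨n, hn⟩ := inv_int K (r i) (fun g => (hfixr g i).2 (hc _ ⟨g, rfl⟩))
    have e := h0 i
    have e2 := map_ev (Int.castRingHom (𝓞 K)) SZ n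
    have e3 : Int.castRingHom (𝓞 K) n = r i := hn
    rw [e3, e] at e2
    have e4 : ev SZ n = 0 := by
      apply (Int.castRingHom (𝓞 K)).injective_int
      rw [e2, map_zero]
    have e5 := map_ev (Int.castRingHom (ZMod 2)) SZ n
    rw [e4, map_zero] at e5
    exact ev2 _ e5.symm
  have hle := group_main ψ.range (by rintro _ ⟨g, rfl⟩; exact TR_range _ (hTR g)) (ψ g) ⟨g, rfl⟩
    (by rw [← map_pow, ← hone]; exact g1 31 fl109.2)
    (by
      intro hc
      rw [← hone] at hc
      obtain ⟨i, hi⟩ := g2 1 31 (by norm_num) (by norm_num) fl109.1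
      rw [pow_one] at hi
      exact hi (hc i))
    hfix (ψ h) ⟨h, rfl⟩ (eqv i) (eqv j) (eqv.injective.ne hij) ((hfixr _ _).1 hi) ((hfixr _ _).1 hj)
    (hpw 6 fl17.1) (hpw 10 fl17.2.1) (hpw 15 fl17.2.2)
  let μ : GL (Fin 2) F31 →* Equiv.Perm PP := MulAction.toPermHom _ _
  have hrange : ψ.range = μ.range := by
    apply le_antisymm
    · rintro _ ⟨g, rfl⟩
      obtain ⟨m, hm⟩ := TR_range _ (hTR g)
      exact ⟨m, by ext a; rw [hm]; rfl⟩
    · rintro _ ⟨m, rfl⟩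
      exact hle m
  have hker : μ.ker = Subgroup.center (GL (Fin 2) F31) := by
    ext m
    rw [← ker_mu, MonoidHom.mem_ker, Equiv.Perm.ext_iff]
    rfl
  exact ⟨(MonoidHom.ofInjective hinj).trans ((MulEquiv.subgroupCongr hrange).trans
    ((QuotientGroup.quotientKerEquivRange μ).symm.trans (QuotientGroup.quotientMulEquivOfEq hker)))⟩


theorem galois_gen (K : Type) [Field K] [CharZero K] [inst : Algebra ℚ K]
    [hsf : IsSplittingField ℚ K S] :
    Nonempty ((K ≃ₐ[ℚ] K) ≃* GL (Fin 2) (ZMod 31) ⧸ Subgroup.center (GL (Fin 2) (ZMod 31))) := by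
  obtain rfl : inst = DivisionRing.toRatAlgebra := Subsingleton.elim _ _
  have hfd : FiniteDimensional ℚ K := IsSplittingField.finiteDimensional K S
  haveI : NumberField K := { to_charZero := inferInstance, to_finiteDimensional := hfd }
  haveI : Normal ℚ K := Normal.of_isSplittingField S
  haveI : IsGalois ℚ K := {}
  have hmap : S.map (algebraMap ℚ K) = SZ.map (Int.castRingHom K) := by
    rw [S_eq, Polynomial.map_map]
    congr 1
    exact RingHom.ext_int _ _
  apply main_K K
  · rw [← hmap]; exact IsSplittingField.splits K S
  · intro g hg
    have h := hsf.adjoin_rootSet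
    have h1 : (g : K →ₐ[ℚ] K) = AlgHom.id ℚ K := by
      refine AlgHom.ext_of_adjoin_eq_top h ?_
      intro x hx
      apply hg
      have hx := (mem_rootSet'.1 hx).2
      rw [aeval_def, ← eval_map, hmap, eval_map] at hx
      exact hx
    ext x
    exact DFunLike.congr_fun h1 x

end

theorem galoisGroup_S :
    Nonempty (S.Gal ≃*
      GL (Fin 2) (ZMod 31) ⧸ Subgroup.center (GL (Fin 2) (ZMod 31))) := by
  exact @galois_gen S.SplittingField _ _ _ (IsSplittingField.splittingField S)
end

section
/- Let S = x^32 - 3x^31 - 124x^30 + 651x^29 + 5797x^28 - 44020x^27 - 46593x^26 + 1523309x^25 - 4960682x^24 - 28562129x^23 + 205283395x^22 + 345367838x^21 - 3865963779x^20 - 5281917640x^19 + 35629245810x^18 + 95827452774x^17 + 227525150938x^16 - 1735983387875x^15 - 9952753525850x^14 + 15867354189588x^13 + 146446287180279x^12 - 99789981007214x^11 - 1135328992145553x^10 - 171825071648506x^9 + 7446294546204081x^8 + 294530833190147x^7 - 24397472702475140x^6 - 9976638213111902x^5 + 61714590456038129x^4 + 16902762581347117x^3 - 13833080015551423x^2 -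 202960986205176103x + 187532019539254309 ∈ ℚ[x], which is irreducible, and let K = ℚ[x]/(S) be the number field it defines. The discriminant of K over ℚ equals -31^51. -/
open Polynomial
namespace DS
def elim (b a : ℤ) : List ℤ → List ℤ → List ℤ
  | [], _ => []
  | x :: xs, [] => (b * x) :: elim b a xs []
  | x :: xs, y :: ys => (b * x - a * y) :: elim b a xs ys
def content (l : List ℤ) : ℤ := ((l.foldr (fun x g => Nat.gcd x.natAbs g) 0 : ℕ) : ℤ)
def go : ℕ → List ℤ → List ℤ → ℤ → ℤ → ℤ × ℤ
  | 0, _, _, _, _ => (0, 0)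
  | k + 1, A, B, p, q =>
    match A, B with
    | _ :: A', [b] => (p, q * b ^ A'.length)
    | a :: A', b :: B' =>
      if A'.length < B'.length then go k B A p ((-1) ^ (A'.length * B'.length) * q)
      else
        let R := elim b a A' B'
        let g := content R
        let R' := R.map (· / g)
        if R = R'.map (g * ·) then
          go k R' B (p * b ^ B'.length) (q * ((-1) ^ B'.length * b * g ^ B'.length))
        else (0, 0)
    | _, _ => (0, 0)
def SL : List ℤ := [1, -3, -124, 651, 5797, -44020, -46593, 1523309, -4960682, -28562129, 205283395, 345367838, -3865963779, -5281917640, 35629245810, 95827452774, 227525150938, -1735983387875, -9952753525850, 15867354189588, 146446287180279, -99789981007214, -1135328992145553, -171825071648506, 7446294546204081, 294530833190147, -24397472702475140, -9976638213111902, 61714590456038129, 16902762581347117, -13833080015551423, -202960986205176103, 187532019539254309]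
def SD : List ℤ := [32, -93, -3720, 18879, 162316, -1188540, -1211418, 38082725, -119056368, -656928967, 4516234690, 7252724598, -77319275580, -100356435160, 641326424580, 1629066697158, 3640402415008, -26039750818125, -139338549361900, 206275604464644, 1757355446163348, -1097689791079354, -11353289921455530, -1546425644836554, 59570356369632648, 2061715832331029, -146384836214850840, -49883191065559510, 246858361824152516, 50708287744041351, -27666160031102846, -202960986205176103]
def II : ℤ := 318379091775774855383606292115888147994762024635470894507614732445895321068654633302732338390390669876373914064211806806203132356872044655011447106485541710542783703212156385577766917380788584195794249809355876064531020921854300225720302028237525909563890160219689255206486087125934143311183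
def cc : ℤ := -25057442487129000517500137456082762376168575417280925321437017511133765884315100551449327179081998435387373245161586274359936513485669563734539686863298686339093669665827743172140802151470672860058559327963774397195844375185942234842748633678499578160682038963409507465184287006914435837645
noncomputable def tp : List ℤ → ℤ[X]
  | [] => 0
  | a :: l => C a * X ^ l.length + tp l

theorem tp_deg_lt : ∀ l : List ℤ, (tp l).degree < l.length
  | [] => by simp [tp]
  | a :: l => by
    have h := tp_deg_lt l
    have h1 : (C a * X ^ l.length : ℤ[X]).degree ≤ (l.length : ℕ) := degree_C_mul_X_pow_le _ _
    have h2 : ((l.length : ℕ) : WithBot ℕ) < ((a :: l).length : ℕ) := by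
      simp only [List.length_cons]; exact_mod_cast Nat.lt_succ_self _
    exact lt_of_le_of_lt (degree_add_le _ _) (max_lt (h1.trans_lt h2) (h.trans h2))

theorem tp_nat (a : ℤ) (l : List ℤ) : (tp (a :: l)).natDegree ≤ l.length := by
  have h := tp_deg_lt (a :: l)
  rw [natDegree_le_iff_degree_le]
  by_contra! hc
  by_cases h0 : tp (a :: l) = 0
  · rw [h0] at hc; simp at hc
  · rw [degree_eq_natDegree h0] at h hc
    simp only [List.length_cons] at h
    have h' : (tp (a :: l)).natDegree < l.length + 1 := by exact_mod_cast h
    have hc' : l.length < (tp (a :: l)).natDegree := by exact_mod_cast hc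
    omega

theorem tp_coeff (a : ℤ) (l : List ℤ) : (tp (a :: l)).coeff l.length = a := by
  have h := coeff_eq_zero_of_degree_lt (tp_deg_lt l)
  simp [tp, h]

theorem elim_length (b a : ℤ) : ∀ xs ys, (elim b a xs ys).length = xs.length
  | [], _ => rfl
  | _ :: xs, [] => by simp [elim, elim_length b a xs []]
  | _ :: xs, _ :: ys => by simp [elim, elim_length b a xs ys]

theorem tp_elim (b a : ℤ) : ∀ xs ys : List ℤ, ys.length ≤ xs.length →
    tp (elim b a xs ys) = C b * tp xs - C a * X ^ (xs.length - ys.length) * tp ys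
  | [], [], _ => by simp [elim, tp]
  | [], _ :: _, h => by simp at h
  | x :: xs, [], _ => by
    have := tp_elim b a xs [] (by simp)
    simp only [elim, tp, this, elim_length, map_mul]; ring
  | x :: xs, y :: ys, h => by
    have h' : ys.length ≤ xs.length := by simpa using h
    have := tp_elim b a xs ys h'
    obtain ⟨d, hd⟩ := Nat.exists_eq_add_of_le h'
    have e1 : xs.length - ys.length = d := by omega
    have e2 : (x :: xs).length - (y :: ys).length = d := by simp; omega
    rw [e1] at this
    rw [e2]
    simp only [elim, tp, this, elim_length, map_mul, map_sub, hd]; ring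

theorem tp_map (g : ℤ) : ∀ l : List ℤ, tp (l.map (g * ·)) = C g * tp l
  | [] => by simp [tp]
  | a :: l => by
    have := tp_map g l
    simp only [List.map_cons, tp, this, List.length_map, map_mul]; ring

/-- formal resultant of two coefficient lists -/
noncomputable def rs (A B : List ℤ) : ℤ := resultant (tp A) (tp B) (A.length - 1) (B.length - 1)

theorem rs_step (a b : ℤ) (A' B' : List ℤ) (h : B'.length ≤ A'.length) (h1 : 0 < B'.length) :
    b ^ B'.length * rs (a :: A') (b :: B') =
      (-1) ^ B'.length * b * rs (elim b a A' B') (b :: B') := by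
  unfold rs
  obtain ⟨m, hm⟩ : ∃ m, A'.length = m + 1 := ⟨A'.length - 1, by omega⟩
  have hR : (elim b a A' B').length = m + 1 := by rw [elim_length, hm]
  simp only [List.length_cons, Nat.add_sub_cancel, hR, hm]
  have hB := tp_nat b B'
  have hcB := tp_coeff b B'
  rw [← resultant_C_mul_left]
  have key : C b * tp (a :: A') = tp (elim b a A' B') +
      tp (b :: B') * (C a * X ^ (A'.length - B'.length)) := by
    rw [tp_elim _ _ _ _ h]
    obtain ⟨d, hd⟩ := Nat.exists_eq_add_of_le h
    have e1 : A'.length - B'.length = d := by omega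
    rw [e1]
    simp only [tp, hd]; ring
  have hd : (C a * X ^ (A'.length - B'.length) : ℤ[X]).natDegree ≤ A'.length - B'.length :=
    natDegree_C_mul_X_pow_le _ _
  rw [key, resultant_add_mul_left _ _ _ _ _ (by omega) hB, resultant_succ_left_deg, hcB]
  match hE : elim b a A' B' with
  | [] => simp [hE] at hR
  | x :: xs =>
    have := tp_nat x xs
    simp [hE] at hR
    omega

theorem go_spec : ∀ (k : ℕ) (A B : List ℤ) (p q p' q' : ℤ), go k A B p q = (p', q') → p' ≠ 0 →
    ∃ s t : ℤ, s ≠ 0 ∧ p' = p * s ∧ q' = q * t ∧ s * rs A B = t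
  | 0, _, _, _, _, p', q', h, h0 => by simp only [go, Prod.mk.injEq] at h; exact absurd h.1.symm h0
  | k + 1, [], _, _, _, p', q', h, h0 => by
    simp only [go, Prod.mk.injEq] at h; exact absurd h.1.symm h0
  | k + 1, _ :: _, [], _, _, p', q', h, h0 => by
    simp only [go, Prod.mk.injEq] at h; exact absurd h.1.symm h0
  | k + 1, a :: A', [b], p, q, p', q', h, h0 => by
    simp only [go, Prod.mk.injEq] at h
    refine ⟨1, b ^ A'.length, one_ne_zero, by simp [h.1], h.2.symm, ?_⟩
    simp [rs, tp]
  | k + 1, a :: A', b :: y :: ys, p, q, p', q', h, h0 => by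
    rw [go] at h
    swap
    · simp
    dsimp only at h
    split_ifs at h with h1 h2
    · obtain ⟨s, t, hs, e1, e2, e3⟩ := go_spec k _ _ _ _ _ _ h h0
      refine ⟨s, (-1) ^ (A'.length * (y :: ys).length) * t, hs, e1, by rw [e2]; ring, ?_⟩
      rw [← e3]
      unfold rs
      rw [resultant_comm]
      simp only [List.length_cons, Nat.add_sub_cancel]; ring
    · obtain ⟨s, t, hs, e1, e2, e3⟩ := go_spec k _ _ _ _ _ _ h h0
      have hst := rs_step a b A' (y :: ys) (by omega) (by simp)
      set R := elim b a A' (y :: ys)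
      set g := content R
      set R' := R.map (· / g)
      set n := (y :: ys).length
      have hl : R.length = R'.length := by simp [R']
      have hrs : rs R (b :: y :: ys) = g ^ n * rs R' (b :: y :: ys) := by
        unfold rs
        rw [hl]
        conv_lhs => rw [h2, tp_map, resultant_C_mul_left]
        simp [n]
      refine ⟨b ^ n * s, (-1) ^ n * b * g ^ n * t, ?_, by rw [e1]; ring, by rw [e2]; ring, ?_⟩
      · intro h3; apply h0; rw [e1, mul_assoc, h3, mul_zero]
      · rw [← e3, mul_right_comm, hst, hrs]; ring
    · simp only [Prod.mk.injEq] at h; exact absurd h.1.symm h0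

def check (A B : List ℤ) (D : ℤ) : Bool :=
  let r := go 100 A B 1 1; decide (r.1 ≠ 0) && decide (r.1 * D = r.2)

theorem rs_of_check (A B : List ℤ) (D : ℤ) (h : check A B D = true) : rs A B = D := by
  unfold check at h
  generalize hr : go 100 A B 1 1 = r at h
  obtain ⟨p, q⟩ := r
  simp only [Bool.and_eq_true, decide_eq_true_eq] at h
  obtain ⟨h1, h2⟩ := h
  obtain ⟨s, t, hs, e1, e2, e3⟩ := go_spec 100 A B 1 1 _ _ hr h1
  rw [e1, e2, ← e3, one_mul, one_mul] at h2
  exact (mul_left_cancel₀ hs h2).symm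

theorem rs_SL : rs SL SD = -31^51 * II^2 := rs_of_check _ _ _ (by decide +kernel)
section field
variable {K : Type*} [Field K] [NumberField K]

theorem norm_aeval (pb : PowerBasis ℚ K) (g : ℚ[X]) (n : ℕ) (hg : g.natDegree ≤ n) :
    Algebra.norm ℚ (aeval pb.gen g) =
      resultant (minpoly ℚ pb.gen) g (minpoly ℚ pb.gen).natDegree n := by
  classical
  let E := AlgebraicClosure K
  have hmon := minpoly.monic pb.isIntegral_gen
  have hnodup : ((minpoly ℚ pb.gen).aroots E).Nodup :=
    nodup_roots (Separable.map (Algebra.IsSeparable.isSeparable ℚ pb.gen))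
  apply (algebraMap ℚ E).injective
  rw [Algebra.norm_eq_prod_embeddings ℚ E, ← resultant_map_map,
    ← natDegree_map (algebraMap ℚ E) (p := minpoly ℚ pb.gen),
    resultant_eq_prod_eval _ _ _ (natDegree_map_le.trans hg) (IsAlgClosed.splits _),
    (hmon.map _).leadingCoeff, one_pow, one_mul]
  rw [Fintype.prod_equiv (pb.liftEquiv' (S := K) (A := ℚ) (B := E))
    (fun σ => σ (aeval pb.gen g)) (fun x => eval (x : E) (g.map (algebraMap ℚ E)))]
  · rw [Finset.prod_mem_multiset _ _
      (fun x => eval (x : E) (g.map (algebraMap ℚ E))) (fun _ => rfl),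
      Finset.prod_eq_multiset_prod, Multiset.toFinset_val, Multiset.dedup_eq_self.mpr hnodup]
  · intro σ
    rw [PowerBasis.liftEquiv'_apply_coe, ← aeval_algHom_apply, eval_map_algebraMap]


theorem eq_zero_of_aeval (pb : PowerBasis ℚ K) (s : ℤ[X])
    (hm : minpoly ℚ pb.gen = s.map (Int.castRingHom ℚ)) (g : ℤ[X]) (hg : g.natDegree < s.natDegree)
    (h : aeval pb.gen g = 0) : g = 0 := by
  by_contra h0
  have h1 : aeval pb.gen (g.map (Int.castRingHom ℚ)) = 0 := by
    rw [← algebraMap_int_eq, aeval_map_algebraMap]; exact h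
  have hne : g.map (Int.castRingHom ℚ) ≠ 0 := by
    rwa [Ne, Polynomial.map_eq_zero_iff (RingHom.injective_int _)]
  have := natDegree_le_of_dvd (minpoly.dvd ℚ pb.gen h1) hne
  rw [hm, natDegree_map_eq_of_injective (RingHom.injective_int _),
    natDegree_map_eq_of_injective (RingHom.injective_int _)] at this
  omega

theorem aeval_s (pb : PowerBasis ℚ K) (s : ℤ[X])
    (hm : minpoly ℚ pb.gen = s.map (Int.castRingHom ℚ)) : aeval pb.gen s = 0 := by
  have := minpoly.aeval ℚ pb.gen
  rw [hm, ← algebraMap_int_eq, aeval_map_algebraMap] at this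
  exact this

theorem gen_int (pb : PowerBasis ℚ K) (s : ℤ[X])
    (hm : minpoly ℚ pb.gen = s.map (Int.castRingHom ℚ)) (hs : s.Monic) : IsIntegral ℤ pb.gen :=
  ⟨s, hs, aeval_s pb s hm⟩

theorem aeval_int (pb : PowerBasis ℚ K) (h : IsIntegral ℤ pb.gen) (g : ℤ[X]) : IsIntegral ℤ (aeval pb.gen g) :=
  adjoin_le_integralClosure h (aeval_mem_adjoin_singleton ℤ pb.gen)

theorem norm_sub (pb : PowerBasis ℚ K) (s : ℤ[X])
    (hm : minpoly ℚ pb.gen = s.map (Int.castRingHom ℚ)) (hd : s.natDegree = 32) (a : ℤ) :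
    Algebra.norm ℚ (pb.gen - (a : K)) = ((s.eval a : ℤ) : ℚ) := by
  have h := norm_aeval pb (X - C (a : ℚ)) 1 (natDegree_X_sub_C _).le
  have h2 : aeval pb.gen (X - C (a : ℚ)) = pb.gen - (a : K) := by simp
  rw [h2] at h
  rw [h, resultant_X_sub_C_right _ _ _ le_rfl, hm,
    natDegree_map_eq_of_injective (RingHom.injective_int _), hd]
  rw [show ((-1 : ℚ) ^ 32) = 1 by norm_num, one_mul]
  simp [eval_map, eval₂_at_intCast]

/-- the integral element with denominator `I` -/
theorem omega_int (pb : PowerBasis ℚ K) (h : IsIntegral ℤ pb.gen) (R : ℤ[X]) (c I A B : ℤ) (hI : I ≠ 0)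
    (hθ : aeval pb.gen ((X - C c) ^ 2 * R + C (I * B) * (X - C c) + C (I ^ 2 * A)) = 0) :
    IsIntegral ℤ (aeval pb.gen ((X - C c) * R + C (I * B)) / (I : K)) := by
  have hI' : (I : K) ≠ 0 := by exact_mod_cast hI
  set y : K := pb.gen - c with hy
  set r : K := aeval pb.gen R with hr
  have e1 : aeval pb.gen ((X - C c) * R + C (I * B)) = y * r + I * B := by simp [hy, hr]
  have e2 : y ^ 2 * r + I * B * y + I ^ 2 * A = 0 := by
    rw [← hθ]; simp [hy, hr]
  rw [e1]
  set w : K := (y * r + I * B) / I with hw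
  have hyw : y * w = - (I * A) := by
    rw [hw]; field_simp; linear_combination e2
  have hIw : I * w = y * r + I * B := by rw [hw]; field_simp
  have hq : w ^ 2 = B * w - A * r := by
    apply mul_left_cancel₀ hI'
    linear_combination w * hIw + r * hyw
  have hrI : IsIntegral ℤ r := aeval_int pb h R
  let O := integralClosure ℤ K
  have hO : IsIntegral O w := by
    refine ⟨X ^ 2 - C (B : O) * X + C ((A : O) * ⟨r, hrI⟩), ?_, ?_⟩
    · have : (X ^ 2 - C (B : O) * X + C ((A : O) * ⟨r, hrI⟩)) =
        X ^ 2 + (C (-(B : O)) * X + C ((A : O) * ⟨r, hrI⟩)) := by simp; ring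
      rw [this]
      exact monic_X_pow_add (degree_linear_le.trans_lt (by norm_num))
    · simp only [eval₂_add, eval₂_sub, eval₂_mul, eval₂_pow, eval₂_X, eval₂_C]
      have : algebraMap O K ⟨r, hrI⟩ = r := rfl
      rw [map_mul, this, map_intCast, map_intCast, hq]; ring
  exact isIntegral_trans _ hO
end field
theorem fld_dvd {F : Type*} [Field F] (a b : F) (d : F[X])
    (hd : d ∣ (X - C a) ^ 31 * (X - C b)) (hn : ¬ (X - C a) ^ 31 * (X - C b) ∣ d) :
    d ∣ (X - C a) ^ 31 ∨ d ∣ (X - C a) ^ 30 * (X - C b) := by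
  obtain ⟨e, he⟩ := hd
  have hp : (X - C a) ^ 31 * (X - C b) ≠ 0 :=
    mul_ne_zero (pow_ne_zero _ (X_sub_C_ne_zero a)) (X_sub_C_ne_zero b)
  have hu : ¬ IsUnit e := by
    intro hu
    rw [he] at hn
    exact hn (hu.mul_right_dvd.mpr dvd_rfl)
  have he0 : e ≠ 0 := by rintro rfl; exact hp (he.trans (mul_zero d))
  obtain ⟨q, hq, hqe⟩ := WfDvdMonoid.exists_irreducible_factor hu he0
  have hqp : q ∣ (X - C a) ^ 31 * (X - C b) := hqe.trans ⟨d, he.trans (mul_comm d e)⟩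
  rcases hq.prime.dvd_or_dvd hqp with h | h
  · have h1 := hq.prime.dvd_of_dvd_pow h
    have h2 := (hq.associated_of_dvd (irreducible_X_sub_C a) h1).symm.dvd.trans hqe
    obtain ⟨f, rfl⟩ := h2
    right
    refine ⟨f, mul_left_cancel₀ (X_sub_C_ne_zero a) ?_⟩
    linear_combination he
  · have h2 := (hq.associated_of_dvd (irreducible_X_sub_C b) h).symm.dvd.trans hqe
    obtain ⟨f, rfl⟩ := h2
    left
    refine ⟨f, mul_left_cancel₀ (X_sub_C_ne_zero b) ?_⟩
    linear_combination he

theorem lift_eq (f g : ℤ[X]) (h : f.map (Int.castRingHom (ZMod 31)) = g.map (Int.castRingHom (ZMod 31))) :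
    ∃ W : ℤ[X], f = g + C 31 * W := by
  have h1 : C (31 : ℤ) ∣ f - g := by
    rw [C_dvd_iff_dvd_coeff]
    intro i
    have := congrArg (fun p => p.coeff i) h
    simp only [coeff_map, eq_intCast] at this
    have := (ZMod.intCast_eq_intCast_iff_dvd_sub _ _ 31).mp this.symm
    simpa using this
  obtain ⟨W, hW⟩ := h1
  exact ⟨W, by rw [← hW]; ring⟩

section field
variable {K : Type*} [Field K] [NumberField K]

theorem max31 (pb : PowerBasis ℚ K) (s : ℤ[X])
    (hm : minpoly ℚ pb.gen = s.map (Int.castRingHom ℚ)) (hs : s.Monic) (hd : s.natDegree = 32)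
    (hmod : s.map (Int.castRingHom (ZMod 31)) = (X - C 8) ^ 31 * (X - C 3))
    (u v : ℤ) (h8 : s.eval 8 = 31 * u) (hu : ¬ (31 : ℤ) ∣ u)
    (h3 : s.eval 3 = 31 * v) (hv : ¬ (31 : ℤ) ∣ v)
    (r : ℤ[X]) (hr : r.natDegree < 32) (α : K) (hα : IsIntegral ℤ α)
    (h : 31 * α = aeval pb.gen r) : r.map (Int.castRingHom (ZMod 31)) = 0 := by
  have : Fact (Nat.Prime 31) := ⟨by norm_num⟩
  have hp31 : Prime (31 : ℤ) := Int.prime_iff_natAbs_prime.mpr (by norm_num)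
  by_contra h0
  have hgen := gen_int pb s hm hs
  set φ := Int.castRingHom (ZMod 31)
  have hsurj : Function.Surjective (Polynomial.map φ) :=
    Polynomial.map_surjective φ (ZMod.ringHom_surjective φ)
  set d := EuclideanDomain.gcd (r.map φ) (s.map φ) with hdd
  have hdr : d ∣ r.map φ := EuclideanDomain.gcd_dvd_left _ _
  have hds : d ∣ s.map φ := EuclideanDomain.gcd_dvd_right _ _
  have hns : ¬ s.map φ ∣ d := by
    intro hh
    have := natDegree_le_of_dvd (hh.trans hdr) h0
    rw [hs.natDegree_map, hd] at this
    have := this.trans natDegree_map_le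
    omega
  -- any multiple of d lifts
  have key : ∀ T : ℤ[X], d ∣ T.map φ → ∃ β : K, IsIntegral ℤ β ∧ aeval pb.gen T = 31 * β := by
    rintro T ⟨w, hw⟩
    rw [hdd, EuclideanDomain.gcd_eq_gcd_ab] at hw
    obtain ⟨U, hU⟩ := hsurj (EuclideanDomain.gcdA (r.map φ) (s.map φ) * w)
    obtain ⟨V, hV⟩ := hsurj (EuclideanDomain.gcdB (r.map φ) (s.map φ) * w)
    obtain ⟨W, hW⟩ := lift_eq T (r * U + s * V) (by
      rw [hw, Polynomial.map_add, Polynomial.map_mul, Polynomial.map_mul, hU, hV]; ring)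
    refine ⟨α * aeval pb.gen U + aeval pb.gen W,
      (hα.mul (aeval_int pb hgen U)).add (aeval_int pb hgen W), ?_⟩
    rw [hW]
    simp only [map_add, map_mul, aeval_s pb s hm, ← h, aeval_C]
    simp; ring
  have nrm : ∀ β : K, IsIntegral ℤ β → ∃ n : ℤ, Algebra.norm ℚ (31 * β) = 31 ^ 32 * (n : ℚ) := by
    intro β hβ
    obtain ⟨n, hn⟩ := IsIntegrallyClosed.isIntegral_iff.mp (Algebra.isIntegral_norm ℚ hβ)
    refine ⟨n, ?_⟩
    have : (31 : K) = algebraMap ℚ K 31 := by simp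
    rw [map_mul, ← hn, this, Algebra.norm_algebraMap, pb.finrank, ← pb.natDegree_minpoly, hm,
      hs.natDegree_map, hd]
    simp
  have n8 := norm_sub pb s hm hd 8
  have n3 := norm_sub pb s hm hd 3
  rw [h8] at n8
  rw [h3] at n3
  rw [hmod] at hds hns
  have m8 : φ 8 = 8 := by simp [φ]
  have m3 : φ 3 = 3 := by simp [φ]
  have ev : ∀ a : ℤ, aeval pb.gen (X - C a : ℤ[X]) = pb.gen - (a : K) := by intro a; simp
  rcases fld_dvd _ _ d hds hns with hh | hh
  · obtain ⟨β, hβ, e⟩ := key ((X - C 8) ^ 31) (by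
      simpa only [Polynomial.map_mul, Polynomial.map_pow, Polynomial.map_sub, map_X, map_C, m8, m3] using hh)
    obtain ⟨n, hn⟩ := nrm β hβ
    rw [← e, map_pow, map_pow, ev, n8] at hn
    have hn' : (31 * u) ^ 31 = 31 ^ 32 * n := by exact_mod_cast hn
    have : u ^ 31 = 31 * n := by
      apply mul_left_cancel₀ (show (31 : ℤ) ^ 31 ≠ 0 by positivity)
      rw [← mul_pow, hn']; ring
    exact hu (hp31.dvd_of_dvd_pow ⟨n, this⟩)
  · obtain ⟨β, hβ, e⟩ := key ((X - C 8) ^ 30 * (X - C 3)) (by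
      simpa only [Polynomial.map_mul, Polynomial.map_pow, Polynomial.map_sub, map_X, map_C, m8, m3] using hh)
    obtain ⟨n, hn⟩ := nrm β hβ
    rw [← e, map_mul, map_mul, map_pow, map_pow, ev, ev, n8, n3] at hn
    have hn' : (31 * u) ^ 30 * (31 * v) = 31 ^ 32 * n := by exact_mod_cast hn
    have : u ^ 30 * v = 31 * n := by
      apply mul_left_cancel₀ (show (31 : ℤ) ^ 31 ≠ 0 by positivity)
      linear_combination hn'
    rcases hp31.dvd_or_dvd ⟨n, this⟩ with h | h
    · exact hu (hp31.dvd_of_dvd_pow h)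
    · exact hv h
end field
section field
variable {K : Type*} [Field K] [NumberField K]

theorem taylor2 (s : ℤ[X]) (c : ℤ) :
    ∃ R : ℤ[X], s = (X - C c) ^ 2 * R + C (s.derivative.eval c) * (X - C c) + C (s.eval c) := by
  obtain ⟨q, hq⟩ : (X - C c) ∣ s - C (s.eval c) := by
    rw [dvd_iff_isRoot]; simp
  have hs : s = (X - C c) * q + C (s.eval c) := by rw [← hq]; ring
  have hd : s.derivative.eval c = q.eval c := by
    have := congrArg (fun p => p.derivative.eval c) hs
    simpa using this
  obtain ⟨R, hR⟩ : (X - C c) ∣ q - C (q.eval c) := by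
    rw [dvd_iff_isRoot]; simp
  refine ⟨R, ?_⟩
  rw [hd]
  linear_combination hs + (X - C c) * hR

theorem core (pb : PowerBasis ℚ K) (s : ℤ[X])
    (hm : minpoly ℚ pb.gen = s.map (Int.castRingHom ℚ)) (hs : s.Monic) (hd : s.natDegree = 32)
    (hmod : s.map (Int.castRingHom (ZMod 31)) = (X - C 8) ^ 31 * (X - C 3))
    (u v : ℤ) (h8 : s.eval 8 = 31 * u) (hu : ¬ (31 : ℤ) ∣ u)
    (h3 : s.eval 3 = 31 * v) (hv : ¬ (31 : ℤ) ∣ v)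
    (c I A B : ℤ) (hI : I ≠ 0) (hA : s.eval c = I ^ 2 * A) (hB : s.derivative.eval c = I * B)
    (hD : Algebra.discr ℚ pb.basis = ((-31 ^ 51 * I ^ 2 : ℤ) : ℚ)) :
    NumberField.discr K = -31 ^ 51 := by
  classical
  have : Fact (Nat.Prime 31) := ⟨by norm_num⟩
  have hp31 : Prime (31 : ℤ) := Int.prime_iff_natAbs_prime.mpr (by norm_num)
  have hgen := gen_int pb s hm hs
  have hdim : pb.dim = 32 := by
    rw [← pb.natDegree_minpoly, hm, hs.natDegree_map, hd]
  have hcard : Fintype.card (Module.Free.ChooseBasisIndex ℤ (NumberField.RingOfIntegers K))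
      = Fintype.card (Fin pb.dim) := by
    rw [← Module.finrank_eq_card_chooseBasisIndex, NumberField.RingOfIntegers.rank, pb.finrank,
      Fintype.card_fin]
  let b : Module.Basis (Fin pb.dim) ℤ (NumberField.RingOfIntegers K) :=
    (NumberField.RingOfIntegers.basis K).reindex (Fintype.equivOfCardEq hcard)
  let θ : NumberField.RingOfIntegers K := ⟨pb.gen, hgen⟩
  have hθ : (θ : K) = pb.gen := rfl
  let t : Fin pb.dim → NumberField.RingOfIntegers K := fun i => θ ^ (i : ℕ)
  let P : Matrix (Fin pb.dim) (Fin pb.dim) ℤ := b.toMatrix t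
  have hPt : ∀ x : Fin pb.dim → ℤ, ∑ i, x i • t i = ∑ j, (P.mulVec x) j • b j := by
    intro x
    have h1 : ∀ i, t i = ∑ j, P j i • b j := fun i => (b.sum_toMatrix_smul_self t i).symm
    simp only [Matrix.mulVec, dotProduct, Finset.sum_smul]
    rw [Finset.sum_comm]
    refine Finset.sum_congr rfl fun i _ => ?_
    conv_lhs => rw [h1 i]
    rw [Finset.smul_sum]
    refine Finset.sum_congr rfl fun j _ => ?_
    rw [smul_smul, mul_comm]
  -- discriminants
  have hdt : Algebra.discr ℤ t = P.det ^ 2 * NumberField.discr K := by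
    rw [← NumberField.discr_eq_discr K b, ← Algebra.discr_of_matrix_vecMul]
    congr 1
    funext i
    have h1 : t i = ∑ j, P j i • b j := (b.sum_toMatrix_smul_self t i).symm
    rw [h1]
    simp [Matrix.vecMul, dotProduct, mul_comm]
  have hdt2 : ((Algebra.discr ℤ t : ℤ) : ℚ) = Algebra.discr ℚ pb.basis := by
    rw [Algebra.discr_def, Algebra.discr_def, Int.cast_det]
    congr 1
    ext i j
    simp only [Matrix.map_apply, Algebra.traceMatrix_apply, Algebra.traceForm_apply,
      Algebra.coe_trace_int, PowerBasis.coe_basis]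
    rfl
  have hmain : P.det ^ 2 * NumberField.discr K = -31 ^ 51 * I ^ 2 := by
    rw [hD, hdt] at hdt2
    exact_mod_cast hdt2
  -- polynomial from a vector
  let poly : (Fin pb.dim → ℤ) → ℤ[X] := fun x => ∑ i, C (x i) * X ^ (i : ℕ)
  have hpc : ∀ x (i : Fin pb.dim), (poly x).coeff i = x i := by
    intro x i
    simp only [poly, finsetSum_coeff, coeff_C_mul, coeff_X_pow]
    rw [Finset.sum_eq_single i]
    · simp
    · intro j _ hj
      have : (i : ℕ) ≠ j := fun h => hj (Fin.ext h.symm)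
      simp [this]
    · simp
  have hpd : ∀ x, (poly x).natDegree < 32 := by
    intro x
    have : (poly x).natDegree ≤ 31 := by
      refine natDegree_sum_le_of_forall_le _ _ fun i _ => ?_
      refine (natDegree_C_mul_X_pow_le _ _).trans ?_
      have := i.2
      omega
    omega
  have hpe : ∀ x, aeval pb.gen (poly x) = ((∑ i, x i • t i : NumberField.RingOfIntegers K) : K) := by
    intro x
    simp [poly, t, hθ]
  -- 31 does not divide the index
  have hc31 : ¬ (31 : ℤ) ∣ P.det := by
    intro hdv
    have h0 : (P.map (Int.castRingHom (ZMod 31))).det = 0 := by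
      have := (Int.castRingHom (ZMod 31)).map_det P
      rw [RingHom.mapMatrix_apply] at this
      rw [← this, eq_intCast]
      exact (ZMod.intCast_zmod_eq_zero_iff_dvd _ 31).mpr (by exact_mod_cast hdv)
    obtain ⟨w, hw0, hw⟩ := Matrix.exists_mulVec_eq_zero_iff.mpr h0
    choose x hx using fun i => ZMod.intCast_surjective (w i)
    have h1 : ∀ j, (31 : ℤ) ∣ P.mulVec x j := by
      intro j
      have := congrFun hw j
      apply (ZMod.intCast_zmod_eq_zero_iff_dvd _ 31).mp
      rw [← Pi.zero_apply (M := fun _ => ZMod 31) j, ← this]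
      simp [Matrix.mulVec, dotProduct, hx]
    choose y hy using h1
    have h2 : 31 * ((∑ j, y j • b j : NumberField.RingOfIntegers K) : K) = aeval pb.gen (poly x) := by
      rw [hpe, hPt]
      simp only [hy]
      simp [Finset.mul_sum, mul_assoc, map_ofNat]
    have h3' := max31 pb s hm hs hd hmod u v h8 hu h3 hv (poly x) (hpd x) _
      (NumberField.RingOfIntegers.isIntegral_coe _) h2
    apply hw0
    funext i
    have := congrArg (fun p => p.coeff (i : ℕ)) h3'
    simp only [coeff_map, hpc, eq_intCast, hx, coeff_zero] at this
    simpa using this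
  -- I divides the index
  obtain ⟨R, hR⟩ := taylor2 s c
  rw [hA, hB] at hR
  have hω := omega_int pb hgen R c I A B hI (by rw [← hR]; exact aeval_s pb s hm)
  have hIm : I ∣ P.det := by
    let ω : NumberField.RingOfIntegers K := ⟨_, hω⟩
    let x := P.adjugate.mulVec (b.repr ω)
    have h1 : ∑ i, x i • t i = P.det • ω := by
      rw [hPt]
      have : P.mulVec x = P.det • (b.repr ω : Fin pb.dim → ℤ) := by
        simp only [x]
        rw [Matrix.mulVec_mulVec, Matrix.mul_adjugate, Matrix.smul_mulVec, Matrix.one_mulVec]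
      rw [this]
      conv_rhs => rw [← b.sum_repr ω, Finset.smul_sum]
      refine Finset.sum_congr rfl fun j _ => ?_
      rw [Pi.smul_apply, smul_eq_mul, mul_smul]
    have h2 : aeval pb.gen (poly x) = (P.det : K) * (aeval pb.gen ((X - C c) * R + C (I * B)) / (I : K)) := by
      have hz : ∀ (n : ℤ) (z : NumberField.RingOfIntegers K),
          ((n • z : NumberField.RingOfIntegers K) : K) = (n : K) * (z : K) := by
        intro n z; simp
      rw [hpe, h1, hz]
      rfl
    have hI' : (I : K) ≠ 0 := by exact_mod_cast hI
    set H : ℤ[X] := (X - C c) * R + C (I * B) with hH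
    have hsH : s = (X - C c) * H + C (I ^ 2 * A) := by
      conv_lhs => rw [hR]
      rw [hH]; ring
    have hHs : H * (X - C c) = s - C (I ^ 2 * A) := by rw [hsH]; ring
    have hdg : (C (I ^ 2 * A) : ℤ[X]).degree < s.degree :=
      degree_C_le.trans_lt (natDegree_pos_iff_degree_pos.mp (by omega))
    have hmon : (H * (X - C c)).Monic := by rw [hHs]; exact hs.sub_of_left hdg
    have hHm : H.Monic := (monic_X_sub_C c).of_mul_monic_right hmon
    have hHd : H.natDegree = 31 := by
      have h4 := hHm.natDegree_mul (monic_X_sub_C c)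
      rw [hHs, natDegree_sub_C, hd, natDegree_X_sub_C] at h4
      omega
    have h3 : C P.det * H - C I * poly x = 0 := by
      apply eq_zero_of_aeval pb s hm
      · rw [hd]
        refine lt_of_le_of_lt (natDegree_sub_le_of_le (m := 31) (n := 31) ?_ ?_) (by norm_num)
        · exact (natDegree_C_mul_le _ _).trans hHd.le
        · refine (natDegree_C_mul_le _ _).trans ?_
          have := hpd x
          omega
      · rw [map_sub, map_mul, map_mul, h2]
        have hC : ∀ a : ℤ, aeval pb.gen (C a : ℤ[X]) = (a : K) := by intro a; simp
        rw [hC, hC]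
        field_simp
        ring
    have h4 := congrArg (fun p => p.coeff 31) h3
    simp only [coeff_sub, coeff_C_mul, coeff_zero] at h4
    have h5 : H.coeff 31 = 1 := by rw [← hHd]; exact hHm.coeff_natDegree
    rw [h5, mul_one] at h4
    exact ⟨(poly x).coeff 31, by linarith⟩
  obtain ⟨k, hk⟩ := hIm
  have hkd : k ^ 2 * NumberField.discr K = -31 ^ 51 := by
    apply mul_left_cancel₀ (pow_ne_zero 2 hI)
    rw [hk] at hmain
    linear_combination hmain
  have hk31 : ¬ (31 : ℤ) ∣ k := fun h => hc31 (hk ▸ h.mul_left I)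
  have hcop : IsCoprime (k ^ 2) ((31 : ℤ) ^ 51) :=
    IsCoprime.pow ((hp31.coprime_iff_not_dvd.mpr hk31).symm)
  have hku : IsUnit (k ^ 2) := by
    refine hcop.isUnit_of_dvd' dvd_rfl ?_
    exact (dvd_neg.mp ⟨_, hkd.symm⟩)
  have hk1 : k ^ 2 = 1 := by
    rcases Int.isUnit_iff.mp hku with h | h
    · exact h
    · nlinarith [sq_nonneg k]
  rw [hk1, one_mul] at hkd
  exact hkd
end field
def ev (c : ℤ) : List ℤ → ℤ
  | [] => 0
  | a :: l => a * c ^ l.length + ev c l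

theorem tp_eval (c : ℤ) : ∀ l : List ℤ, (tp l).eval c = ev c l
  | [] => by simp [tp, ev]
  | a :: l => by simp [tp, ev, tp_eval c l]

theorem tp_SL_map : (tp SL).map (Int.castRingHom ℚ) = S := by
  simp only [SL, S, tp, List.length]
  simp
  ring

theorem tp_SD : derivative (tp SL) = tp SD := by
  simp only [SL, SD, tp, List.length]
  simp
  ring

theorem tp_emod : ∀ l : List ℤ, (tp (l.map (· % 31))).map (Int.castRingHom (ZMod 31)) =
    (tp l).map (Int.castRingHom (ZMod 31))
  | [] => rfl
  | a :: l => by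
    have h : Int.castRingHom (ZMod 31) (a % 31) = Int.castRingHom (ZMod 31) a := by
      rw [eq_intCast, eq_intCast]
      exact ZMod.intCast_mod a 31
    simp only [List.map_cons, tp, Polynomial.map_add, tp_emod l, Polynomial.map_mul, map_C,
      h, List.length_map]

def SM : List ℤ := [1, -3, 0, 0, 0, 0, 0, 0, 0, 0, 0, 0, 0, 0, 0, 0, 0, 0, 0, 0, 0, 0, 0, 0, 0, 0,
  0, 0, 0, 0, 0, -8, 24]

theorem tp_SM : tp SM = (X ^ 31 - C 8) * (X - C 3) := by
  simp only [SM, tp, List.length]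
  simp
  ring

theorem tp_mod : (tp SL).map (Int.castRingHom (ZMod 31)) = (X - C 8) ^ 31 * (X - C 3) := by
  have : Fact (Nat.Prime 31) := ⟨by norm_num⟩
  have h : SL.map (· % 31) = SM.map (· % 31) := by decide +kernel
  rw [← tp_emod, h, tp_emod, tp_SM, sub_pow_char, ← C_pow, ZMod.pow_card]
  simp only [Polynomial.map_mul, Polynomial.map_sub, Polynomial.map_pow, map_X, map_C]
  norm_num

theorem SL_deg : (tp SL).natDegree = 32 ∧ (tp SL).Monic := by
  have h1 : (tp SL).natDegree ≤ 32 := tp_nat 1 _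
  have h2 : (tp SL).coeff 32 = 1 := tp_coeff 1 _
  have h3 : (tp SL).natDegree = 32 := natDegree_eq_of_le_of_coeff_ne_zero h1 (by rw [h2]; decide)
  refine ⟨h3, ?_⟩
  rw [Monic, leadingCoeff, h3, h2]

theorem evI : ev cc SL = II ^ 2 * (ev cc SL / II ^ 2) := by decide +kernel
theorem evI' : ev cc SD = II * (ev cc SD / II) := by decide +kernel
theorem ev8 : ev 8 SL = 31 * (ev 8 SL / 31) := by decide +kernel
theorem ev3 : ev 3 SL = 31 * (ev 3 SL / 31) := by decide +kernel
theorem ev8' : ¬ (31 : ℤ) ∣ ev 8 SL / 31 := by decide +kernel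
theorem ev3' : ¬ (31 : ℤ) ∣ ev 3 SL / 31 := by decide +kernel

theorem fin {K : Type*} [Field K] [NumberField K] (pb : PowerBasis ℚ K)
    (hm : minpoly ℚ pb.gen = S) : NumberField.discr K = -31 ^ 51 := by
  have hm' : minpoly ℚ pb.gen = (tp SL).map (Int.castRingHom ℚ) := by rw [hm, tp_SL_map]
  refine core pb (tp SL) hm' SL_deg.2 SL_deg.1 tp_mod (ev 8 SL / 31) (ev 3 SL / 31)
    (by rw [tp_eval]; exact ev8) ev8' (by rw [tp_eval]; exact ev3) ev3' cc II
    (ev cc SL / II ^ 2) (ev cc SD / II) (by decide +kernel)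
    (by rw [tp_eval]; exact evI) (by rw [tp_SD, tp_eval]; exact evI') ?_
  have hdim : pb.dim = 32 := by
    rw [← pb.natDegree_minpoly, hm', SL_deg.2.natDegree_map, SL_deg.1]
  have hfr : Module.finrank ℚ K = 32 := by rw [pb.finrank, hdim]
  have hdeg : (tp SD).natDegree ≤ 31 := tp_nat 32 _
  rw [Algebra.discr_powerBasis_eq_norm, hfr, hm', derivative_map, tp_SD,
    norm_aeval pb _ 31 (natDegree_map_le.trans hdeg), hm', SL_deg.2.natDegree_map, SL_deg.1,
    resultant_map_map, ← rs_SL]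
  have : resultant (tp SL) (tp SD) 32 31 = rs SL SD := rfl
  rw [this, show (-1 : ℚ) ^ (32 * (32 - 1) / 2) = 1 by norm_num, one_mul]
  rfl
end DS

theorem discr_S (hS : Irreducible S) :
    haveI : Fact (Irreducible S) := ⟨hS⟩
    haveI : CharZero (AdjoinRoot S) :=
      charZero_of_injective_algebraMap (algebraMap ℚ (AdjoinRoot S)).injective
    haveI : FiniteDimensional ℚ (AdjoinRoot S) :=
      (AdjoinRoot.powerBasis hS.ne_zero).finite
    haveI : NumberField (AdjoinRoot S) := ⟨⟩
    NumberField.discr (AdjoinRoot S) = -31 ^ 51 := by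
  letI : Fact (Irreducible S) := ⟨hS⟩
  letI : CharZero (AdjoinRoot S) :=
    charZero_of_injective_algebraMap (algebraMap ℚ (AdjoinRoot S)).injective
  letI : FiniteDimensional ℚ (AdjoinRoot S) :=
    (AdjoinRoot.powerBasis hS.ne_zero).finite
  letI : NumberField (AdjoinRoot S) := ⟨⟩
  have hmonic : S.Monic := by rw [← DS.tp_SL_map]; exact DS.SL_deg.2.map _
  refine DS.fin (AdjoinRoot.powerBasis hS.ne_zero) ?_
  have h := AdjoinRoot.minpoly_root hS.ne_zero
  rw [hmonic.leadingCoeff, inv_one, C_1, mul_one] at h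
  rw [AdjoinRoot.powerBasis_gen]
  first
    | exact h
    | (convert h
       · rfl
       · rfl
       · first
           | rfl
           | exact Subsingleton.elim _ _)
end

section
/- Let P = x^32 - 4x^31 - 155x^28 + 713x^27 - 2480x^26 + 9300x^25 - 5921x^24 + 24707x^23 + 127410x^22 - 646195x^21 + 747906x^20 - 7527575x^19 + 4369791x^18 - 28954961x^17 - 40645681x^16 + 66421685x^15 - 448568729x^14 + 751001257x^13 - 1820871490x^12 + 2531110165x^11 - 4120267319x^10 + 4554764528x^9 - 5462615927x^8 + 4607500922x^7 - 4062352344x^6 + 2380573824x^5 - 1492309000x^4 + 521018178x^3 - 201167463x^2 + 20505628x - 1261963 ∈ ℚ[x], which is irreducible, and let K = ℚ[x]/(P) be the number field it defines. Then K is not totally real; equivalently, P has at least one non-real complex root. -/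
open Polynomial

noncomputable def P : Polynomial ℚ :=
  X^32 - 4*X^31 - 155*X^28 + 713*X^27 - 2480*X^26 + 9300*X^25 - 5921*X^24 + 24707*X^23 + 127410*X^22 - 646195*X^21 + 747906*X^20 - 7527575*X^19 + 4369791*X^18 - 28954961*X^17 - 40645681*X^16 + 66421685*X^15 - 448568729*X^14 + 751001257*X^13 - 1820871490*X^12 + 2531110165*X^11 - 4120267319*X^10 + 4554764528*X^9 - 5462615927*X^8 + 4607500922*X^7 - 4062352344*X^6 + 2380573824*X^5 - 1492309000*X^4 + 521018178*X^3 - 201167463*X^2 + 20505628*X - 1261963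

theorem aux_laguerre (t : Multiset ℝ) :
    0 ≤ ((t.map (fun r => X - C r)).prod.derivative.eval 0) ^ 2 -
      ((t.map (fun r => X - C r)).prod.eval 0) *
      ((t.map (fun r => X - C r)).prod.derivative.derivative.eval 0) := by
  induction t using Multiset.induction_on with
  | empty => simp
  | cons r t ih =>
    rw [Multiset.map_cons, Multiset.prod_cons]
    generalize (t.map (fun r => X - C r)).prod = f at ih ⊢
    simp only [derivative_mul, derivative_sub, derivative_X, derivative_C, derivative_add,
      eval_add, eval_mul, eval_sub, eval_X, eval_C, sub_zero, eval_one, derivative_one, eval_zero]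
    nlinarith [mul_nonneg (sq_nonneg r) ih, sq_nonneg (f.eval 0)]

theorem aux_root : ∃ z : ℂ, Polynomial.aeval z P = 0 ∧ z.im ≠ 0 := by
  by_contra! h
  have hs : (P.map (algebraMap ℚ ℂ)).Splits := IsAlgClosed.splits _
  have hr : ∀ z ∈ (P.map (algebraMap ℚ ℂ)).roots, ∃ x : ℝ, (x : ℂ) = z := by
    intro z hz
    have h1 := (mem_roots'.1 hz).2
    rw [IsRoot.def, eval_map_algebraMap] at h1
    exact ⟨z.re, Complex.ext (by simp) (by simp [h z h1])⟩
  have he := hs.eq_prod_roots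
  obtain ⟨t, ht⟩ : ∃ t : Multiset ℝ, t.map (fun x : ℝ => (x : ℂ)) =
      (P.map (algebraMap ℚ ℂ)).roots := by
    refine ⟨(P.map (algebraMap ℚ ℂ)).roots.map Complex.re, ?_⟩
    rw [Multiset.map_map]
    conv_rhs => rw [← Multiset.map_id (P.map (algebraMap ℚ ℂ)).roots]
    refine Multiset.map_congr rfl ?_
    intro z hz
    obtain ⟨x, rfl⟩ := hr z hz
    simp
  have hR : P.map (algebraMap ℚ ℝ) = C (P.leadingCoeff : ℝ) * (t.map (fun r => X - C r)).prod := by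
    apply Polynomial.map_injective (algebraMap ℝ ℂ) (algebraMap ℝ ℂ).injective
    rw [Polynomial.map_map, ← IsScalarTower.algebraMap_eq, he, ← ht]
    simp [Polynomial.map_multiset_prod, Multiset.map_map]
  have hl := aux_laguerre t
  generalize (t.map (fun r => X - C r)).prod = f at hR hl
  generalize (P.leadingCoeff : ℝ) = a at hR
  have e0 : (P.map (algebraMap ℚ ℝ)).eval 0 = -1261963 := by simp [P]
  have e1 : (P.map (algebraMap ℚ ℝ)).derivative.eval 0 = 20505628 := by
    simp [P]
  have e2 : (P.map (algebraMap ℚ ℝ)).derivative.derivative.eval 0 = -402334926 := by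
    simp [P]; norm_num
  rw [hR] at e0 e1 e2
  simp only [derivative_mul, derivative_C, zero_mul, zero_add, eval_mul, eval_C] at e0 e1 e2
  have := mul_nonneg (sq_nonneg a) hl
  have h3 : a ^ 2 * (f.derivative.eval 0 ^ 2 - f.eval 0 * f.derivative.derivative.eval 0) =
    (a * f.derivative.eval 0) ^ 2 - (a * f.eval 0) * (a * f.derivative.derivative.eval 0) := by ring
  rw [h3, e0, e1, e2] at this
  norm_num at this

theorem not_totallyReal_P (hP : Irreducible P) :
    haveI : Fact (Irreducible P) := ⟨hP⟩
    (¬ ∀ φ : AdjoinRoot P →+* ℂ, Set.range φ ⊆ Set.range ((↑) : ℝ → ℂ)) ∧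
      ∃ z : ℂ, Polynomial.aeval z P = 0 ∧ z.im ≠ 0 := by
  refine ⟨fun h => ?_, aux_root⟩
  obtain ⟨z, hz, him⟩ := aux_root
  have hz' : eval₂ (algebraMap ℚ ℂ) z P = 0 := by rw [← aeval_def]; exact hz
  obtain ⟨x, hx⟩ := h (AdjoinRoot.lift (algebraMap ℚ ℂ) z hz') ⟨AdjoinRoot.root P, rfl⟩
  have hx := hx.trans (AdjoinRoot.lift_root hz')
  apply him
  rw [← hx]
  simp
end
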